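/- Let u be a weak solution of −div(A∇u) = u in Ω with u ≢ 0, and suppose that for some δ ∈ (0,1) one has liminf_{R→∞} R^{−(1−δ)} ∫_{R<|x|<2R} u² dx = 0. Then there exist C₂ > 0 and R₂ > 1 such that G(ρ)/ρ^{n−1−δ} ≥ C₂ for all ρ ≥ R₂. -/

import Mathlib

open MeasureTheory Metric Filter

noncomputable section

abbrev En (n : ℕ) := EuclideanSpace ℝ (Fin n)

/-- The exterior domain `Ω = {x ∈ ℝⁿ : |x| > 1}`. -/
def OmegaExt (n : ℕ) : Set (En n) := {x | 1 < ‖x‖}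

/-- The quadratic/bilinear form `⟨M ξ, η⟩`. -/
def quadForm {n : ℕ} (M : Matrix (Fin n) (Fin n) ℝ) (ξ η : En n) : ℝ :=
  ∑ i, M.mulVec (fun j => ξ j) i * η i

/-- The conformal factor `μ(x) = ⟨A(x)∇r, ∇r⟩ = ⟨A(x)x, x⟩ / |x|²`. -/
def muA {n : ℕ} (A : En n → Matrix (Fin n) (Fin n) ℝ) (x : En n) : ℝ :=
  quadForm (A x) x x / ‖x‖ ^ 2

/-- The vector field `Z(x) = r(x) A(x)∇r(x) / μ(x) = A(x)x / μ(x)`. -/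
def Zvec {n : ℕ} (A : En n → Matrix (Fin n) (Fin n) ℝ) (x : En n) : En n :=
  (muA A x)⁻¹ • (WithLp.toLp 2 ((A x).mulVec (fun j => x j)) : En n)

/-- The derivative of `f` along `Z`: `Zf = ⟨Z, ∇f⟩`. -/
def Zd {n : ℕ} (A : En n → Matrix (Fin n) (Fin n) ℝ) (f : En n → ℝ) (x : En n) : ℝ :=
  ∑ i, Zvec A x i * gradient f x i

/-- Surface integral over the sphere `{|x| = ρ}` w.r.t. the `(n-1)`-dimensional
Hausdorff measure. -/
def sphInt (n : ℕ) (ρ : ℝ) (f : En n → ℝ) : ℝ :=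
  ∫ x in sphere (0 : En n) ρ, f x ∂(μH[(n : ℝ) - 1])

/-- Structural hypotheses on `A`: symmetry, `C¹` entries on `Ω`, uniform ellipticity
`λ|ξ|² ≤ ⟨A(x)ξ,ξ⟩ ≤ λ⁻¹|ξ|²`, and the decay `|x||∇B(x)| + |B(x)| ≤ C|x|^{-α}`
where `B = A - Iₙ` (entrywise). -/
def EllipticDecay {n : ℕ} (A : En n → Matrix (Fin n) (Fin n) ℝ) (lam α C : ℝ) : Prop :=
  (∀ x ∈ OmegaExt n, (A x).IsSymm) ∧
  (∀ i j, ContDiffOn ℝ 1 (fun x => A x i j) (OmegaExt n)) ∧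
  (∀ x ∈ OmegaExt n, ∀ ξ : En n,
      lam * ‖ξ‖ ^ 2 ≤ quadForm (A x) ξ ξ ∧ quadForm (A x) ξ ξ ≤ lam⁻¹ * ‖ξ‖ ^ 2) ∧
  (∀ x ∈ OmegaExt n, ∀ i j,
      ‖x‖ * ‖gradient (fun y => (A y - 1) i j) x‖ + |(A x - 1) i j| ≤ C * ‖x‖ ^ (-α))

/-- `u ∈ C¹(Ω)` is a weak solution of `-div(A∇u) = u` in `Ω`, i.e.
`∫_Ω ⟨A∇u, ∇φ⟩ = ∫_Ω u φ` for every test function `φ ∈ C_c^∞(Ω)`. -/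
def WeakSol {n : ℕ} (A : En n → Matrix (Fin n) (Fin n) ℝ) (u : En n → ℝ) : Prop :=
  ContDiffOn ℝ 1 u (OmegaExt n) ∧
  ∀ φ : En n → ℝ, ContDiff ℝ (⊤ : ℕ∞) φ → HasCompactSupport φ → tsupport φ ⊆ OmegaExt n →
    (∫ x in OmegaExt n, ∑ i, (A x).mulVec (fun j => gradient u x j) i * gradient φ x i) =
    ∫ x in OmegaExt n, u x * φ x

/-- The functional `G(ρ)` associated with a solution `u`, where `w = r^{(n-1)/2} u`. -/
def Gfun {n : ℕ} (A : En n → Matrix (Fin n) (Fin n) ℝ) (u : En n → ℝ) (ρ : ℝ) : ℝ :=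
  let w : En n → ℝ := fun x => ‖x‖ ^ (((n : ℝ) - 1) / 2) * u x
  2 * sphInt n ρ (fun x => (Zd A w x / ‖x‖) ^ 2 * muA A x)
    - sphInt n ρ (fun x => quadForm (A x) (gradient w x) (gradient w x))
    + sphInt n ρ (fun x => (w x) ^ 2)
    - ((n : ℝ) - 1) * ((n : ℝ) - 3) / 4 * sphInt n ρ (fun x => (w x) ^ 2 / ‖x‖ ^ 2 * muA A x)

/-!
Let `w = r ^ ((n - 1) / 2) u`. The spherical means of `w² μ` (`H`), of the flux `w ⟨A∇r, ∇w⟩` (`D`)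
and of the density of `G` satisfy, up to relative errors `O(r ^ (-α))`, an ordinary differential
system in which `H' ≈ 2 D`, `D' ≈ 2 P - G` and `G' ≈ 2 (K - P) / r`, where `P ≤ K` are the means of
the radial and of the full energy; the last relation is a Rellich identity with the field `Z`.
If `G` is positive somewhere far out, then `ρ ^ δ G` is nondecreasing from there on, which is the
claim. Otherwise `G ≤ 0` near infinity, and a frequency argument on `D / H` forces `w` to vanish
near infinity; an energy estimate then propagates this inwards to all of `Ω`, contradicting `u ≢ 0`.
Since `u` is only `C¹`, the identities are first proved for weak divergences and reach the means
through test functions of the form `φ(r)`.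
-/

section Comparison

open Set

variable {f g : ℝ → ℝ} {a b c q L R x : ℝ}

theorem le_of_deriv_lt_of_eq (hf : ∀ x ∈ Icc a b, DifferentiableAt ℝ f x)
    (hg : ∀ x ∈ Icc a b, DifferentiableAt ℝ g x) (ha : f a ≤ g a)
    (h : ∀ x ∈ Ico a b, f x = g x → deriv f x < deriv g x) (hx : x ∈ Icc a b) : f x ≤ g x :=
  image_le_of_deriv_right_lt_deriv_boundary'
    (fun y hy => (hf y hy).continuousAt.continuousWithinAt)
    (fun y hy => (hf y (Ico_subset_Icc_self hy)).hasDerivAt.hasDerivWithinAt) ha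
    (fun y hy => (hg y hy).continuousAt.continuousWithinAt)
    (fun y hy => (hg y (Ico_subset_Icc_self hy)).hasDerivAt.hasDerivWithinAt) h hx

theorem le_of_deriv_nonneg_Ioo (hab : a ≤ b) (hf : ∀ x ∈ Icc a b, DifferentiableAt ℝ f x)
    (h : ∀ x ∈ Ioo a b, 0 ≤ deriv f x) : f a ≤ f b := by
  refine monotoneOn_of_deriv_nonneg (convex_Icc a b)
    (fun x hx => (hf x hx).continuousAt.continuousWithinAt) ?_ ?_
    (left_mem_Icc.2 hab) (right_mem_Icc.2 hab) hab
  · exact fun x hx => (hf x (interior_subset hx)).differentiableWithinAt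
  · simpa only [interior_Icc] using h

theorem mul_exp_le_of_le_deriv (hab : a ≤ b) (hf : ∀ x ∈ Icc a b, DifferentiableAt ℝ f x)
    (h : ∀ x ∈ Ioo a b, -L * f x ≤ deriv f x) : f a * Real.exp (-L * (b - a)) ≤ f b := by
  have hd : ∀ x ∈ Icc a b, HasDerivAt (fun x => f x * Real.exp (L * x))
      ((deriv f x + L * f x) * Real.exp (L * x)) x := fun x hx => by
    refine ((hf x hx).hasDerivAt.mul ((hasDerivAt_id x).const_mul L).exp).congr_deriv ?_
    simp only [id]
    ring
  have key : f a * Real.exp (L * a) ≤ f b * Real.exp (L * b) :=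
    le_of_deriv_nonneg_Ioo hab (fun x hx => (hd x hx).differentiableAt) fun x hx => by
      rw [(hd x (Ioo_subset_Icc_self hx)).deriv]
      exact mul_nonneg (by linarith [h x hx]) (Real.exp_pos _).le
  calc f a * Real.exp (-L * (b - a)) = f a * Real.exp (L * a) * Real.exp (-(L * b)) := by
        rw [mul_assoc, ← Real.exp_add]; ring_nf
    _ ≤ f b * Real.exp (L * b) * Real.exp (-(L * b)) := by gcongr
    _ = f b := by rw [mul_assoc, ← Real.exp_add, add_neg_cancel, Real.exp_zero, mul_one]

theorem pos_of_le_deriv_of_pos (hf : ∀ x ∈ Icc a b, DifferentiableAt ℝ f x) (ha : 0 < f a)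
    (h : ∀ x ∈ Icc a b, (∀ z ∈ Icc a x, 0 < f z) → -L * f x ≤ deriv f x) :
    ∀ x ∈ Icc a b, 0 < f x := by
  by_contra! hcon
  obtain ⟨y, hy, hfy⟩ := hcon
  let S := {z ∈ Icc a b | f z ≤ 0}
  have hbdd : BddBelow S := ⟨a, fun z hz => hz.1.1⟩
  have hclosed : IsClosed S :=
    ContinuousOn.preimage_isClosed_of_isClosed
      (fun x hx => (hf x hx).continuousAt.continuousWithinAt) isClosed_Icc isClosed_Iic
  obtain ⟨hmem, hle⟩ : sInf S ∈ S := hclosed.csInf_mem ⟨y, hy, hfy⟩ hbdd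
  have hbefore : ∀ z ∈ Ico a (sInf S), 0 < f z := fun z hz => by
    by_contra! hz0
    exact hz.2.not_ge (csInf_le hbdd ⟨⟨hz.1, hz.2.le.trans hmem.2⟩, hz0⟩)
  have hgrow : f a * Real.exp (-L * (sInf S - a)) ≤ f (sInf S) :=
    mul_exp_le_of_le_deriv hmem.1 (fun x hx => hf x ⟨hx.1, hx.2.trans hmem.2⟩) fun x hx =>
      h x ⟨hx.1.le, hx.2.le.trans hmem.2⟩ fun z hz => hbefore z ⟨hz.1, hz.2.trans_lt hx.2⟩
  have : 0 < f a * Real.exp (-L * (sInf S - a)) := by positivity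
  linarith

theorem tendsto_atTop_of_div_le_deriv (hc : 0 < c) (hR : 0 < R)
    (hf : ∀ x ≥ R, DifferentiableAt ℝ f x) (h : ∀ x ≥ R, c / x ≤ deriv f x) :
    Tendsto f atTop atTop := by
  have hlog : Tendsto (fun x => f R - c * Real.log R + c * Real.log x) atTop atTop :=
    tendsto_atTop_add_const_left _ _ (Real.tendsto_log_atTop.const_mul_atTop hc)
  refine tendsto_atTop_mono' _ ?_ hlog
  filter_upwards [eventually_ge_atTop R] with x hx
  have hd : ∀ y ≥ R, HasDerivAt (fun y => f y - c * Real.log y) (deriv f y - c * y⁻¹) y :=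
    fun y hy => (hf y hy).hasDerivAt.sub
      ((Real.hasDerivAt_log (hR.trans_le hy).ne').const_mul c)
  have key : f R - c * Real.log R ≤ f x - c * Real.log x :=
    le_of_deriv_nonneg_Ioo hx (fun y hy => (hd y hy.1).differentiableAt) fun y hy => by
      rw [(hd y hy.1.le).deriv, ← div_eq_mul_inv]
      exact sub_nonneg.2 (h y hy.1.le)
  linarith

theorem eventually_le_of_deriv_le_neg_div (hc : 0 < c) (hR : 0 < R)
    (hf : ∀ x ≥ R, DifferentiableAt ℝ f x) (h : ∀ x ≥ R, q ≤ f x → deriv f x ≤ -(c / x)) :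
    ∀ᶠ x in atTop, f x ≤ q := by
  obtain ⟨x₀, hx₀, hfx₀⟩ : ∃ x₀ ≥ R, f x₀ ≤ q := by
    by_contra! hcon
    have hlim : Tendsto (fun x => -f x) atTop atTop :=
      tendsto_atTop_of_div_le_deriv hc hR (fun x hx => (hf x hx).neg) fun x hx => by
        rw [deriv.fun_neg]
        linarith [h x hx (hcon x hx).le]
    obtain ⟨x, hx, hqx⟩ := ((eventually_ge_atTop R).and (hlim.eventually_gt_atTop (-q))).exists
    linarith [hcon x hx]
  filter_upwards [eventually_ge_atTop x₀] with x hx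
  refine le_of_deriv_lt_of_eq (g := fun _ => q) (fun y hy => hf y (hx₀.trans hy.1))
    (fun _ _ => differentiableAt_const q) hfx₀ (fun y hy hfy => ?_) (right_mem_Icc.2 hx)
  have hy : R ≤ y := hx₀.trans hy.1
  have : 0 < c / y := div_pos hc (hR.trans_le hy)
  rw [deriv_const]
  linarith [h y hy hfy.ge]

/-- At a contact point with the barrier `(|f a| + 1) exp ((2m + 1)(a^(-α) - x^(-α)) / α) ≥ 1`
one has `m (1 + f) < (2m + 1) f`. -/
theorem le_mul_exp_of_deriv_le_rpow {m α : ℝ} (ha : 0 < a) (hm : 0 ≤ m) (hα : 0 < α)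
    (hf : ∀ x ∈ Icc a b, DifferentiableAt ℝ f x)
    (h : ∀ x ∈ Icc a b, deriv f x ≤ m * x ^ (-α - 1) * (1 + |f x|)) (hx : x ∈ Icc a b) :
    f x ≤ (|f a| + 1) * Real.exp ((2 * m + 1) / α * a ^ (-α)) := by
  let B : ℝ → ℝ := fun x => (|f a| + 1) * Real.exp ((2 * m + 1) / α * (a ^ (-α) - x ^ (-α)))
  have hB : ∀ x ∈ Icc a b, HasDerivAt B ((2 * m + 1) * x ^ (-α - 1) * B x) x := fun x hx => by
    have hrpow : HasDerivAt (fun x : ℝ => x ^ (-α)) (-α * x ^ (-α - 1)) x :=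
      Real.hasDerivAt_rpow_const (Or.inl (ha.trans_le hx.1).ne')
    refine ((((hrpow.const_sub (a ^ (-α))).const_mul ((2 * m + 1) / α)).exp).const_mul
      (|f a| + 1)).congr_deriv ?_
    simp only [B]
    field_simp
  have hB_ge : ∀ x ∈ Icc a b, 1 ≤ B x := fun x hx => by
    have hexp : 1 ≤ Real.exp ((2 * m + 1) / α * (a ^ (-α) - x ^ (-α))) :=
      Real.one_le_exp (mul_nonneg (by positivity)
        (sub_nonneg.2 (Real.rpow_le_rpow_of_nonpos ha hx.1 (by linarith))))
    exact one_le_mul_of_one_le_of_one_le (by linarith [abs_nonneg (f a)]) hexp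
  have hfB : f x ≤ B x := by
    refine le_of_deriv_lt_of_eq hf (fun x hx => (hB x hx).differentiableAt) ?_ ?_ hx
    · simp only [B, sub_self, mul_zero, Real.exp_zero, mul_one]
      linarith [le_abs_self (f a)]
    · intro y hy heq
      have hy' := Ico_subset_Icc_self hy
      have hpow : 0 < y ^ (-α - 1) := Real.rpow_pos_of_pos (ha.trans_le hy.1) _
      rw [(hB y hy').deriv]
      calc deriv f y ≤ m * y ^ (-α - 1) * (1 + |f y|) := h y hy'
        _ = y ^ (-α - 1) * (m * (1 + B y)) := by
            rw [heq, abs_of_nonneg (by linarith [hB_ge y hy'])]; ring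
        _ < y ^ (-α - 1) * ((2 * m + 1) * B y) :=
            mul_lt_mul_of_pos_left (by nlinarith [hB_ge y hy']) hpow
        _ = (2 * m + 1) * y ^ (-α - 1) * B y := by ring
  refine hfB.trans ?_
  simp only [B]
  gcongr
  linarith [Real.rpow_nonneg (ha.le.trans hx.1) (-α)]

end Comparison

/-- A perturbed radial system: the differential relations between spherical means of a solution,
up to relative errors of size `M * ρ ^ (-α)`. With `w` as in `Gfun`, these are the means of `w² μ`
(`H`), of the flux `w ⟨A ∇r, ∇w⟩` (`D`), of the radial part of the energy (`P`), of the full energy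
`⟨A ∇w, ∇w⟩` (`K`) and of `w²` (`W`); `G` is the normalised `Gfun`. -/
structure RadialSystem where
  (H D P K W G : ℝ → ℝ)
  (α M : ℝ)
  α_pos : 0 < α
  one_le_M : 1 ≤ M
  differentiableAt_H : ∀ ρ > 1, DifferentiableAt ℝ H ρ
  differentiableAt_D : ∀ ρ > 1, DifferentiableAt ℝ D ρ
  differentiableAt_G : ∀ ρ > 1, DifferentiableAt ℝ G ρ
  abs_deriv_H_sub_le : ∀ ρ > 1, |deriv H ρ - 2 * D ρ| ≤ M * ρ ^ (-α - 1) * H ρ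
  abs_deriv_D_sub_le : ∀ ρ > 1, |deriv D ρ - (2 * P ρ - G ρ)| ≤ M * ρ ^ (-α - 1) * H ρ
  abs_deriv_G_sub_le : ∀ ρ > 1,
    |deriv G ρ - 2 / ρ * (K ρ - P ρ)| ≤ M * ρ ^ (-α - 1) * (K ρ + W ρ)
  abs_G_sub_le : ∀ ρ > 1, |G ρ - (2 * P ρ - K ρ + W ρ)| ≤ M * ρ ^ (-α) * W ρ
  D_sq_le : ∀ ρ > 1, D ρ ^ 2 ≤ P ρ * H ρ
  P_nonneg : ∀ ρ > 1, 0 ≤ P ρ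
  P_le_K : ∀ ρ > 1, P ρ ≤ K ρ
  H_nonneg : ∀ ρ > 1, 0 ≤ H ρ
  H_le : ∀ ρ > 1, H ρ ≤ M * W ρ
  W_le : ∀ ρ > 1, W ρ ≤ M * H ρ

namespace RadialSystem

open Set Topology

variable (S : RadialSystem) {a b m δ ρ R Λ : ℝ}

/-- The frequency function, minus half the logarithmic derivative of `H` up to errors. Like every
quotient it is `0` where `H` vanishes, so it is only used where `H` is positive. -/
def frequency (ρ : ℝ) : ℝ := -S.D ρ / S.H ρ

theorem M_pos : 0 < S.M := one_pos.trans_le S.one_le_M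

theorem W_nonneg (hρ : 1 < ρ) : 0 ≤ S.W ρ :=
  nonneg_of_mul_nonneg_right ((S.H_nonneg ρ hρ).trans (S.H_le ρ hρ)) S.M_pos

theorem rpow_neg_sub_one_le_one (hρ : 1 < ρ) : ρ ^ (-S.α - 1) ≤ 1 :=
  Real.rpow_le_one_of_one_le_of_nonpos hρ.le (by linarith [S.α_pos])

theorem tendsto_mul_rpow_neg (c : ℝ) : Tendsto (fun ρ : ℝ => c * ρ ^ (-S.α)) atTop (𝓝 0) := by
  simpa only [mul_zero] using (tendsto_rpow_neg_atTop S.α_pos).const_mul c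

section Frequency

variable {S}

theorem D_eq_neg_frequency_mul (hH : 0 < S.H ρ) : S.D ρ = -S.frequency ρ * S.H ρ := by
  rw [frequency]
  field_simp

theorem differentiableAt_frequency (hρ : 1 < ρ) (hH : 0 < S.H ρ) :
    DifferentiableAt ℝ S.frequency ρ :=
  (S.differentiableAt_D ρ hρ).neg.div (S.differentiableAt_H ρ hρ) hH.ne'

/-- The term `2 * P` in `deriv D` is compensated by Cauchy-Schwarz, `D ^ 2 ≤ P * H`. -/
theorem deriv_frequency_le (hρ : 1 < ρ) (hH : 0 < S.H ρ) :
    deriv S.frequency ρ ≤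
      S.G ρ / S.H ρ + S.M * ρ ^ (-S.α - 1) * (1 + |S.frequency ρ|) := by
  have hderiv : deriv S.frequency ρ =
      (-deriv S.D ρ * S.H ρ + S.D ρ * deriv S.H ρ) / S.H ρ ^ 2 := by
    refine (((S.differentiableAt_D ρ hρ).hasDerivAt.neg.div
      (S.differentiableAt_H ρ hρ).hasDerivAt hH.ne').congr_deriv ?_).deriv
    simp only [Pi.neg_apply, neg_mul, sub_neg_eq_add]
  set e := S.M * ρ ^ (-S.α - 1)
  have hD : -deriv S.D ρ ≤ S.G ρ - 2 * S.P ρ + e * S.H ρ := by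
    linarith [(abs_le.1 (S.abs_deriv_D_sub_le ρ hρ)).1]
  have hDH : S.D ρ * (deriv S.H ρ - 2 * S.D ρ) ≤ |S.D ρ| * (e * S.H ρ) := by
    refine (le_abs_self _).trans ?_
    rw [abs_mul]
    exact mul_le_mul_of_nonneg_left (S.abs_deriv_H_sub_le ρ hρ) (abs_nonneg _)
  have hfreq : |S.frequency ρ| = |S.D ρ| / S.H ρ := by
    rw [frequency, abs_div, abs_neg, abs_of_pos hH]
  rw [hderiv, hfreq, div_le_iff₀ (by positivity)]
  calc -deriv S.D ρ * S.H ρ + S.D ρ * deriv S.H ρ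
      ≤ (S.G ρ - 2 * S.P ρ + e * S.H ρ) * S.H ρ + (2 * S.D ρ ^ 2 + |S.D ρ| * (e * S.H ρ)) :=
        add_le_add (mul_le_mul_of_nonneg_right hD hH.le) (by linarith)
    _ ≤ S.G ρ * S.H ρ + e * S.H ρ ^ 2 + e * |S.D ρ| * S.H ρ := by
        linarith [S.D_sq_le ρ hρ]
    _ = (S.G ρ / S.H ρ + e * (1 + |S.D ρ| / S.H ρ)) * S.H ρ ^ 2 := by
        field_simp
        ring

theorem le_deriv_H_of_frequency_le (hρ : 1 < ρ) (hH : 0 < S.H ρ) (hΛ : S.frequency ρ ≤ Λ) :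
    -(2 * Λ + S.M) * S.H ρ ≤ deriv S.H ρ := by
  have hdev := (abs_le.1 (S.abs_deriv_H_sub_le ρ hρ)).1
  have herr : S.M * ρ ^ (-S.α - 1) ≤ S.M :=
    mul_le_of_le_one_right S.M_pos.le (S.rpow_neg_sub_one_le_one hρ)
  rw [D_eq_neg_frequency_mul hH] at hdev
  nlinarith

/-- As long as `G` is dominated by the frequency, the frequency stays bounded, so `H` decays at
most exponentially and cannot reach zero. -/
theorem pos_and_frequency_le_of_G_le (ha : 1 < a) (hm : 0 ≤ m) (hHa : 0 < S.H a)
    (hG : ∀ ρ ∈ Icc a b, 0 < S.H ρ →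
      S.G ρ ≤ m * ρ ^ (-S.α - 1) * (1 + |S.frequency ρ|) * S.H ρ) :
    ∀ ρ ∈ Icc a b, 0 < S.H ρ ∧ S.frequency ρ ≤
      (|S.frequency a| + 1) * Real.exp ((2 * (S.M + m) + 1) / S.α * a ^ (-S.α)) := by
  set Λ := (|S.frequency a| + 1) * Real.exp ((2 * (S.M + m) + 1) / S.α * a ^ (-S.α))
  have hfreq : ∀ ρ ∈ Icc a b, (∀ z ∈ Icc a ρ, 0 < S.H z) → S.frequency ρ ≤ Λ := by
    intro ρ hρ hpos
    refine le_mul_exp_of_deriv_le_rpow (by linarith) (by linarith [S.M_pos]) S.α_pos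
      (fun x hx => differentiableAt_frequency (ha.trans_le hx.1) (hpos x hx)) (fun x hx => ?_)
      (right_mem_Icc.2 hρ.1)
    have hGx : S.G x / S.H x ≤ m * x ^ (-S.α - 1) * (1 + |S.frequency x|) :=
      (div_le_iff₀ (hpos x hx)).2 (hG x ⟨hx.1, hx.2.trans hρ.2⟩ (hpos x hx))
    linarith [deriv_frequency_le (ha.trans_le hx.1) (hpos x hx)]
  have hpos : ∀ ρ ∈ Icc a b, 0 < S.H ρ :=
    pos_of_le_deriv_of_pos (fun ρ hρ => S.differentiableAt_H ρ (ha.trans_le hρ.1)) hHa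
      fun ρ hρ hpos => le_deriv_H_of_frequency_le (ha.trans_le hρ.1)
        (hpos ρ (right_mem_Icc.2 hρ.1)) (hfreq ρ hρ hpos)
  exact fun ρ hρ =>
    ⟨hpos ρ hρ, hfreq ρ hρ fun z hz => hpos z ⟨hz.1, hz.2.trans hρ.2⟩⟩

end Frequency

section Continuation

variable {S}

theorem D_eq_zero_of_H_eq_zero (hρ : 1 < ρ) (hH : S.H ρ = 0) : S.D ρ = 0 := by
  have := S.D_sq_le ρ hρ
  rw [hH, mul_zero] at this
  exact pow_eq_zero_iff two_ne_zero |>.1 (this.antisymm (sq_nonneg _))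

theorem G_eq_zero_of_forall_ge (hR : 1 < R) (hH : ∀ ρ ≥ R, S.H ρ = 0) : S.G R = 0 := by
  have hderiv : deriv S.D R = 0 :=
    (uniqueDiffOn_Ici R R self_mem_Ici).eq_deriv _
      (S.differentiableAt_D R hR).hasDerivAt.hasDerivWithinAt
      ((hasDerivWithinAt_const R (Ici R) 0).congr
        (fun ρ hρ => D_eq_zero_of_H_eq_zero (hR.trans_le hρ) (hH ρ hρ))
        (D_eq_zero_of_H_eq_zero hR (hH R le_rfl)))
  have hW : S.W R = 0 := by
    refine le_antisymm ?_ (S.W_nonneg hR)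
    simpa only [hH R le_rfl, mul_zero] using S.W_le R hR
  have hGP := S.abs_deriv_D_sub_le R hR
  have hGK := S.abs_G_sub_le R hR
  rw [hH R le_rfl, mul_zero, hderiv, abs_nonpos_iff] at hGP
  rw [hW, mul_zero, abs_nonpos_iff] at hGK
  linarith [S.P_nonneg R hR, S.P_le_K R hR]

/-- The energy `-2 M D - G + 14 M³ (R - ρ) H` is nonincreasing on an interval of fixed length to
the left of `R`, because `-2 M D` has derivative about `-2 M K`, which dominates the errors. -/
theorem deriv_energy_nonpos (hρ : 1 < ρ) (hρR : ρ ≤ R) (hR : 14 * S.M ^ 2 * (R - ρ) ≤ 1) :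
    -2 * S.M * deriv S.D ρ - deriv S.G ρ +
      14 * S.M ^ 3 * ((R - ρ) * deriv S.H ρ - S.H ρ) ≤ 0 := by
  have hM := S.one_le_M
  have hP := S.P_nonneg ρ hρ
  have hK := S.P_le_K ρ hρ
  have hH := S.H_nonneg ρ hρ
  have hW := S.W_nonneg hρ
  have hpow := S.rpow_neg_sub_one_le_one hρ
  have hpow' : ρ ^ (-S.α) ≤ 1 :=
    Real.rpow_le_one_of_one_le_of_nonpos hρ.le (by linarith [S.α_pos])
  have herr : ∀ {t y : ℝ}, t ≤ 1 → 0 ≤ y → S.M * t * y ≤ S.M * y := fun ht hy =>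
    mul_le_mul_of_nonneg_right (mul_le_of_le_one_right S.M_pos.le ht) hy
  have hderivD : 2 * S.P ρ - S.G ρ - S.M * S.H ρ ≤ deriv S.D ρ := by
    linarith [(abs_le.1 (S.abs_deriv_D_sub_le ρ hρ)).1, herr hpow hH]
  have hG : S.G ρ ≤ 2 * S.P ρ - S.K ρ + S.W ρ + S.M * S.W ρ := by
    linarith [(abs_le.1 (S.abs_G_sub_le ρ hρ)).2, herr hpow' hW]
  have hderivG : -(S.M * (S.K ρ + S.W ρ)) ≤ deriv S.G ρ := by
    have : 0 ≤ 2 / ρ * (S.K ρ - S.P ρ) := mul_nonneg (by positivity) (by linarith)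
    linarith [(abs_le.1 (S.abs_deriv_G_sub_le ρ hρ)).1,
      herr hpow (y := S.K ρ + S.W ρ) (by linarith)]
  have hderivH : deriv S.H ρ ≤ S.K ρ + S.H ρ + S.M * S.H ρ := by
    have hD : 2 * S.D ρ ≤ S.P ρ + S.H ρ :=
      (le_abs_self _).trans (abs_le_of_sq_le_sq (by
        nlinarith [S.D_sq_le ρ hρ, sq_nonneg (S.P ρ - S.H ρ)]) (by linarith))
    linarith [(abs_le.1 (S.abs_deriv_H_sub_le ρ hρ)).2, herr hpow hH]
  have hshort : 14 * S.M ^ 3 * (R - ρ) * deriv S.H ρ ≤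
      S.M * (S.K ρ + S.H ρ + S.M * S.H ρ) := by
    have hcoef : 14 * S.M ^ 3 * (R - ρ) ≤ S.M := by nlinarith
    have hcoef_nonneg : 0 ≤ 14 * S.M ^ 3 * (R - ρ) :=
      mul_nonneg (by positivity) (sub_nonneg.2 hρR)
    exact (mul_le_mul_of_nonneg_left hderivH hcoef_nonneg).trans
      (mul_le_mul_of_nonneg_right hcoef (by nlinarith))
  have hWH := S.W_le ρ hρ
  have hM2 : S.M ^ 2 ≤ S.M ^ 3 := pow_le_pow_right₀ hM (by norm_num)
  have : S.M ≤ S.M ^ 3 := le_self_pow₀ hM (by norm_num)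
  calc -2 * S.M * deriv S.D ρ - deriv S.G ρ + 14 * S.M ^ 3 * ((R - ρ) * deriv S.H ρ - S.H ρ)
      ≤ (3 * S.M + 2 * S.M ^ 2) * S.W ρ + (3 * S.M ^ 2 + S.M - 14 * S.M ^ 3) * S.H ρ := by
        nlinarith
    _ ≤ (3 * S.M + 2 * S.M ^ 2) * (S.M * S.H ρ) +
          (3 * S.M ^ 2 + S.M - 14 * S.M ^ 3) * S.H ρ := by gcongr
    _ ≤ 0 := by nlinarith

theorem G_le_of_forall_ge (hR : ∀ ρ ≥ R, S.H ρ = 0) (hρ : 1 < ρ) (hρR : ρ ≤ R)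
    (hshort : 14 * S.M ^ 2 * (R - ρ) ≤ 1) : S.G ρ ≤ 2 * S.M * (|S.D ρ| + S.H ρ) := by
  let Φ : ℝ → ℝ := fun x => -2 * S.M * S.D x - S.G x + 14 * S.M ^ 3 * ((R - x) * S.H x)
  have hΦ : ∀ x > 1, HasDerivAt Φ (-2 * S.M * deriv S.D x - deriv S.G x +
      14 * S.M ^ 3 * ((R - x) * deriv S.H x - S.H x)) x := fun x hx => by
    refine ((((S.differentiableAt_D x hx).hasDerivAt.const_mul (-2 * S.M)).sub
      (S.differentiableAt_G x hx).hasDerivAt).add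
      ((((hasDerivAt_id x).const_sub R).mul
        (S.differentiableAt_H x hx).hasDerivAt).const_mul (14 * S.M ^ 3))).congr_deriv ?_
    simp only [id]
    ring
  have hanti : 0 ≤ Φ ρ := by
    have hΦR : Φ R = 0 := by
      simp only [Φ, D_eq_zero_of_H_eq_zero (hρ.trans_le hρR) (hR R le_rfl),
        G_eq_zero_of_forall_ge (hρ.trans_le hρR) hR, hR R le_rfl, mul_zero, sub_zero, add_zero]
    have : (-Φ) ρ ≤ (-Φ) R := le_of_deriv_nonneg_Ioo hρR
      (fun x hx => (hΦ x (hρ.trans_le hx.1)).differentiableAt.neg) fun x hx => by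
        rw [(hΦ x (hρ.trans hx.1)).neg.deriv, neg_nonneg]
        refine deriv_energy_nonpos (hρ.trans hx.1) hx.2.le (le_trans ?_ hshort)
        gcongr
        exact hx.1.le
    simp only [Pi.neg_apply] at this
    linarith
  have hcoef : 14 * S.M ^ 3 * ((R - ρ) * S.H ρ) ≤ S.M * S.H ρ := by
    nlinarith [mul_nonneg S.M_pos.le (S.H_nonneg ρ hρ)]
  have hD : -(2 * S.M * S.D ρ) ≤ 2 * S.M * |S.D ρ| := by
    nlinarith [neg_le_abs (S.D ρ), S.M_pos]
  have hMH : 0 ≤ S.M * S.H ρ := mul_nonneg S.M_pos.le (S.H_nonneg ρ hρ)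
  simp only [Φ] at hanti
  linarith

theorem H_eq_zero_of_sub_le (hR : ∀ ρ ≥ R, S.H ρ = 0) (ha : 1 < a)
    (hshort : 14 * S.M ^ 2 * (R - a) ≤ 1) : S.H a = 0 := by
  by_contra hne
  have haR : a ≤ R := le_of_not_ge fun h => hne (hR a h)
  have hRpos : 0 < R := by linarith
  refine (pos_and_frequency_le_of_G_le (b := R) (m := 2 * S.M * R ^ (1 + S.α)) ha
    (by have := S.M_pos; positivity) ((S.H_nonneg a ha).lt_of_ne' hne) (fun ρ hρ hpos => ?_) R
    (right_mem_Icc.2 haR)).1.ne' (hR R le_rfl)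
  have hρ1 : 1 < ρ := ha.trans_le hρ.1
  have hfreq : |S.D ρ| = |S.frequency ρ| * S.H ρ := by
    rw [D_eq_neg_frequency_mul hpos, abs_mul, abs_neg, abs_of_pos hpos]
  have hpow : 1 ≤ R ^ (1 + S.α) * ρ ^ (-S.α - 1) := by
    rw [show -S.α - 1 = -(1 + S.α) by ring, Real.rpow_neg (by linarith), ← div_eq_mul_inv,
      one_le_div (by positivity)]
    exact Real.rpow_le_rpow (by linarith) hρ.2 (by linarith [S.α_pos])
  have hnonneg : 0 ≤ 2 * S.M * ((1 + |S.frequency ρ|) * S.H ρ) := by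
    have := S.M_pos; positivity
  calc S.G ρ ≤ 2 * S.M * (|S.D ρ| + S.H ρ) :=
        G_le_of_forall_ge hR hρ1 hρ.2 (le_trans (by gcongr; exact hρ.1) hshort)
    _ = 2 * S.M * ((1 + |S.frequency ρ|) * S.H ρ) := by rw [hfreq]; ring
    _ ≤ 2 * S.M * ((1 + |S.frequency ρ|) * S.H ρ) * (R ^ (1 + S.α) * ρ ^ (-S.α - 1)) :=
        le_mul_of_one_le_right hnonneg hpow
    _ = _ := by ring

theorem H_eq_zero_of_forall_ge (hR : ∀ ρ > 1, R ≤ ρ → S.H ρ = 0) (ha : 1 < a) : S.H a = 0 := by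
  have hM := S.M_pos
  let ε := (14 * S.M ^ 2)⁻¹
  have hε : 0 < ε := by positivity
  have step : ∀ k : ℕ, ∀ ρ > 1, R - k * ε ≤ ρ → S.H ρ = 0 := by
    intro k
    induction k with
    | zero => simpa only [Nat.cast_zero, zero_mul, sub_zero] using hR
    | succ k ih =>
      intro ρ hρ hle
      push_cast at hle
      refine H_eq_zero_of_sub_le (R := ρ + ε) (fun r hr => ih r (by linarith) (by linarith)) hρ ?_
      rw [add_sub_cancel_left, mul_inv_cancel₀ (by positivity)]
  obtain ⟨k, hk⟩ := exists_nat_ge ((R - a) / ε)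
  exact step k a ha (by linarith [(div_le_iff₀ hε).1 hk])

end Continuation

section Positivity

variable {S}

theorem deriv_rpow_mul_G_nonneg (hδ : 0 < δ) (hδ1 : δ ≤ 1) (hρ : 1 < ρ)
    (hs : S.M * ρ ^ (-S.α) ≤ δ / 2) : 0 ≤ deriv (fun x => x ^ δ * S.G x) ρ := by
  have hρ0 : 0 < ρ := by linarith
  have hderiv : deriv (fun x => x ^ δ * S.G x) ρ =
      ρ ^ (δ - 1) * (δ * S.G ρ + ρ * deriv S.G ρ) := by
    rw [((Real.hasDerivAt_rpow_const (p := δ) (Or.inl hρ0.ne')).fun_mul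
      (S.differentiableAt_G ρ hρ).hasDerivAt).deriv, Real.rpow_sub_one hρ0.ne']
    field_simp
  have hG := (abs_le.1 (S.abs_G_sub_le ρ hρ)).1
  have hdG := (abs_le.1 (S.abs_deriv_G_sub_le ρ hρ)).1
  rw [Real.rpow_sub_one (one_pos.trans hρ).ne', ← mul_div_assoc] at hdG
  set s := S.M * ρ ^ (-S.α)
  have hdG' : 2 * (S.K ρ - S.P ρ) - s * (S.K ρ + S.W ρ) ≤ ρ * deriv S.G ρ := by
    have : 2 * (S.K ρ - S.P ρ) - s * (S.K ρ + S.W ρ) =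
        ρ * (2 / ρ * (S.K ρ - S.P ρ) - s / ρ * (S.K ρ + S.W ρ)) := by field_simp
    rw [this]
    exact mul_le_mul_of_nonneg_left (by linarith) hρ0.le
  have hK : 0 ≤ (2 - δ - s) * (S.K ρ - S.P ρ) :=
    mul_nonneg (by linarith) (sub_nonneg.2 (S.P_le_K ρ hρ))
  have hP : 0 ≤ (δ - s) * S.P ρ := mul_nonneg (by linarith) (S.P_nonneg ρ hρ)
  have hW : 0 ≤ (δ - δ * s - s) * S.W ρ := mul_nonneg (by nlinarith) (S.W_nonneg hρ)
  rw [hderiv]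
  exact mul_nonneg (by positivity) (by nlinarith)

theorem H_div_le_deriv_G (hρ : 1 < ρ) (hs : S.M * ρ ^ (-S.α) ≤ 1 / 4) (hG : S.G ρ ≤ 0) :
    S.H ρ / (2 * S.M) / ρ ≤ deriv S.G ρ := by
  have hM := S.M_pos
  have : 0 < ρ := by linarith
  have hGK := (abs_le.1 (S.abs_G_sub_le ρ hρ)).1
  have hdG := (abs_le.1 (S.abs_deriv_G_sub_le ρ hρ)).1
  rw [Real.rpow_sub_one (one_pos.trans hρ).ne', ← mul_div_assoc] at hdG
  set s := S.M * ρ ^ (-S.α)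
  have : 0 ≤ s := by positivity
  have hW := S.W_nonneg hρ
  have hK : 0 ≤ S.K ρ := (S.P_nonneg ρ hρ).trans (S.P_le_K ρ hρ)
  have hH : S.H ρ / (2 * S.M) ≤ S.W ρ / 2 := by
    rw [div_le_div_iff₀ (by positivity) two_pos]
    linarith [S.H_le ρ hρ]
  calc S.H ρ / (2 * S.M) / ρ ≤ ((1 - s) * S.K ρ + (1 - 2 * s) * S.W ρ) / ρ := by
        gcongr
        nlinarith
    _ ≤ (2 * (S.K ρ - S.P ρ) - s * (S.K ρ + S.W ρ)) / ρ := by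
        gcongr
        linarith
    _ = 2 / ρ * (S.K ρ - S.P ρ) - s / ρ * (S.K ρ + S.W ρ) := by field_simp
    _ ≤ deriv S.G ρ := by linarith

theorem G_le_neg_div_mul_H (hR : 1 < R) (hs : ∀ ρ ≥ R, S.M * ρ ^ (-S.α) ≤ 1 / 4)
    (hG : ∀ ρ ≥ R, S.G ρ ≤ 0) (hH : ∀ ρ ≥ R, 0 < S.H ρ) (hΛ0 : 0 ≤ Λ)
    (hΛ : ∀ ρ ≥ R, S.frequency ρ ≤ Λ) (hρ : R ≤ ρ) :
    S.G ρ ≤ -(Real.exp (-(2 * Λ + S.M)) / (4 * S.M) / ρ) * S.H ρ := by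
  have hM := S.M_pos
  have hρ1 : 1 < ρ := hR.trans_le hρ
  set κ := Real.exp (-(2 * Λ + S.M)) * S.H ρ / (4 * S.M) / ρ with hκ
  have hHlow : ∀ x ∈ Icc ρ (ρ + 1), Real.exp (-(2 * Λ + S.M)) * S.H ρ ≤ S.H x := by
    intro x hx
    refine le_trans ?_ (mul_exp_le_of_le_deriv (L := 2 * Λ + S.M) hx.1
      (fun y hy => S.differentiableAt_H y (hρ1.trans_le hy.1)) fun y hy =>
        le_deriv_H_of_frequency_le (hρ1.trans hy.1) (hH y (hρ.trans hy.1.le))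
          (hΛ y (hρ.trans hy.1.le)))
    rw [mul_comm]
    gcongr
    · exact (hH ρ hρ).le
    · nlinarith [hx.2]
  have hGlow : ∀ x ∈ Ioo ρ (ρ + 1), κ ≤ deriv S.G x := by
    intro x hx
    have hRx : R ≤ x := hρ.trans hx.1.le
    refine le_trans ?_ (H_div_le_deriv_G (hR.trans_le hRx) (hs x hRx) (hG x hRx))
    have hHx := hHlow x (Ioo_subset_Icc_self hx)
    have hHρ := hH ρ hρ
    have hx2 : x ≤ 2 * ρ := by linarith [hx.2]
    calc κ = Real.exp (-(2 * Λ + S.M)) * S.H ρ / (2 * S.M) / (2 * ρ) := by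
          rw [hκ]; field_simp; norm_num
      _ ≤ S.H x / (2 * S.M) / x := by
          have : 0 < x := by linarith [hx.1]
          have := hH x hRx
          gcongr
  have hmono := le_of_deriv_nonneg_Ioo (f := fun x => S.G x - κ * x) (lt_add_one ρ).le
    (fun x hx => (S.differentiableAt_G x (hρ1.trans_le hx.1)).sub
      (differentiableAt_id.const_mul κ)) fun x hx => by
      rw [((S.differentiableAt_G x (hρ1.trans hx.1)).hasDerivAt.fun_sub
        ((hasDerivAt_id' x).const_mul κ)).deriv, mul_one]
      exact sub_nonneg.2 (hGlow x hx)
  calc S.G ρ ≤ -κ := by linarith [hG (ρ + 1) (by linarith)]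
    _ = _ := by rw [hκ]; ring

theorem eventually_frequency_le (hR : 1 < R) (hs : ∀ ρ ≥ R, S.M * ρ ^ (-S.α) ≤ 1 / 4)
    (hG : ∀ ρ ≥ R, S.G ρ ≤ 0) (hH : ∀ ρ ≥ R, 0 < S.H ρ)
    (hΛ : ∀ ρ ≥ R, S.frequency ρ ≤ Λ) (q : ℝ) : ∀ᶠ ρ in atTop, S.frequency ρ ≤ q := by
  have hM := S.M_pos
  let c := Real.exp (-(2 * |Λ| + S.M)) / (4 * S.M)
  have hc : 0 < c := by positivity
  obtain ⟨R₁, hR₁, hsmall⟩ := ((eventually_ge_atTop R).and (eventually_forall_ge_atTop.2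
    ((S.tendsto_mul_rpow_neg (S.M * (1 + (|Λ| + |q|)))).eventually_le_const
      (half_pos hc)))).exists
  have hR₁1 : 1 < R₁ := hR.trans_le hR₁
  refine eventually_le_of_deriv_le_neg_div (half_pos hc) (by linarith)
    (fun x hx => differentiableAt_frequency (hR₁1.trans_le hx) (hH x (hR₁.trans hx)))
    fun x hx hqx => ?_
  have hx1 : 1 < x := hR₁1.trans_le hx
  have hHx := hH x (hR₁.trans hx)
  have hGH : S.G x / S.H x ≤ -(c / x) :=
    (div_le_iff₀ hHx).2 (G_le_neg_div_mul_H hR hs hG hH (abs_nonneg Λ)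
      (fun ρ hρ => (hΛ ρ hρ).trans (le_abs_self Λ)) (hR₁.trans hx))
  have hfreq : |S.frequency x| ≤ |Λ| + |q| := abs_le.2
    ⟨by linarith [neg_abs_le q, abs_nonneg Λ],
      by linarith [hΛ x (hR₁.trans hx), le_abs_self Λ, abs_nonneg q]⟩
  have herr : S.M * x ^ (-S.α - 1) * (1 + |S.frequency x|) ≤ c / 2 / x := by
    rw [Real.rpow_sub_one (one_pos.trans hx1).ne']
    calc S.M * (x ^ (-S.α) / x) * (1 + |S.frequency x|)
        ≤ S.M * (x ^ (-S.α) / x) * (1 + (|Λ| + |q|)) := by gcongr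
      _ = S.M * (1 + (|Λ| + |q|)) * x ^ (-S.α) / x := by ring
      _ ≤ c / 2 / x := by gcongr; exact hsmall x hx
  calc deriv S.frequency x ≤ -(c / x) + c / 2 / x := by
        linarith [deriv_frequency_le hx1 hHx]
    _ = -(c / 2 / x) := by ring

/-- Otherwise the frequency tends to `-∞`, `H` is eventually increasing, and then `deriv G` is at
least a multiple of `1 / ρ`, forcing `G → ∞`. -/
theorem H_eq_zero_of_G_nonpos (hR : 1 < R) (hs : ∀ ρ ≥ R, S.M * ρ ^ (-S.α) ≤ 1 / 4)
    (hG : ∀ ρ ≥ R, S.G ρ ≤ 0) : ∀ ρ ≥ R, S.H ρ = 0 := by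
  by_contra! hcon
  obtain ⟨a, ha, hne⟩ := hcon
  have ha1 : 1 < a := hR.trans_le ha
  have hbound : ∀ ρ ≥ a, 0 < S.H ρ ∧ S.frequency ρ ≤
      (|S.frequency a| + 1) * Real.exp ((2 * (S.M + 0) + 1) / S.α * a ^ (-S.α)) := fun ρ hρ =>
    pos_and_frequency_le_of_G_le ha1 le_rfl ((S.H_nonneg a ha1).lt_of_ne' hne)
      (fun x hx _ => by simpa only [zero_mul] using hG x (ha.trans hx.1)) ρ ⟨hρ, le_rfl⟩
  obtain ⟨R₁, hR₁, hfreq⟩ := ((eventually_ge_atTop a).and (eventually_forall_ge_atTop.2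
    (eventually_frequency_le ha1 (fun ρ hρ => hs ρ (ha.trans hρ)) (fun ρ hρ => hG ρ (ha.trans hρ))
      (fun ρ hρ => (hbound ρ hρ).1) (fun ρ hρ => (hbound ρ hρ).2) (-(S.M / 2))))).exists
  have hR₁1 : 1 < R₁ := ha1.trans_le hR₁
  have hmono : ∀ ρ ≥ R₁, S.H R₁ ≤ S.H ρ := fun ρ hρ =>
    le_of_deriv_nonneg_Ioo hρ (fun x hx => S.differentiableAt_H x (hR₁1.trans_le hx.1))
      fun x hx => by
        have := le_deriv_H_of_frequency_le (hR₁1.trans hx.1) (hbound x (hR₁.trans hx.1.le)).1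
          (hfreq x hx.1.le)
        rwa [show -(2 * -(S.M / 2) + S.M) * S.H x = 0 by ring] at this
  have hMpos := S.M_pos
  have hlim : Tendsto S.G atTop atTop :=
    tendsto_atTop_of_div_le_deriv (c := S.H R₁ / (2 * S.M))
      (div_pos (hbound R₁ hR₁).1 (by positivity)) (by linarith)
      (fun x hx => S.differentiableAt_G x (hR₁1.trans_le hx)) fun x hx => by
        have hRx : R ≤ x := ha.trans (hR₁.trans hx)
        refine le_trans ?_ (H_div_le_deriv_G (hR.trans_le hRx) (hs x hRx) (hG x hRx))
        have : 0 < x := by linarith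
        gcongr
        exact hmono x hx
  obtain ⟨x, hx, hpos⟩ := ((eventually_ge_atTop R).and (hlim.eventually_gt_atTop 0)).exists
  exact (hG x hx).not_gt hpos

end Positivity

theorem exists_le_rpow_mul_G (hH : ∃ ρ > 1, S.H ρ ≠ 0) (hδ : 0 < δ) :
    ∃ C > 0, ∃ R > 1, ∀ ρ ≥ R, C ≤ ρ ^ δ * S.G ρ := by
  let ε := min δ 1
  have hε : 0 < ε := lt_min hδ one_pos
  have hε1 : ε ≤ 1 := min_le_right δ 1
  obtain ⟨R, hR, hs⟩ := ((eventually_gt_atTop 1).and (eventually_forall_ge_atTop.2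
    ((S.tendsto_mul_rpow_neg S.M).eventually_le_const (show 0 < ε / 4 by positivity)))).exists
  obtain ⟨a, ha, hGa⟩ : ∃ a ≥ R, 0 < S.G a := by
    by_contra! hG
    obtain ⟨ρ, hρ, hne⟩ := hH
    exact hne (H_eq_zero_of_forall_ge
      (fun x _ hx => H_eq_zero_of_G_nonpos hR (fun y hy => (hs y hy).trans (by linarith)) hG x hx)
      hρ)
  have ha1 : 1 < a := hR.trans_le ha
  refine ⟨a ^ ε * S.G a, by positivity, a, ha1, fun ρ hρ => ?_⟩
  have hmono : a ^ ε * S.G a ≤ ρ ^ ε * S.G ρ :=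
    le_of_deriv_nonneg_Ioo (f := fun x => x ^ ε * S.G x) hρ
      (fun x hx => (Real.differentiableAt_rpow_const_of_ne ε
        (by linarith [hx.1])).mul (S.differentiableAt_G x (ha1.trans_le hx.1)))
      fun x hx => deriv_rpow_mul_G_nonneg hε hε1 (ha1.trans hx.1)
        ((hs x (ha.trans hx.1.le)).trans (by linarith))
  have hρ1 : 1 < ρ := ha1.trans_le hρ
  have hGρ : 0 ≤ S.G ρ := by
    have : 0 < ρ ^ ε * S.G ρ := hmono.trans_lt' (by positivity)
    exact (pos_of_mul_pos_right this (by positivity)).le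
  exact hmono.trans (mul_le_mul_of_nonneg_right
    (Real.rpow_le_rpow_of_exponent_le hρ1.le (min_le_left δ 1)) hGρ)

end RadialSystem

section UniformMeasures

open scoped ENNReal

variable {X : Type*} [MetricSpace X] [SecondCountableTopology X] [MeasurableSpace X]
  [BorelSpace X] [HasBesicovitchCovering X] {μ ν : Measure X} [IsFiniteMeasure μ]
  [IsFiniteMeasure ν] {s : Set X}

theorem exists_eq_smul_of_measure_closedBall_eq (hac : μ ≪ ν) (hs : ∀ᵐ x ∂ν, x ∈ s)
    (hμ : ∀ x ∈ s, ∀ y ∈ s, ∀ r, μ (closedBall x r) = μ (closedBall y r))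
    (hν : ∀ x ∈ s, ∀ y ∈ s, ∀ r, ν (closedBall x r) = ν (closedBall y r)) :
    ∃ c : ℝ≥0∞, μ = c • ν := by
  rcases eq_zero_or_neZero ν with rfl | hne
  · exact ⟨0, by rw [zero_smul, Measure.absolutelyContinuous_zero_iff.1 hac]⟩
  have hdensity := Besicovitch.ae_tendsto_rnDeriv μ ν
  obtain ⟨a, ha, has⟩ := (hdensity.and hs).exists
  refine ⟨μ.rnDeriv ν a, ?_⟩
  rw [← withDensity_const, ← Measure.withDensity_rnDeriv_eq μ ν hac]
  refine withDensity_congr_ae ?_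
  filter_upwards [hdensity, hs] with x hx hxs
  rw [Measure.withDensity_rnDeriv_eq μ ν hac]
  refine tendsto_nhds_unique hx (ha.congr fun r => ?_)
  rw [hμ a has x hxs, hν a has x hxs]

/-- Both measures are compared with their sum. -/
theorem exists_smul_eq_smul_of_measure_closedBall_eq [NeZero μ] [NeZero ν]
    (hsμ : ∀ᵐ x ∂μ, x ∈ s) (hsν : ∀ᵐ x ∂ν, x ∈ s)
    (hμ : ∀ x ∈ s, ∀ y ∈ s, ∀ r, μ (closedBall x r) = μ (closedBall y r))
    (hν : ∀ x ∈ s, ∀ y ∈ s, ∀ r, ν (closedBall x r) = ν (closedBall y r)) :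
    ∃ c : ℝ≥0∞, c ≠ 0 ∧ c ≠ ∞ ∧ μ = c • ν := by
  have hsum : ∀ x ∈ s, ∀ y ∈ s, ∀ r, (μ + ν) (closedBall x r) = (μ + ν) (closedBall y r) :=
    fun x hx y hy r => by simp only [Measure.add_apply, hμ x hx y hy, hν x hx y hy]
  have hssum : ∀ᵐ x ∂(μ + ν), x ∈ s := ae_add_measure_iff.2 ⟨hsμ, hsν⟩
  obtain ⟨c, hc⟩ := exists_eq_smul_of_measure_closedBall_eq
    (Measure.AbsolutelyContinuous.rfl.add_right ν) hssum hμ hsum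
  obtain ⟨d, hd⟩ := exists_eq_smul_of_measure_closedBall_eq
    (add_comm μ ν ▸ Measure.AbsolutelyContinuous.rfl.add_right μ) hssum hν hsum
  have hc0 : c ≠ 0 := fun h => NeZero.ne μ (by rw [hc, h, zero_smul])
  have hd0 : d ≠ 0 := fun h => NeZero.ne ν (by rw [hd, h, zero_smul])
  have hfin : ∀ {e : ℝ≥0∞} {τ : Measure X} [IsFiniteMeasure τ], τ = e • (μ + ν) → e ≠ ∞ := by
    rintro e τ _ rfl rfl
    refine measure_ne_top (∞ • (μ + ν)) Set.univ ?_
    rw [Measure.smul_apply, smul_eq_mul, ENNReal.top_mul]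
    exact fun h => NeZero.ne μ (Measure.measure_univ_eq_zero.1 (add_eq_zero.1 h).1)
  refine ⟨c / d, ENNReal.div_ne_zero.2 ⟨hc0, hfin hd⟩, ENNReal.div_ne_top (hfin hc) hd0, ?_⟩
  conv_rhs => rw [hd]
  rw [smul_smul, ENNReal.div_mul_cancel hd0 (hfin hd)]
  exact hc

end UniformMeasures

section SphereMeasure

open Module
open scoped ENNReal Pointwise RealInnerProductSpace

variable {E : Type*} [NormedAddCommGroup E] [InnerProductSpace ℝ E] {v : E}

theorem exists_linearIsometryEquiv_apply_eq {x y : E} (h : ‖x‖ = ‖y‖) :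
    ∃ g : E ≃ₗᵢ[ℝ] E, g x = y :=
  ⟨_, Submodule.reflection_sub h⟩

theorem image_closedBall_inter_unitSphere (g : E ≃ₗᵢ[ℝ] E) (x : E) (r : ℝ) :
    g '' (closedBall x r ∩ sphere 0 1) = closedBall (g x) r ∩ sphere 0 1 := by
  rw [Set.image_inter g.injective, LinearIsometryEquiv.image_closedBall,
    LinearIsometryEquiv.image_sphere, map_zero]

theorem finrank_sub_one_eq_finrank_orthogonal [FiniteDimensional ℝ E] (hv : v ≠ 0) :
    (finrank ℝ E : ℝ) - 1 = finrank ℝ (ℝ ∙ v)ᗮ := by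
  rw [← (ℝ ∙ v).finrank_add_finrank_orthogonal, finrank_span_singleton hv]
  push_cast
  ring

variable [MeasurableSpace E] [BorelSpace E]

theorem hausdorffMeasure_restrict_sphere_closedBall_eq {x y : E} (h : ‖x‖ = ‖y‖) (d r : ℝ) :
    (μH[d]).restrict (sphere 0 1) (closedBall x r) =
      (μH[d]).restrict (sphere 0 1) (closedBall y r) := by
  obtain ⟨g, rfl⟩ := exists_linearIsometryEquiv_apply_eq h
  rw [Measure.restrict_apply measurableSet_closedBall,
    Measure.restrict_apply measurableSet_closedBall,
    ← image_closedBall_inter_unitSphere g]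
  exact (g.toIsometryEquiv.hausdorffMeasure_image _ _).symm

variable [FiniteDimensional ℝ E]

/-- The hemisphere is the image of a compact set under inverse stereographic projection. -/
theorem hausdorffMeasure_hemisphere_lt_top (hv : ‖v‖ = 1) :
    μH[(finrank ℝ E : ℝ) - 1] {x ∈ sphere (0 : E) 1 | ⟪v, x⟫ ≤ 0} < ∞ := by
  set S := {x ∈ sphere (0 : E) 1 | ⟪v, x⟫ ≤ 0}
  have hS : IsCompact S := (isCompact_sphere 0 1).inter_right
    (isClosed_le (f := fun x : E => ⟪v, x⟫) (by fun_prop) continuous_const)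
  have hK : IsCompact (stereoToFun v '' S) :=
    hS.image_of_continuousOn (continuousOn_stereoToFun.mono fun x hx => by
      have : ⟪v, x⟫ ≤ 0 := hx.2
      simp only [Set.mem_ofPred_eq, innerSL_apply_apply]
      linarith)
  let f : (ℝ ∙ v)ᗮ → E := fun w => stereoInvFunAux v w
  have hf : ContDiff ℝ 1 f := contDiff_stereoInvFunAux.comp (ℝ ∙ v)ᗮ.subtypeL.contDiff
  have hSf : S ⊆ f '' (stereoToFun v '' S) := by
    intro x hx
    refine ⟨_, Set.mem_image_of_mem _ hx, ?_⟩
    refine congrArg Subtype.val (stereo_left_inv hv (x := ⟨x, hx.1⟩) fun h : x = v => ?_)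
    have : ⟪v, x⟫ ≤ 0 := hx.2
    rw [h, real_inner_self_eq_norm_sq, hv] at this
    norm_num at this
  obtain ⟨L, hL⟩ := (hf.locallyLipschitz.locallyLipschitzOn
    (s := stereoToFun v '' S)).exists_lipschitzOnWith_of_compact hK
  rw [finrank_sub_one_eq_finrank_orthogonal (norm_ne_zero_iff.1 (hv.trans_ne one_ne_zero))]
  calc μH[(finrank ℝ (ℝ ∙ v)ᗮ : ℝ)] S
      ≤ μH[(finrank ℝ (ℝ ∙ v)ᗮ : ℝ)] (f '' (stereoToFun v '' S)) := measure_mono hSf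
    _ ≤ (L : ℝ≥0∞) ^ (finrank ℝ (ℝ ∙ v)ᗮ : ℝ) *
          μH[(finrank ℝ (ℝ ∙ v)ᗮ : ℝ)] (stereoToFun v '' S) :=
        hL.hausdorffMeasure_image_le (Nat.cast_nonneg _)
    _ < ∞ := ENNReal.mul_lt_top
        (ENNReal.rpow_lt_top_of_nonneg (Nat.cast_nonneg _) ENNReal.coe_ne_top) hK.measure_lt_top

theorem hausdorffMeasure_unitSphere_lt_top :
    μH[(finrank ℝ E : ℝ) - 1] (sphere (0 : E) 1) < ∞ := by
  rcases (sphere (0 : E) 1).eq_empty_or_nonempty with h | ⟨v, hv⟩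
  · rw [h, measure_empty]
    exact ENNReal.zero_lt_top
  rw [mem_sphere_zero_iff_norm] at hv
  have hsub : sphere (0 : E) 1 ⊆
      {x ∈ sphere (0 : E) 1 | ⟪v, x⟫ ≤ 0} ∪ {x ∈ sphere (0 : E) 1 | ⟪-v, x⟫ ≤ 0} := fun x hx =>
    (le_total ⟪v, x⟫ 0).imp (fun h => ⟨hx, h⟩) fun h =>
      ⟨hx, by rwa [inner_neg_left, neg_nonpos]⟩
  exact (measure_mono hsub).trans_lt (measure_union_lt_top (hausdorffMeasure_hemisphere_lt_top hv)
    (hausdorffMeasure_hemisphere_lt_top (by rwa [norm_neg])))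

theorem hausdorffMeasure_unitSphere_pos [Nontrivial E] :
    0 < μH[(finrank ℝ E : ℝ) - 1] (sphere (0 : E) 1) := by
  obtain ⟨v, hv⟩ := exists_norm_eq E zero_le_one
  let p := (ℝ ∙ v)ᗮ.orthogonalProjectionOnto
  have hball : ball (0 : (ℝ ∙ v)ᗮ) 1 ⊆ p '' sphere (0 : E) 1 := by
    intro y hy
    rw [mem_ball_zero_iff] at hy
    have hpv : p v = 0 := (ℝ ∙ v)ᗮ.orthogonalProjectionOnto_apply_of_mem_orthogonal
      (Submodule.le_orthogonal_orthogonal _ (Submodule.mem_span_singleton_self v))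
    refine ⟨y + √(1 - ‖y‖ ^ 2) • v, ?_, ?_⟩
    · have horth : ⟪(y : E), √(1 - ‖y‖ ^ 2) • v⟫ = 0 := by
        rw [inner_smul_right, Submodule.mem_orthogonal_singleton_iff_inner_left.1 y.2, mul_zero]
      have hsqrt : √(1 - ‖y‖ ^ 2) ^ 2 = 1 - ‖y‖ ^ 2 :=
        Real.sq_sqrt (by nlinarith [norm_nonneg y])
      rw [mem_sphere_zero_iff_norm, ← sq_eq_sq₀ (norm_nonneg _) zero_le_one, norm_add_sq_real,
        horth, norm_smul, hv, Real.norm_eq_abs, mul_one, sq_abs, hsqrt, Submodule.coe_norm]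
      ring
    · rw [map_add, map_smul, hpv, smul_zero, add_zero]
      exact Submodule.orthogonalProjectionOnto_mem_subspace_eq_self y
  have hp : LipschitzWith 1 p := (ℝ ∙ v)ᗮ.lipschitzWith_orthogonalProjectionOnto
  rw [finrank_sub_one_eq_finrank_orthogonal (norm_ne_zero_iff.1 (hv.trans_ne one_ne_zero))]
  calc 0 < μH[(finrank ℝ (ℝ ∙ v)ᗮ : ℝ)] (ball (0 : (ℝ ∙ v)ᗮ) 1) := measure_ball_pos _ _ one_pos
    _ ≤ μH[(finrank ℝ (ℝ ∙ v)ᗮ : ℝ)] (p '' sphere (0 : E) 1) := measure_mono hball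
    _ ≤ μH[(finrank ℝ (ℝ ∙ v)ᗮ : ℝ)] (sphere (0 : E) 1) := by
        simpa only [ENNReal.coe_one, ENNReal.one_rpow, one_mul] using
          hp.hausdorffMeasure_image_le (Nat.cast_nonneg _) (sphere (0 : E) 1)

theorem toSphere_map_closedBall_eq {x y : E} (h : ‖x‖ = ‖y‖) (r : ℝ) :
    (volume : Measure E).toSphere.map Subtype.val (closedBall x r) =
      (volume : Measure E).toSphere.map Subtype.val (closedBall y r) := by
  have hball : ∀ z : E, (volume : Measure E).toSphere.map Subtype.val (closedBall z r) =
      finrank ℝ E * volume (Set.Ioo (0 : ℝ) 1 • (closedBall z r ∩ sphere 0 1)) := fun z => by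
    rw [Measure.map_apply measurable_subtype_coe measurableSet_closedBall,
      Measure.toSphere_apply' _ (measurable_subtype_coe measurableSet_closedBall),
      Subtype.image_preimage_coe, Set.inter_comm]
  obtain ⟨g, rfl⟩ := exists_linearIsometryEquiv_apply_eq h
  have hcone : Set.Ioo (0 : ℝ) 1 • g '' (closedBall x r ∩ sphere 0 1) =
      g '' (Set.Ioo (0 : ℝ) 1 • (closedBall x r ∩ sphere 0 1)) := by
    simp only [← Set.image2_smul, Set.image_image2, Set.image2_image_right, map_smul]
  have hpre : ∀ s : Set E, volume (g '' s) = volume s := fun s => by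
    rw [show g '' s = g.symm ⁻¹' s from g.toEquiv.image_eq_preimage_symm s]
    exact g.symm.measurePreserving.measure_preimage_equiv (f := g.symm.toMeasurableEquiv) s
  rw [hball, hball, ← image_closedBall_inter_unitSphere g, hcone, hpre]

theorem exists_hausdorffMeasure_restrict_sphere_eq_smul [Nontrivial E] :
    ∃ c : ℝ≥0∞, c ≠ 0 ∧ c ≠ ∞ ∧ (μH[(finrank ℝ E : ℝ) - 1]).restrict (sphere (0 : E) 1) =
      c • (volume : Measure E).toSphere.map Subtype.val := by
  have : IsFiniteMeasure ((μH[(finrank ℝ E : ℝ) - 1]).restrict (sphere (0 : E) 1)) :=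
    isFiniteMeasure_restrict.2 hausdorffMeasure_unitSphere_lt_top.ne
  have : NeZero ((μH[(finrank ℝ E : ℝ) - 1]).restrict (sphere (0 : E) 1)) :=
    ⟨fun h => hausdorffMeasure_unitSphere_pos.ne' (Measure.restrict_eq_zero.1 h)⟩
  have : NeZero ((volume : Measure E).toSphere.map Subtype.val) :=
    ⟨fun h => Measure.toSphere_ne_zero _ ((Measure.map_eq_zero_iff
      measurable_subtype_coe.aemeasurable).1 h)⟩
  have hnorm : ∀ {x y : E}, x ∈ sphere (0 : E) 1 → y ∈ sphere (0 : E) 1 → ‖x‖ = ‖y‖ :=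
    fun hx hy => (mem_sphere_zero_iff_norm.1 hx).trans (mem_sphere_zero_iff_norm.1 hy).symm
  refine exists_smul_eq_smul_of_measure_closedBall_eq (s := sphere (0 : E) 1)
    (ae_restrict_mem isClosed_sphere.measurableSet) ?_
    (fun x hx y hy r => hausdorffMeasure_restrict_sphere_closedBall_eq (hnorm hx hy) _ r)
    fun x hx y hy r => toSphere_map_closedBall_eq (hnorm hx hy) r
  exact (ae_map_iff measurable_subtype_coe.aemeasurable isClosed_sphere.measurableSet).2
    (ae_of_all _ fun x => x.2)

end SphereMeasure

section SphericalMeans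

open Module Set
open scoped Pointwise

variable {E F : Type*} [NormedAddCommGroup E] [InnerProductSpace ℝ E] [FiniteDimensional ℝ E]
  [MeasurableSpace E] [BorelSpace E]
  [NormedAddCommGroup F] [NormedSpace ℝ F]

/-- The unnormalised spherical mean of `f` at radius `ρ`: the integral of `f (ρ θ)` over unit
vectors `θ`, for the measure of polar coordinates. -/
def sphMean (f : E → F) (ρ : ℝ) : F :=
  ∫ θ : sphere (0 : E) 1, f (ρ • (θ : E)) ∂(volume : Measure E).toSphere

theorem hausdorffMeasure_restrict_sphere_eq_smul_map [Nontrivial E] {ρ : ℝ} (hρ : 0 < ρ) :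
    (μH[(finrank ℝ E : ℝ) - 1]).restrict (sphere (0 : E) ρ) =
      ENNReal.ofReal (ρ ^ (finrank ℝ E - 1)) •
        ((μH[(finrank ℝ E : ℝ) - 1]).restrict (sphere (0 : E) 1)).map (ρ • ·) := by
  have hdim : ((finrank ℝ E - 1 : ℕ) : ℝ) = (finrank ℝ E : ℝ) - 1 :=
    Nat.cast_pred finrank_pos
  have hmeas : Measurable (fun x : E => ρ • x) := measurable_const_smul ρ
  ext s hs
  have hscale : s ∩ sphere 0 ρ = ρ • (((fun x : E => ρ • x) ⁻¹' s) ∩ sphere 0 1) := by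
    rw [smul_set_inter₀ hρ.ne', smul_sphere' hρ.ne', smul_zero, mul_one, Real.norm_of_nonneg hρ.le,
      ← image_smul, image_preimage_eq _ (MulAction.surjective₀ hρ.ne')]
  rw [Measure.restrict_apply hs, Measure.smul_apply, Measure.map_apply hmeas hs,
    Measure.restrict_apply (hmeas hs), hscale, ← hdim,
    Measure.hausdorffMeasure_smul₀ (Nat.cast_nonneg _) hρ.ne', NNReal.rpow_natCast,
    ENNReal.smul_def, ENNReal.coe_pow, ENNReal.ofReal_pow hρ.le, ← Real.enorm_of_nonneg hρ.le]
  rfl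

theorem exists_setIntegral_sphere_eq_mul_sphMean [Nontrivial E] :
    ∃ c : ℝ, 0 < c ∧ ∀ ρ > 0, ∀ f : E → F,
      ∫ x in sphere (0 : E) ρ, f x ∂μH[(finrank ℝ E : ℝ) - 1] =
        (c * ρ ^ (finrank ℝ E - 1)) • sphMean f ρ := by
  obtain ⟨c, hc0, hc, h⟩ := exists_hausdorffMeasure_restrict_sphere_eq_smul (E := E)
  refine ⟨c.toReal, ENNReal.toReal_pos hc0 hc, fun ρ hρ f => ?_⟩
  have hmap (μ : Measure E) : ∫ x, f x ∂μ.map (ρ • ·) = ∫ x, f (ρ • x) ∂μ :=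
    (Homeomorph.smulOfNeZero ρ hρ.ne').measurableEmbedding.integral_map f
  rw [hausdorffMeasure_restrict_sphere_eq_smul_map hρ, integral_smul_measure, hmap, h,
    integral_smul_measure,
    (MeasurableEmbedding.subtype_coe isClosed_sphere.measurableSet).integral_map,
    ENNReal.toReal_ofReal (by positivity), smul_smul, mul_comm]
  rfl

theorem integral_eq_integral_Ioi_smul_sphMean [Nontrivial E] {f : E → F} (hf : Integrable f) :
    ∫ x, f x = ∫ ρ in Ioi (0 : ℝ), ρ ^ (finrank ℝ E - 1) • sphMean f ρ := by
  have hemb := MeasurableEmbedding.subtype_coe (measurableSet_singleton (0 : E)).compl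
  let e := (homeomorphUnitSphereProd E).toMeasurableEquiv
  have he : MeasurePreserving e.symm
      ((volume : Measure E).toSphere.prod (Measure.volumeIoiPow (finrank ℝ E - 1)))
      (volume.comap Subtype.val) :=
    (volume : Measure E).measurePreserving_homeomorphUnitSphereProd.symm e
  have hint : Integrable (fun z => f (e.symm z : E))
      ((volume : Measure E).toSphere.prod (Measure.volumeIoiPow (finrank ℝ E - 1))) := by
    refine (he.integrable_comp_emb e.symm.measurableEmbedding).2 (hemb.integrable_map_iff.1 ?_)
    rw [hemb.map_comap]
    exact hf.restrict
  calc ∫ x, f x = ∫ x : ({0}ᶜ : Set E), f x ∂(volume.comap Subtype.val) := by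
        rw [integral_subtype_comap (measurableSet_singleton _).compl f, restrict_compl_singleton]
    _ = ∫ ρ, sphMean f ρ ∂Measure.volumeIoiPow (finrank ℝ E - 1) := by
        rw [← he.integral_comp e.symm.measurableEmbedding, integral_prod_symm _ hint]
        rfl
    _ = ∫ ρ : Ioi (0 : ℝ), (ρ : ℝ) ^ (finrank ℝ E - 1) • sphMean f ρ
          ∂(volume.comap Subtype.val) := by
        rw [Measure.volumeIoiPow,
          integral_withDensity_eq_integral_toReal_smul (by fun_prop) (by simp)]
        refine integral_congr_ae (ae_of_all _ fun ρ => ?_)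
        simp only [ENNReal.toReal_ofReal (pow_nonneg (le_of_lt ρ.2) _)]
    _ = _ := integral_subtype_comap measurableSet_Ioi
          fun ρ : ℝ => ρ ^ (finrank ℝ E - 1) • sphMean f ρ

end SphericalMeans

theorem integrable_of_continuousOn_of_eq_zero {E F : Type*} [TopologicalSpace E] [T2Space E]
    [MeasurableSpace E] [BorelSpace E] {μ : Measure E} [IsFiniteMeasureOnCompacts μ]
    [NormedAddCommGroup F] {K : Set E} {f : E → F} (hK : IsCompact K) (hf : ContinuousOn f K)
    (h0 : ∀ x ∉ K, f x = 0) : Integrable f μ :=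
  (integrableOn_iff_integrable_of_support_subset fun _ hx => by_contra fun h => hx (h0 _ h)).1
    (hf.integrableOn_compact hK)

section TestFunctions

open Set

variable {E F : Type*} [NormedAddCommGroup E] [NormedSpace ℝ E] [NormedAddCommGroup F]
  [NormedSpace ℝ F] {U : Set E} {ψ : E → ℝ}

/-- A test function on `U`, only of class `C¹` so that products with `C¹` coefficients are again
test functions. -/
structure IsTestFunction (U : Set E) (ψ : E → ℝ) : Prop where
  contDiff : ContDiff ℝ 1 ψ
  hasCompactSupport : HasCompactSupport ψ
  tsupport_subset : tsupport ψ ⊆ U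

theorem contDiff_smul_of_contDiffOn_tsupport (hψ : ContDiff ℝ 1 ψ) (hU : IsOpen U)
    (hψU : tsupport ψ ⊆ U) {f : E → F} (hf : ContDiffOn ℝ 1 f U) :
    ContDiff ℝ 1 fun x => ψ x • f x := by
  refine contDiff_iff_contDiffAt.2 fun x => ?_
  by_cases hx : x ∈ tsupport ψ
  · exact hψ.contDiffAt.smul (hf.contDiffAt (hU.mem_nhds (hψU hx)))
  · refine (contDiffAt_const (c := (0 : F))).congr_of_eventuallyEq ?_
    filter_upwards [notMem_tsupport_iff_eventuallyEq.1 hx] with y hy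
    rw [hy, Pi.zero_apply, zero_smul]

theorem fderiv_eq_zero_of_notMem_tsupport {f : E → F} {x : E} (hx : x ∉ tsupport f) :
    fderiv ℝ f x = 0 :=
  Function.notMem_support.1 fun h => hx (support_fderiv_subset ℝ h)

namespace IsTestFunction

theorem differentiableAt (hψ : IsTestFunction U ψ) (x : E) : DifferentiableAt ℝ ψ x :=
  hψ.contDiff.differentiable one_ne_zero x

theorem continuous (hψ : IsTestFunction U ψ) : Continuous ψ := hψ.contDiff.continuous

theorem continuous_fderiv (hψ : IsTestFunction U ψ) : Continuous (fderiv ℝ ψ) :=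
  hψ.contDiff.continuous_fderiv one_ne_zero

theorem mono {V : Set E} (hψ : IsTestFunction U ψ) (h : tsupport ψ ⊆ V) : IsTestFunction V ψ :=
  ⟨hψ.contDiff, hψ.hasCompactSupport, h⟩

theorem add {φ : E → ℝ} (hψ : IsTestFunction U ψ) (hφ : IsTestFunction U φ) :
    IsTestFunction U fun x => ψ x + φ x :=
  ⟨hψ.contDiff.add hφ.contDiff, hψ.hasCompactSupport.add hφ.hasCompactSupport,
    (tsupport_add _ _).trans (union_subset hψ.tsupport_subset hφ.tsupport_subset)⟩

theorem sub {φ : E → ℝ} (hψ : IsTestFunction U ψ) (hφ : IsTestFunction U φ) :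
    IsTestFunction U fun x => ψ x - φ x :=
  ⟨hψ.contDiff.sub hφ.contDiff, hψ.hasCompactSupport.sub hφ.hasCompactSupport,
    (tsupport_sub _ _).trans (union_subset hψ.tsupport_subset hφ.tsupport_subset)⟩

theorem mul (hψ : IsTestFunction U ψ) (hU : IsOpen U) {f : E → ℝ} (hf : ContDiffOn ℝ 1 f U) :
    IsTestFunction U fun x => ψ x * f x :=
  ⟨contDiff_smul_of_contDiffOn_tsupport hψ.contDiff hU hψ.tsupport_subset hf,
    hψ.hasCompactSupport.mul_right, tsupport_mul_subset_left.trans hψ.tsupport_subset⟩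

theorem exists_eq_one [FiniteDimensional ℝ E] (hψ : IsTestFunction U ψ) (hU : IsOpen U) :
    ∃ χ, IsTestFunction U χ ∧ ∀ x ∈ tsupport ψ, χ x = 1 := by
  obtain ⟨L, hL, hψL, hLU⟩ := exists_compact_between hψ.hasCompactSupport.isCompact hU
    hψ.tsupport_subset
  obtain ⟨χ, hone, hzero, -⟩ := exists_contMDiffMap_one_nhds_of_subset_interior
    (modelWithCornersSelf ℝ E) (n := 1) (isClosed_tsupport ψ) hψL
  have hsupp : tsupport χ ⊆ L :=
    closure_minimal (fun x hx => by_contra fun h => hx (hzero x h)) hL.isClosed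
  exact ⟨χ, ⟨χ.contMDiff.contDiff, hL.of_isClosed_subset (isClosed_tsupport _) hsupp,
    hsupp.trans hLU⟩, hone.self_of_nhdsSet⟩

variable [MeasurableSpace E] {μ : Measure E}

theorem integral_mul_congr (hψ : IsTestFunction U ψ) {f g : E → ℝ} (h : ∀ x ∈ U, f x = g x) :
    ∫ x, ψ x * f x ∂μ = ∫ x, ψ x * g x ∂μ := by
  congr with x
  by_cases hx : x ∈ tsupport ψ
  · rw [h x (hψ.tsupport_subset hx)]
  · rw [image_eq_zero_of_notMem_tsupport hx, zero_mul, zero_mul]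

variable [BorelSpace E] [IsFiniteMeasureOnCompacts μ]

theorem integrable_mul (hψ : IsTestFunction U ψ) {f : E → ℝ} (hf : ContinuousOn f U) :
    Integrable (fun x => ψ x * f x) μ :=
  integrable_of_continuousOn_of_eq_zero hψ.hasCompactSupport.isCompact
    (hψ.continuous.continuousOn.mul (hf.mono hψ.tsupport_subset))
    fun x hx => by rw [image_eq_zero_of_notMem_tsupport hx, zero_mul]

theorem integrable_fderiv_apply (hψ : IsTestFunction U ψ) {X : E → E} (hX : ContinuousOn X U) :
    Integrable (fun x => fderiv ℝ ψ x (X x)) μ :=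
  integrable_of_continuousOn_of_eq_zero hψ.hasCompactSupport.isCompact
    (hψ.continuous_fderiv.continuousOn.clm_apply (hX.mono hψ.tsupport_subset))
    fun x hx => by rw [fderiv_eq_zero_of_notMem_tsupport hx, zero_apply]

theorem integrable_fderiv_apply_add_mul (hψ : IsTestFunction U ψ) {X : E → E} {b : E → ℝ}
    (hX : ContinuousOn X U) (hb : ContinuousOn b U) :
    Integrable (fun x => fderiv ℝ ψ x (X x) + ψ x * b x) μ :=
  (hψ.integrable_fderiv_apply hX).add (hψ.integrable_mul hb)

theorem integral_add_eq {φ : E → ℝ} (hψ : IsTestFunction U ψ) (hφ : IsTestFunction U φ)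
    {X : E → E} {b : E → ℝ} (hX : ContinuousOn X U) (hb : ContinuousOn b U) :
    ∫ x, (fderiv ℝ (fun y => ψ y + φ y) x (X x) + (ψ x + φ x) * b x) ∂μ =
      ∫ x, (fderiv ℝ ψ x (X x) + ψ x * b x) ∂μ + ∫ x, (fderiv ℝ φ x (X x) + φ x * b x) ∂μ := by
  rw [← integral_add (hψ.integrable_fderiv_apply_add_mul hX hb)
    (hφ.integrable_fderiv_apply_add_mul hX hb)]
  congr with x
  rw [fderiv_fun_add (hψ.differentiableAt x) (hφ.differentiableAt x), add_apply]
  ring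

end IsTestFunction

end TestFunctions

section Divergence

variable {E : Type*} [NormedAddCommGroup E] [NormedSpace ℝ E] {X Y : E → E} {x : E}

/-- The divergence of a vector field, as the trace of its derivative. -/
def divergence (X : E → E) (x : E) : ℝ := LinearMap.trace ℝ E (fderiv ℝ X x)

theorem divergence_sub (hX : DifferentiableAt ℝ X x) (hY : DifferentiableAt ℝ Y x) :
    divergence (fun y => X y - Y y) x = divergence X x - divergence Y x := by
  rw [divergence, fderiv_fun_sub hX hY, ContinuousLinearMap.toLinearMap_sub, map_sub]
  rfl

theorem divergence_smul [FiniteDimensional ℝ E] {f : E → ℝ} (hf : DifferentiableAt ℝ f x)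
    (hX : DifferentiableAt ℝ X x) :
    divergence (fun y => f y • X y) x = f x * divergence X x + fderiv ℝ f x (X x) := by
  rw [divergence, fderiv_fun_smul hf hX, ContinuousLinearMap.toLinearMap_add, map_add,
    ContinuousLinearMap.toLinearMap_smul, map_smul]
  exact congrArg (_ + ·) (LinearMap.trace_smulRight (fderiv ℝ f x : E →ₗ[ℝ] ℝ) (X x))

theorem divergence_eq_deriv (f : ℝ → ℝ) (x : ℝ) : divergence f x = deriv f x := by
  have h : (fderiv ℝ f x : ℝ →ₗ[ℝ] ℝ) =
      (LinearMap.id : ℝ →ₗ[ℝ] ℝ).smulRight (deriv f x) := by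
    ext
    simp
  rw [divergence, h, LinearMap.trace_smulRight, LinearMap.id_apply]

variable [FiniteDimensional ℝ E]

theorem continuousOn_divergence {U : Set E} (hU : IsOpen U) (hX : ContDiffOn ℝ 1 X U) :
    ContinuousOn (divergence X) U :=
  (((LinearMap.trace ℝ E).comp (ContinuousLinearMap.coeLM ℝ)).continuous_of_finiteDimensional
    ).comp_continuousOn (hX.continuousOn_fderiv_of_isOpen hU le_rfl)

theorem integral_divergence_eq_zero [MeasurableSpace E] [BorelSpace E] {μ : Measure E}
    [μ.IsAddHaarMeasure] (hX : ContDiff ℝ 1 X) (hXc : HasCompactSupport X) :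
    ∫ x, divergence X x ∂μ = 0 := by
  have hint : Integrable (fderiv ℝ X) μ :=
    (hX.continuous_fderiv one_ne_zero).integrable_of_hasCompactSupport (hXc.fderiv ℝ)
  have hzero : ∫ x, fderiv ℝ X x ∂μ = 0 := by
    ext v
    rw [ContinuousLinearMap.integral_apply hint]
    simpa using integral_smul_fderiv_eq_neg_fderiv_smul_of_integrable (μ := μ) (v := v)
      (f := fun _ => (1 : ℝ)) (g := X) (by simp) (by simpa using hint.apply_continuousLinearMap v)
      (by simpa using hX.continuous.integrable_of_hasCompactSupport hXc)
      (fun _ _ => by fun_prop) fun x _ => hX.differentiable one_ne_zero x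
  let T : (E →L[ℝ] E) →L[ℝ] ℝ := LinearMap.toContinuousLinearMap
    ((LinearMap.trace ℝ E).comp (ContinuousLinearMap.coeLM ℝ))
  exact (T.integral_comp_comm hint).trans (by rw [hzero, map_zero])

end Divergence

section WeakDivergence

variable {E : Type*} [NormedAddCommGroup E] [NormedSpace ℝ E] [MeasurableSpace E]
  {μ : Measure E} {U : Set E} {X Y : E → E} {b c : E → ℝ}

/-- The continuous vector field `X` has the continuous function `b` as its divergence on `U`, in
the sense of distributions. -/
structure HasWeakDivOn (μ : Measure E) (U : Set E) (X : E → E) (b : E → ℝ) : Prop where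
  continuousOn : ContinuousOn X U
  continuousOn_div : ContinuousOn b U
  integral_eq_zero : ∀ ψ, IsTestFunction U ψ → ∫ x, (fderiv ℝ ψ x (X x) + ψ x * b x) ∂μ = 0

namespace HasWeakDivOn

theorem congr (h : HasWeakDivOn μ U X b) (hXY : ∀ x ∈ U, Y x = X x) (hbc : ∀ x ∈ U, c x = b x) :
    HasWeakDivOn μ U Y c where
  continuousOn := h.continuousOn.congr hXY
  continuousOn_div := h.continuousOn_div.congr hbc
  integral_eq_zero ψ hψ := by
    rw [← h.integral_eq_zero ψ hψ]
    congr with x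
    by_cases hx : x ∈ tsupport ψ
    · rw [hXY x (hψ.tsupport_subset hx), hbc x (hψ.tsupport_subset hx)]
    · rw [fderiv_eq_zero_of_notMem_tsupport hx, image_eq_zero_of_notMem_tsupport hx, zero_apply,
        zero_apply, zero_mul, zero_mul]

theorem mono {V : Set E} (h : HasWeakDivOn μ U X b) (hVU : V ⊆ U) : HasWeakDivOn μ V X b :=
  ⟨h.continuousOn.mono hVU, h.continuousOn_div.mono hVU,
    fun ψ hψ => h.integral_eq_zero ψ (hψ.mono (hψ.tsupport_subset.trans hVU))⟩

theorem const_smul (h : HasWeakDivOn μ U X b) (a : ℝ) :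
    HasWeakDivOn μ U (fun x => a • X x) fun x => a * b x where
  continuousOn := h.continuousOn.const_smul a
  continuousOn_div := h.continuousOn_div.const_mul a
  integral_eq_zero ψ hψ := by
    simp only [map_smul, smul_eq_mul, mul_left_comm _ a, ← mul_add, integral_const_mul,
      h.integral_eq_zero ψ hψ, mul_zero]

/-- For a test function `ψ`, test `X` with `ψ f`. -/
theorem smul (hU : IsOpen U) {f : E → ℝ} (hf : ContDiffOn ℝ 1 f U) (h : HasWeakDivOn μ U X b) :
    HasWeakDivOn μ U (fun x => f x • X x) fun x => f x * b x + fderiv ℝ f x (X x) where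
  continuousOn := hf.continuousOn.smul h.continuousOn
  continuousOn_div := (hf.continuousOn.mul h.continuousOn_div).add
    ((hf.continuousOn_fderiv_of_isOpen hU le_rfl).clm_apply h.continuousOn)
  integral_eq_zero ψ hψ := by
    rw [← h.integral_eq_zero _ (hψ.mul hU hf)]
    congr with x
    by_cases hx : x ∈ tsupport ψ
    · have hfx : DifferentiableAt ℝ f x := (hf.differentiableOn one_ne_zero).differentiableAt
        (hU.mem_nhds (hψ.tsupport_subset hx))
      simp only [fderiv_fun_mul (hψ.differentiableAt x) hfx, map_smul, add_apply, smul_apply,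
        smul_eq_mul]
      ring
    · rw [fderiv_eq_zero_of_notMem_tsupport (f := fun y => ψ y * f y)
        (fun h => hx (tsupport_mul_subset_left h)), fderiv_eq_zero_of_notMem_tsupport hx,
        image_eq_zero_of_notMem_tsupport hx]
      simp

theorem of_contDiffOn [BorelSpace E] [FiniteDimensional ℝ E] [μ.IsAddHaarMeasure]
    (hU : IsOpen U) (hX : ContDiffOn ℝ 1 X U) : HasWeakDivOn μ U X (divergence X) where
  continuousOn := hX.continuousOn
  continuousOn_div := continuousOn_divergence hU hX
  integral_eq_zero ψ hψ := by
    rw [← integral_divergence_eq_zero (μ := μ) (contDiff_smul_of_contDiffOn_tsupport hψ.contDiff hU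
      hψ.tsupport_subset hX) hψ.hasCompactSupport.smul_right]
    congr with x
    by_cases hx : x ∈ tsupport ψ
    · rw [divergence_smul (hψ.differentiableAt x) ((hX.differentiableOn one_ne_zero
        ).differentiableAt (hU.mem_nhds (hψ.tsupport_subset hx))), add_comm]
    · rw [image_eq_zero_of_notMem_tsupport hx, fderiv_eq_zero_of_notMem_tsupport hx, divergence,
        divergence, fderiv_eq_zero_of_notMem_tsupport (f := fun y => ψ y • X y)
        (fun h => hx (tsupport_smul_subset_left ψ X h))]
      simp

variable [BorelSpace E] [IsFiniteMeasureOnCompacts μ]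

theorem add (hX : HasWeakDivOn μ U X b) (hY : HasWeakDivOn μ U Y c) :
    HasWeakDivOn μ U (fun x => X x + Y x) fun x => b x + c x where
  continuousOn := hX.continuousOn.add hY.continuousOn
  continuousOn_div := hX.continuousOn_div.add hY.continuousOn_div
  integral_eq_zero ψ hψ := by
    simp only [map_add, mul_add, add_add_add_comm]
    rw [integral_add (hψ.integrable_fderiv_apply_add_mul hX.continuousOn hX.continuousOn_div)
      (hψ.integrable_fderiv_apply_add_mul hY.continuousOn hY.continuousOn_div),
      hX.integral_eq_zero ψ hψ, hY.integral_eq_zero ψ hψ, add_zero]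

/-- The equation tested with `f φ`, arranged as an integration by parts against `f X`. -/
theorem integral_mul_fderiv_add_eq_zero (hU : IsOpen U) {φ : E → ℝ} (hφ : ContDiffOn ℝ 1 φ U)
    (h : HasWeakDivOn μ U X b) {f : E → ℝ} (hf : IsTestFunction U f) :
    ∫ x, f x * fderiv ℝ φ x (X x) ∂μ +
      ∫ x in tsupport f, (f x * b x + fderiv ℝ f x (X x)) * φ x ∂μ = 0 := by
  have hint : Integrable (fun x => f x * fderiv ℝ φ x (X x)) μ :=
    hf.integrable_mul ((hφ.continuousOn_fderiv_of_isOpen hU le_rfl).clm_apply h.continuousOn)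
  have hint' : Integrable (fun x => (f x * b x + fderiv ℝ f x (X x)) * φ x) μ := by
    refine (hf.integrable_fderiv_apply_add_mul (h.smul hU hφ).continuousOn
      (h.continuousOn_div.mul hφ.continuousOn)).congr (ae_of_all _ fun x => ?_)
    simp only [map_smul, smul_eq_mul, Pi.mul_apply]
    ring
  rw [setIntegral_eq_integral_of_forall_compl_eq_zero fun x hx => by
    rw [fderiv_eq_zero_of_notMem_tsupport hx, image_eq_zero_of_notMem_tsupport hx]; simp,
    ← integral_add hint hint', ← (h.smul hU hφ).integral_eq_zero f hf]
  congr with x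
  simp only [map_smul, smul_eq_mul]
  ring

theorem sub (hX : HasWeakDivOn μ U X b) (hY : HasWeakDivOn μ U Y c) :
    HasWeakDivOn μ U (fun x => X x - Y x) fun x => b x - c x :=
  (hX.add (hY.const_smul (-1))).congr (fun x _ => by module) fun x _ => by ring

theorem sum {ι : Type*} {s : Finset ι} {X : ι → E → E} {b : ι → E → ℝ}
    (h : ∀ i ∈ s, HasWeakDivOn μ U (X i) (b i)) :
    HasWeakDivOn μ U (fun x => ∑ i ∈ s, X i x) fun x => ∑ i ∈ s, b i x where
  continuousOn := continuousOn_finsetSum s fun i hi => (h i hi).continuousOn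
  continuousOn_div := continuousOn_finsetSum s fun i hi => (h i hi).continuousOn_div
  integral_eq_zero ψ hψ := by
    simp only [map_sum, Finset.mul_sum, ← Finset.sum_add_distrib]
    rw [integral_finsetSum _ fun i hi => hψ.integrable_fderiv_apply_add_mul (h i hi).continuousOn
      (h i hi).continuousOn_div]
    exact Finset.sum_eq_zero fun i hi => (h i hi).integral_eq_zero ψ hψ

/-- With a cutoff `χ = 1` on the support of `ψ`, write `4ψ = (χ + ψ)² - (χ - ψ)²`. -/
theorem of_forall_nonneg [FiniteDimensional ℝ E] (hU : IsOpen U) (hX : ContinuousOn X U)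
    (hb : ContinuousOn b U) (h : ∀ ψ, IsTestFunction U ψ → (∀ x, 0 ≤ ψ x) →
      ∫ x, (fderiv ℝ ψ x (X x) + ψ x * b x) ∂μ = 0) : HasWeakDivOn μ U X b := by
  refine ⟨hX, hb, fun ψ hψ => ?_⟩
  obtain ⟨χ, hχ, hone⟩ := hψ.exists_eq_one hU
  have hmul (a : ℝ) : IsTestFunction U fun x => ψ x * a := hψ.mul hU contDiffOn_const
  have hsq {φ : E → ℝ} (hφ : IsTestFunction U φ) : IsTestFunction U fun x => φ x * φ x :=
    hφ.mul hU hφ.contDiff.contDiffOn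
  have hminus := hsq (hχ.add (hmul (-1)))
  have hnonneg (x : E) :
      0 ≤ (χ x + ψ x * (-1)) * (χ x + ψ x * (-1)) + ψ x * 4 := by
    by_cases hx : x ∈ tsupport ψ
    · rw [hone x hx]
      nlinarith [mul_self_nonneg (1 + ψ x)]
    · rw [image_eq_zero_of_notMem_tsupport hx]
      nlinarith [mul_self_nonneg (χ x)]
  have hzero : ∫ x, (fderiv ℝ (fun x => ψ x * 4) x (X x) + ψ x * 4 * b x) ∂μ = 0 := by
    rw [← h _ (hminus.add (hmul 4)) hnonneg, hminus.integral_add_eq (hmul 4) hX hb,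
      h _ hminus fun x => mul_self_nonneg _, zero_add]
  have hfour : ∫ x, (fderiv ℝ ψ x (X x) + ψ x * b x) * 4 ∂μ = 0 := by
    rw [← hzero]
    congr with x
    rw [fderiv_mul_const (hψ.differentiableAt x), smul_apply, smul_eq_mul]
    ring
  rw [integral_mul_const] at hfour
  linarith

end HasWeakDivOn

end WeakDivergence

section SmoothTestFunctions

open Set
open scoped ContDiff

variable {E : Type*} [NormedAddCommGroup E] [NormedSpace ℝ E]
  [MeasurableSpace E] [BorelSpace E] {μ : Measure E} {U : Set E} {φ ψ : E → ℝ} {ε : ℝ}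
  {X : E → E} {b : E → ℝ}

theorem abs_integral_fderiv_apply_add_mul_le [IsFiniteMeasureOnCompacts μ] {K : Set E}
    (hK : IsCompact K) (hX : ContinuousOn X K) (hb : ContinuousOn b K) (hψK : tsupport ψ ⊆ K)
    (hψ : ∀ x, |ψ x| ≤ ε) (hψ' : ∀ x, ‖fderiv ℝ ψ x‖ ≤ ε) :
    |∫ x, (fderiv ℝ ψ x (X x) + ψ x * b x) ∂μ| ≤ ε * ∫ x in K, (‖X x‖ + |b x|) ∂μ := by
  have hzero (x : E) (hx : x ∉ K) : fderiv ℝ ψ x (X x) + ψ x * b x = 0 := by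
    have hx' : x ∉ tsupport ψ := fun h => hx (hψK h)
    rw [fderiv_eq_zero_of_notMem_tsupport hx', image_eq_zero_of_notMem_tsupport hx', zero_apply,
      zero_mul, add_zero]
  rw [← setIntegral_eq_integral_of_forall_compl_eq_zero hzero, ← integral_const_mul,
    ← Real.norm_eq_abs]
  refine norm_integral_le_of_norm_le (((hX.norm.add hb.abs).integrableOn_compact hK).const_mul ε)
    (ae_of_all _ fun x => (norm_add_le _ _).trans ?_)
  rw [mul_add, norm_mul]
  exact add_le_add (((fderiv ℝ ψ x).le_opNorm _).trans (by gcongr; exact hψ' x))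
    (mul_le_mul_of_nonneg_right (hψ x) (abs_nonneg _))

variable [FiniteDimensional ℝ E]

/-- The mollifications of `φ` converge to `φ` in `C¹`, since convolution commutes with the
derivative. -/
theorem exists_contDiff_C1_approx (hφ : ContDiff ℝ 1 φ) (hc : HasCompactSupport φ) {r : ℝ}
    (hr : 0 < r) (hε : 0 < ε) :
    ∃ ψ : E → ℝ, ContDiff ℝ ∞ ψ ∧ tsupport ψ ⊆ cthickening r (tsupport φ) ∧
      ∀ x, |φ x - ψ x| ≤ ε ∧ ‖fderiv ℝ φ x - fderiv ℝ ψ x‖ ≤ ε := by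
  let ν : Measure E := Measure.addHaar
  have hφ' : Continuous (fderiv ℝ φ) := hφ.continuous_fderiv one_ne_zero
  obtain ⟨s, hs, hφs⟩ := Metric.uniformContinuous_iff.1
    (hc.uniformContinuous_of_continuous hφ.continuous) ε hε
  obtain ⟨t, ht, hφ't⟩ := Metric.uniformContinuous_iff.1
    ((hc.fderiv ℝ).uniformContinuous_of_continuous hφ') ε hε
  have hR : 0 < min r (min s t) := lt_min hr (lt_min hs ht)
  let η : ContDiffBump (0 : E) := ⟨min r (min s t) / 2, min r (min s t), half_pos hR,
    half_lt_self hR⟩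
  refine ⟨convolution (η.normed ν) φ (ContinuousLinearMap.lsmul ℝ ℝ) ν,
    η.hasCompactSupport_normed.contDiff_convolution_left _ η.contDiff_normed
      hφ.continuous.locallyIntegrable, ?_, fun x => ⟨?_, ?_⟩⟩
  · refine closure_minimal ((support_convolution_subset _).trans ?_) isClosed_cthickening
    rw [η.support_normed_eq]
    rintro _ ⟨y, hy, z, hz, rfl⟩
    refine thickening_subset_cthickening _ _ (mem_thickening_iff.2 ⟨z, subset_tsupport _ hz, ?_⟩)
    rw [dist_eq_norm, add_sub_cancel_right]
    exact (mem_ball_zero_iff.1 hy).trans_le (min_le_left _ _)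
  · rw [← Real.dist_eq, dist_comm]
    exact η.dist_normed_convolution_le hφ.continuous.aestronglyMeasurable fun y hy =>
      (hφs (hy.trans_le ((min_le_right _ _).trans (min_le_left _ _)))).le
  · have hconv := hc.hasFDerivAt_convolution_right (μ := ν) (ContinuousLinearMap.lsmul ℝ ℝ)
      (η.continuous_normed (μ := ν)).locallyIntegrable hφ x
    have hsmul : (ContinuousLinearMap.lsmul ℝ ℝ).precompR E =
        (ContinuousLinearMap.lsmul ℝ ℝ : ℝ →L[ℝ] (E →L[ℝ] ℝ) →L[ℝ] (E →L[ℝ] ℝ)) := by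
      ext; simp
    rw [hconv.fderiv, hsmul, ← dist_eq_norm, dist_comm]
    exact η.dist_normed_convolution_le hφ'.aestronglyMeasurable fun y hy =>
      (hφ't (hy.trans_le ((min_le_right _ _).trans (min_le_right _ _)))).le

theorem HasWeakDivOn.of_forall_contDiff [IsFiniteMeasureOnCompacts μ] (hU : IsOpen U)
    (hX : ContinuousOn X U) (hb : ContinuousOn b U)
    (h : ∀ ψ : E → ℝ, ContDiff ℝ ∞ ψ → HasCompactSupport ψ → tsupport ψ ⊆ U →
      ∫ x, (fderiv ℝ ψ x (X x) + ψ x * b x) ∂μ = 0) : HasWeakDivOn μ U X b := by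
  refine ⟨hX, hb, fun φ hφ => ?_⟩
  obtain ⟨r, hr, hrU⟩ := hφ.hasCompactSupport.isCompact.exists_cthickening_subset_open hU
    hφ.tsupport_subset
  set K := cthickening r (tsupport φ)
  have hK : IsCompact K := hφ.hasCompactSupport.isCompact.cthickening
  have hbound (ε : ℝ) (hε : 0 < ε) :
      |∫ x, (fderiv ℝ φ x (X x) + φ x * b x) ∂μ| ≤ ε * ∫ x in K, (‖X x‖ + |b x|) ∂μ := by
    obtain ⟨ψ, hψ, hψK, happrox⟩ :=
      exists_contDiff_C1_approx hφ.contDiff hφ.hasCompactSupport hr hε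
    have hψc : HasCompactSupport ψ := hK.of_isClosed_subset (isClosed_tsupport _) hψK
    have hψU : IsTestFunction U ψ := ⟨hψ.of_le (by exact_mod_cast le_top), hψc, hψK.trans hrU⟩
    have hsub := hφ.sub hψU
    have hsum := hψU.integral_add_eq (μ := μ) hsub hX hb
    simp only [add_sub_cancel, h ψ hψ hψc (hψK.trans hrU), zero_add] at hsum
    rw [hsum]
    refine abs_integral_fderiv_apply_add_mul_le hK (hX.mono hrU) (hb.mono hrU)
      ((tsupport_sub _ _).trans (union_subset (self_subset_cthickening _) hψK))
      (fun x => (happrox x).1) fun x => ?_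
    rw [fderiv_fun_sub (hφ.differentiableAt x) (hψU.differentiableAt x)]
    exact (happrox x).2
  refine abs_eq_zero.1 ((abs_nonneg _).antisymm' (le_of_forall_pos_le_add fun ε hε => ?_))
  have : 0 ≤ ∫ x in K, (‖X x‖ + |b x|) ∂μ := integral_nonneg fun _ => by positivity
  refine (hbound (ε / ((∫ x in K, (‖X x‖ + |b x|) ∂μ) + 1)) (by positivity)).trans ?_
  rw [zero_add, div_mul_eq_mul_div, div_le_iff₀ (by positivity)]
  nlinarith

end SmoothTestFunctions

section Translation

open Set
open scoped Topology

variable {E F : Type*} [NormedAddCommGroup E] [NormedSpace ℝ E] [FiniteDimensional ℝ E]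
  [NormedAddCommGroup F] [NormedSpace ℝ F] {U K : Set E}

theorem exists_add_smul_mem_of_isCompact (hU : IsOpen U) (hK : IsCompact K) (hKU : K ⊆ U)
    (v : E) : ∃ K' ⊆ U, IsCompact K' ∧ ∃ s ∈ 𝓝 (0 : ℝ), ∀ t ∈ s, ∀ x ∈ K, x + t • v ∈ K' := by
  obtain ⟨r, hr, hrU⟩ := hK.exists_cthickening_subset_open hU hKU
  refine ⟨cthickening r K, hrU, hK.cthickening, (fun t : ℝ => ‖t • v‖) ⁻¹' Iio r,
    (isOpen_Iio.preimage (by fun_prop)).mem_nhds (by simpa using hr), fun t ht x hx => ?_⟩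
  refine mem_cthickening_of_dist_le _ x _ _ hx ?_
  rw [dist_eq_norm, add_sub_cancel_left]
  exact (mem_preimage.1 ht).le

theorem hasDerivAt_setIntegral_translate [MeasurableSpace E] [BorelSpace E] {μ : Measure E}
    [IsFiniteMeasureOnCompacts μ] (hU : IsOpen U) (hK : IsCompact K) (hKU : K ⊆ U)
    {f : E → F} (hf : ContDiffOn ℝ 1 f U) {L : E → F →L[ℝ] ℝ} (hL : ContinuousOn L K) (v : E) :
    HasDerivAt (fun t : ℝ => ∫ x in K, L x (f (x + t • v)) ∂μ)
      (∫ x in K, L x (fderiv ℝ f x v) ∂μ) 0 := by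
  obtain ⟨K', hK'U, hK', s, hs, hmem⟩ := exists_add_smul_mem_of_isCompact hU hK hKU v
  have hf' : ContinuousOn (fderiv ℝ f) U := hf.continuousOn_fderiv_of_isOpen hU le_rfl
  obtain ⟨B, hB⟩ := hK'.exists_bound_of_continuousOn (hf'.mono hK'U)
  obtain ⟨N, hN⟩ := hK.exists_bound_of_continuousOn hL
  have hcont (t : ℝ) (ht : t ∈ s) : ContinuousOn (fun x => L x (f (x + t • v))) K :=
    hL.clm_apply (hf.continuousOn.comp (by fun_prop) fun x hx => hK'U (hmem t ht x hx))
  have hcont' : ContinuousOn (fun x => L x (fderiv ℝ f (x + (0 : ℝ) • v) v)) K := by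
    simp only [zero_smul, add_zero]
    exact hL.clm_apply ((hf'.mono hKU).clm_apply continuousOn_const)
  have hbound (x : E) (hx : x ∈ K) (t : ℝ) (ht : t ∈ s) :
      ‖L x (fderiv ℝ f (x + t • v) v)‖ ≤ N * (B * ‖v‖) := by
    exact (L x).le_of_opNorm_le_of_le (hN x hx)
      ((fderiv ℝ f _).le_of_opNorm_le (hB _ (hmem t ht x hx)) v)
  have hderiv (x : E) (hx : x ∈ K) (t : ℝ) (ht : t ∈ s) :
      HasDerivAt (fun t : ℝ => L x (f (x + t • v))) (L x (fderiv ℝ f (x + t • v) v)) t := by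
    have hfx : HasFDerivAt f (fderiv ℝ f (x + t • v)) (x + t • v) :=
      ((hf.differentiableOn one_ne_zero).differentiableAt
        (hU.mem_nhds (hK'U (hmem t ht x hx)))).hasFDerivAt
    have hline : HasDerivAt (fun t : ℝ => x + t • v) v t := by
      simpa using ((hasDerivAt_id t).smul_const v).const_add x
    exact (L x).hasFDerivAt.comp_hasDerivAt t (hfx.comp_hasDerivAt t hline)
  have : IsFiniteMeasure (μ.restrict K) := ⟨by simpa using hK.measure_lt_top⟩
  have hae := ae_restrict_mem (μ := μ) hK.measurableSet
  simpa only [zero_smul, add_zero] using (hasDerivAt_integral_of_dominated_loc_of_deriv_le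
    (F := fun t x => L x (f (x + t • v))) (F' := fun t x => L x (fderiv ℝ f (x + t • v) v))
    (bound := fun _ => N * (B * ‖v‖)) hs
    (by filter_upwards [hs] with t ht using
      (hcont t ht).aestronglyMeasurable hK.measurableSet)
    ((hcont 0 (mem_of_mem_nhds hs)).integrableOn_compact hK)
    (hcont'.aestronglyMeasurable hK.measurableSet) (by filter_upwards [hae] using hbound)
    (integrable_const _) (by filter_upwards [hae] using hderiv)).2

end Translation

section Rellich

open scoped RealInnerProductSpace

theorem hasDerivAt_integral_clm_translate {E F : Type*} [NormedAddCommGroup E] [NormedSpace ℝ E]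
    [FiniteDimensional ℝ E] [NormedAddCommGroup F] [NormedSpace ℝ F] [MeasurableSpace E]
    [BorelSpace E] {μ : Measure E} [μ.IsAddHaarMeasure] {U : Set E} (hU : IsOpen U) {N : E → F}
    (hN : ContDiff ℝ 1 N) (hNc : HasCompactSupport N) (hNU : tsupport N ⊆ U) {L : E → F →L[ℝ] ℝ}
    (hL : ContinuousOn L U) (v : E) :
    HasDerivAt (fun t : ℝ => ∫ x, L (x + t • v) (N x) ∂μ) (-∫ x, L x (fderiv ℝ N x v) ∂μ) 0 := by
  obtain ⟨K, hKU, hK, s, hs, hmem⟩ := exists_add_smul_mem_of_isCompact hU hNc.isCompact hNU v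
  have hderiv := hasDerivAt_setIntegral_translate (μ := μ) isOpen_univ hK (Set.subset_univ K)
    hN.contDiffOn (hL.mono hKU) (-v)
  have hNK : tsupport N ⊆ K := fun x hx => by
    simpa using hmem 0 (mem_of_mem_nhds hs) x hx
  rw [setIntegral_eq_integral_of_forall_compl_eq_zero fun x hx => by
    rw [fderiv_eq_zero_of_notMem_tsupport fun h => hx (hNK h), zero_apply, map_zero]] at hderiv
  simp only [map_neg, integral_neg] at hderiv
  refine hderiv.congr_of_eventuallyEq ?_
  filter_upwards [hs] with t ht
  rw [setIntegral_eq_integral_of_forall_compl_eq_zero fun x hx => ?_,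
    ← integral_add_right_eq_self (fun x => L x (N (x + t • -v))) (t • v)]
  · simp
  · have hx' : x + t • -v ∉ tsupport N := fun h => hx (by simpa using hmem t ht _ h)
    rw [image_eq_zero_of_notMem_tsupport hx', map_zero]

variable {E : Type*} [NormedAddCommGroup E] [InnerProductSpace ℝ E]

theorem two_mul_inner_le_of_isPositive {T : E →L[ℝ] E} (hT : T.IsPositive) (x y : E) :
    2 * ⟪T x, y⟫ ≤ ⟪T x, x⟫ + ⟪T y, y⟫ := by
  have hpos := hT.inner_nonneg_left (x - y)
  have hsymm : ⟪T y, x⟫ = ⟪T x, y⟫ := (hT.isSymmetric y x).trans (real_inner_comm _ _)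
  simp only [map_sub, inner_sub_left, inner_sub_right, hsymm] at hpos
  linarith

theorem contDiffOn_comp_add_right {U : Set E} {w : E → ℝ} (hw : ContDiffOn ℝ 1 w U) (z : E) :
    ContDiffOn ℝ 1 (fun x => w (x + z)) ((· + z) ⁻¹' U) :=
  hw.comp (by fun_prop) fun _ hx => hx

theorem sum_inner_smul_apply_of_isLinearMap {ι F : Type*} [Fintype ι] [AddCommGroup F] [Module ℝ F]
    (e : OrthonormalBasis ι ℝ E) {g : E → F} (hg : IsLinearMap ℝ g) (y : E) :
    ∑ i, ⟪e i, y⟫ • g (e i) = g y := by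
  have hsum := map_sum (hg.mk' g) (fun i => ⟪e i, y⟫ • e i) Finset.univ
  simpa only [e.sum_repr' y, map_smul, IsLinearMap.mk'_apply] using hsum.symm

variable [MeasurableSpace E] [BorelSpace E] {μ : Measure E} {U : Set E} {Q : E → E →L[ℝ] E}
  {w b : E → ℝ} {p : E → E}

theorem IsTestFunction.hasDerivAt_integral_mul_inner_translate [FiniteDimensional ℝ E]
    [μ.IsAddHaarMeasure] {f : E → ℝ} (hf : IsTestFunction U f) (hU : IsOpen U)
    (hQ : ContDiffOn ℝ 1 Q U) (hp : ContinuousOn p U) (v : E) :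
    HasDerivAt (fun t : ℝ => ∫ x, f x * ⟪Q x (p (x + t • v)), p (x + t • v)⟫ ∂μ)
      (-∫ x, (fderiv ℝ f x (⟪Q x (p x), p x⟫ • v) + f x * ⟪fderiv ℝ Q x v (p x), p x⟫) ∂μ) 0 := by
  let L : E → (E →L[ℝ] E) →L[ℝ] ℝ := fun x =>
    (innerSL ℝ (p x)).comp (ContinuousLinearMap.apply ℝ E (p x))
  have hL : ContinuousOn L U := by fun_prop
  convert hasDerivAt_integral_clm_translate (μ := μ) hU (N := fun x => f x • Q x)
    (contDiff_smul_of_contDiffOn_tsupport hf.contDiff hU hf.tsupport_subset hQ)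
    hf.hasCompactSupport.smul_right ((tsupport_smul_subset_left f Q).trans hf.tsupport_subset)
    hL v using 1
  · simp [L, real_inner_comm]
  · congr with x
    by_cases hx : x ∈ tsupport f
    · have hQx := (hQ.differentiableOn one_ne_zero).differentiableAt
        (hU.mem_nhds (hf.tsupport_subset hx))
      simp only [fderiv_fun_smul (hf.differentiableAt x) hQx, map_smul, smul_eq_mul, L]
      simp [real_inner_smul_right, inner_add_right, real_inner_comm]
      ring
    · rw [fderiv_eq_zero_of_notMem_tsupport (f := fun x => f x • Q x)
        (fun h => hx (tsupport_smul_subset_left f Q h)), fderiv_eq_zero_of_notMem_tsupport hx,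
        image_eq_zero_of_notMem_tsupport hx]
      simp

theorem IsTestFunction.hasDerivAt_setIntegral_mul_translate [FiniteDimensional ℝ E]
    [IsFiniteMeasureOnCompacts μ] {f : E → ℝ} (hf : IsTestFunction U f) (hU : IsOpen U)
    {X : E → E} (hX : ContinuousOn X U) (hb : ContinuousOn b U) (hw : ContDiffOn ℝ 1 w U) (v : E) :
    HasDerivAt
      (fun t : ℝ => ∫ x in tsupport f, (f x * b x + fderiv ℝ f x (X x)) * w (x + t • v) ∂μ)
      (∫ x, (fderiv ℝ f x (fderiv ℝ w x v • X x) + f x * (fderiv ℝ w x v * b x)) ∂μ) 0 := by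
  have hforce : ContinuousOn (fun x => f x * b x + fderiv ℝ f x (X x)) (tsupport f) :=
    (hf.continuous.continuousOn.mul (hb.mono hf.tsupport_subset)).add
      (hf.continuous_fderiv.continuousOn.clm_apply (hX.mono hf.tsupport_subset))
  convert hasDerivAt_setIntegral_translate (μ := μ) hU hf.hasCompactSupport.isCompact
    hf.tsupport_subset hw (L := fun x => (f x * b x + fderiv ℝ f x (X x)) • .id ℝ ℝ)
    (hforce.smul (continuousOn_const (c := .id ℝ ℝ))) v using 1
  · simp
  · rw [setIntegral_eq_integral_of_forall_compl_eq_zero fun x hx => ?_]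
    · congr with x
      simp only [map_smul, smul_eq_mul, smul_apply, ContinuousLinearMap.id_apply]
      ring
    · simp [fderiv_eq_zero_of_notMem_tsupport hx, image_eq_zero_of_notMem_tsupport hx]

namespace HasWeakDivOn

/-- Minimality of the energy: among the translates `w (· + z)`, the Dirichlet energy with weight
`f ≥ 0` minus the work of the forces is smallest for `z = 0`. -/
theorem energy_le_energy_translate [IsFiniteMeasureOnCompacts μ] (hU : IsOpen U)
    (hQ : ContinuousOn Q U) (hQpos : ∀ x ∈ U, (Q x).IsPositive)
    (hw : ContDiffOn ℝ 1 w U) (hp : ContinuousOn p U)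
    (hwp : ∀ x ∈ U, ∀ y, fderiv ℝ w x y = ⟪p x, y⟫)
    (h : HasWeakDivOn μ U (fun x => Q x (p x)) b) {f : E → ℝ} (hf : IsTestFunction U f)
    (hf0 : ∀ x, 0 ≤ f x) {z : E} (hz : ∀ x ∈ tsupport f, x + z ∈ U) :
    ∫ x, f x * ⟪Q x (p x), p x⟫ ∂μ
        + 2 * ∫ x in tsupport f, (f x * b x + fderiv ℝ f x (Q x (p x))) * w x ∂μ ≤
      ∫ x, f x * ⟪Q x (p (x + z)), p (x + z)⟫ ∂μ
        + 2 * ∫ x in tsupport f, (f x * b x + fderiv ℝ f x (Q x (p x))) * w (x + z) ∂μ := by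
  have hV : IsOpen (U ∩ (· + z) ⁻¹' U) := hU.inter (hU.preimage (by fun_prop))
  have hfV : IsTestFunction (U ∩ (· + z) ⁻¹' U) f :=
    hf.mono fun x hx => ⟨hf.tsupport_subset hx, hz x hx⟩
  have hpz : ContinuousOn (fun x => p (x + z)) (U ∩ (· + z) ⁻¹' U) :=
    hp.comp (by fun_prop) fun _ hx => hx.2
  have hQp : ContinuousOn (fun x => Q x (p x)) U := hQ.clm_apply hp
  -- test the equation with `f w` and with `f w (· + z)`
  have htest := h.integral_mul_fderiv_add_eq_zero hU hw hf
  have htestz := (h.mono Set.inter_subset_left).integral_mul_fderiv_add_eq_zero hV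
    ((contDiffOn_comp_add_right hw z).mono Set.inter_subset_right) hfV
  rw [hf.integral_mul_congr fun x hx => (hwp x hx _).trans (real_inner_comm _ _)] at htest
  rw [hfV.integral_mul_congr fun x hx => by
    rw [fderiv_comp_add_right, hwp _ hx.2, real_inner_comm]] at htestz
  have hpsd : 2 * ∫ x, f x * ⟪Q x (p x), p (x + z)⟫ ∂μ ≤ ∫ x, f x * ⟪Q x (p x), p x⟫ ∂μ +
      ∫ x, f x * ⟪Q x (p (x + z)), p (x + z)⟫ ∂μ := by
    have hQz : ContinuousOn Q (U ∩ (· + z) ⁻¹' U) := hQ.mono Set.inter_subset_left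
    have hint := hf.integrable_mul (μ := μ) (hQp.inner hp)
    have hintz := hfV.integrable_mul (μ := μ) ((hQz.clm_apply hpz).inner hpz)
    rw [← integral_const_mul, ← integral_add hint hintz]
    refine integral_mono ((hfV.integrable_mul
      ((hQp.mono Set.inter_subset_left).inner hpz)).const_mul 2) (hint.add hintz) fun x => ?_
    by_cases hx : x ∈ tsupport f
    · have := mul_le_mul_of_nonneg_left
        (two_mul_inner_le_of_isPositive (hQpos x (hf.tsupport_subset hx)) (p x) (p (x + z))) (hf0 x)
      simp only
      linarith
    · simp [image_eq_zero_of_notMem_tsupport hx]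
  linarith

variable [FiniteDimensional ℝ E] [μ.IsAddHaarMeasure]

theorem rellich_const (hU : IsOpen U) (hQ : ContDiffOn ℝ 1 Q U)
    (hQpos : ∀ x ∈ U, (Q x).IsPositive) (hw : ContDiffOn ℝ 1 w U) (hp : ContinuousOn p U)
    (hwp : ∀ x ∈ U, ∀ y, fderiv ℝ w x y = ⟪p x, y⟫)
    (h : HasWeakDivOn μ U (fun x => Q x (p x)) b) (v : E) :
    HasWeakDivOn μ U (fun x => (2 * ⟪p x, v⟫) • Q x (p x) - ⟪Q x (p x), p x⟫ • v)
      fun x => 2 * ⟪p x, v⟫ * b x - ⟪fderiv ℝ Q x v (p x), p x⟫ := by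
  have hQp := h.continuousOn
  have hb := h.continuousOn_div
  have hDQ := hQ.continuousOn_fderiv_of_isOpen hU le_rfl
  have hdw : ContinuousOn (fun x => fderiv ℝ w x v) U :=
    (hw.continuousOn_fderiv_of_isOpen hU le_rfl).clm_apply continuousOn_const
  have hpv : ContinuousOn (fun x => ⟪p x, v⟫) U := hp.inner continuousOn_const
  have hqv : ContinuousOn (fun x => ⟪Q x (p x), p x⟫ • v) U :=
    (hQp.inner hp).smul continuousOn_const
  have hDQv : ContinuousOn (fun x => ⟪fderiv ℝ Q x v (p x), p x⟫) U :=
    ((hDQ.clm_apply continuousOn_const).clm_apply hp).inner hp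
  refine of_forall_nonneg hU (((hpv.const_mul 2).smul hQp).sub hqv)
    (((hpv.const_mul 2).mul hb).sub hDQv) fun f hf hf0 => ?_
  have henergy := hf.hasDerivAt_integral_mul_inner_translate (μ := μ) hU hQ hp v
  have hwork := hf.hasDerivAt_setIntegral_mul_translate (μ := μ) hU hQp hb hw v
  have hmin : IsLocalMin (fun t : ℝ => ∫ x, f x * ⟪Q x (p (x + t • v)), p (x + t • v)⟫ ∂μ +
      2 * ∫ x in tsupport f,
        (f x * b x + fderiv ℝ f x (Q x (p x))) * w (x + t • v) ∂μ) 0 := by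
    obtain ⟨K, hKU, -, s, hs, hmem⟩ := exists_add_smul_mem_of_isCompact hU
      hf.hasCompactSupport.isCompact hf.tsupport_subset v
    filter_upwards [hs] with t ht
    simpa using energy_le_energy_translate hU hQ.continuousOn hQpos hw hp hwp h hf hf0
      fun x hx => hKU (hmem t ht x hx)
  have hcrit := hmin.hasDerivAt_eq_zero (henergy.add (hwork.const_mul 2))
  have hint : Integrable (fun x => 2 * (fderiv ℝ f x (fderiv ℝ w x v • Q x (p x)) +
      f x * (fderiv ℝ w x v * b x))) μ :=
    (hf.integrable_fderiv_apply_add_mul (hdw.smul hQp) (hdw.mul hb)).const_mul 2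
  rw [neg_add_eq_sub, ← integral_const_mul, ← integral_sub hint
    (hf.integrable_fderiv_apply_add_mul hqv hDQv)] at hcrit
  rw [← hcrit]
  congr with x
  by_cases hx : x ∈ tsupport f
  · simp only [map_sub, map_smul, smul_eq_mul, ← hwp x (hf.tsupport_subset hx)]
    ring
  · simp [fderiv_eq_zero_of_notMem_tsupport hx, image_eq_zero_of_notMem_tsupport hx]

variable {Y : E → E}

/-- Rellich's identity: expand `Y` in an orthonormal basis and apply the constant case. -/
theorem rellich (hU : IsOpen U) (hQ : ContDiffOn ℝ 1 Q U) (hQpos : ∀ x ∈ U, (Q x).IsPositive)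
    (hw : ContDiffOn ℝ 1 w U) (hp : ContinuousOn p U)
    (hwp : ∀ x ∈ U, ∀ y, fderiv ℝ w x y = ⟪p x, y⟫)
    (h : HasWeakDivOn μ U (fun x => Q x (p x)) b) (hY : ContDiffOn ℝ 1 Y U) :
    HasWeakDivOn μ U (fun x => (2 * ⟪p x, Y x⟫) • Q x (p x) - ⟪Q x (p x), p x⟫ • Y x)
      fun x => 2 * ⟪p x, Y x⟫ * b x - ⟪fderiv ℝ Q x (Y x) (p x), p x⟫
        + 2 * ⟪p x, fderiv ℝ Y x (Q x (p x))⟫ - ⟪Q x (p x), p x⟫ * divergence Y x := by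
  let e := stdOrthonormalBasis ℝ E
  have hYe (i) : ContDiffOn ℝ 1 (fun x => ⟪e i, Y x⟫) U := contDiffOn_const.inner ℝ hY
  refine (HasWeakDivOn.sum (s := Finset.univ) fun i _ =>
    (rellich_const hU hQ hQpos hw hp hwp h (e i)).smul hU (hYe i)).congr (fun x _ => ?_)
    fun x hx => ?_
  · refine (sum_inner_smul_apply_of_isLinearMap e
      (g := fun v => (2 * ⟪p x, v⟫) • Q x (p x) - ⟪Q x (p x), p x⟫ • v) ⟨fun y z => ?_,
        fun c y => ?_⟩ (Y x)).symm
    · rw [inner_add_right]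
      module
    · rw [inner_smul_right]
      module
  · have hlin := sum_inner_smul_apply_of_isLinearMap e
      (g := fun v => 2 * ⟪p x, v⟫ * b x - ⟪fderiv ℝ Q x v (p x), p x⟫)
      ⟨fun y z => by simp only [inner_add_right, inner_add_left, map_add, add_apply]; ring,
        fun c y => by
          simp only [real_inner_smul_right, real_inner_smul_left, map_smul, smul_apply, smul_eq_mul]
          ring⟩ (Y x)
    have hYx := (hY.differentiableOn one_ne_zero).differentiableAt (hU.mem_nhds hx)
    have hfderiv (i) (z) : fderiv ℝ (fun x => ⟪e i, Y x⟫) x z = ⟪e i, fderiv ℝ Y x z⟫ := by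
      simp [fderiv_inner_apply ℝ (differentiableAt_const _) hYx]
    simp only [smul_eq_mul] at hlin
    rw [Finset.sum_add_distrib, hlin]
    simp only [hfderiv, map_sub, map_smul, inner_sub_right,
      real_inner_smul_right, Finset.sum_sub_distrib, mul_assoc, ← Finset.mul_sum,
      e.sum_inner_mul_inner, divergence, LinearMap.trace_eq_sum_inner _ e,
      ContinuousLinearMap.coe_coe]
    ring

end HasWeakDivOn

end Rellich

section OneDimensional

open Set

variable {a : ℝ}

theorem IsTestFunction.exists_deriv_eq {g : ℝ → ℝ} (hg : IsTestFunction (Ioi a) g)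
    (h0 : ∫ x, g x = 0) : ∃ η, IsTestFunction (Ioi a) η ∧ deriv η = g := by
  have hK : IsCompact (tsupport g) := hg.hasCompactSupport.isCompact
  obtain ⟨m₀, hm₀, hleast⟩ := (hK.insert (a + 1)).exists_isLeast (insert_nonempty _ _)
  have ham₀ : a < m₀ := hm₀.elim (fun h => h ▸ lt_add_one a) fun h => hg.tsupport_subset h
  obtain ⟨m, ham, hmm₀⟩ := exists_between ham₀
  obtain ⟨M, hM⟩ := hK.bddAbove
  have hsupp : Function.support g ⊆ Ioc m M := fun x hx =>
    ⟨hmm₀.trans_le (hleast (mem_insert_of_mem _ (subset_tsupport g hx))),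
      hM (subset_tsupport g hx)⟩
  have hderiv (x : ℝ) : HasDerivAt (fun x => ∫ t in m..x, g t) (g x) x :=
    intervalIntegral.integral_hasDerivAt_right (hg.continuous.intervalIntegrable _ _)
      hg.continuous.stronglyMeasurable.stronglyMeasurableAtFilter hg.continuous.continuousAt
  have hzero : ∀ x ∉ Icc m M, ∫ t in m..x, g t = 0 := fun x hx => by
    rcases lt_or_ge x m with hxm | hmx
    · refine intervalIntegral.integral_zero_ae (ae_of_all _ fun t ht => ?_)
      rw [uIoc_of_ge hxm.le] at ht
      exact Function.notMem_support.1 fun h => (hsupp h).1.not_ge ht.2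
    · rw [intervalIntegral.integral_eq_integral_of_support_subset
        (hsupp.trans (Ioc_subset_Ioc_right (not_le.1 fun h => hx ⟨hmx, h⟩).le)), h0]
  have htsupp : tsupport (fun x => ∫ t in m..x, g t) ⊆ Icc m M :=
    closure_minimal (fun x hx => by_contra fun h => hx (hzero x h)) isClosed_Icc
  have hderiv_eq : deriv (fun x => ∫ t in m..x, g t) = g := funext fun x => (hderiv x).deriv
  refine ⟨_, ⟨contDiff_one_iff_deriv.2 ⟨fun x => (hderiv x).differentiableAt, ?_⟩,
    .intro isCompact_Icc hzero, htsupp.trans fun x hx => ham.trans_le hx.1⟩, hderiv_eq⟩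
  rw [hderiv_eq]
  exact hg.continuous

theorem exists_isTestFunction_integral_eq_one (a : ℝ) :
    ∃ ζ, IsTestFunction (Ioi a) ζ ∧ ∫ x, ζ x = 1 := by
  let bump : ContDiffBump (a + 2) := ⟨1 / 2, 1, by norm_num, by norm_num⟩
  refine ⟨bump.normed volume, ⟨bump.contDiff_normed, bump.hasCompactSupport_normed, ?_⟩,
    bump.integral_normed⟩
  rw [bump.tsupport_normed_eq, Real.closedBall_eq_Icc]
  exact fun x hx => lt_of_lt_of_le (by linarith : a < a + 2 - 1) hx.1

namespace HasWeakDivOn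

theorem exists_eq_const_of_zero {φ : ℝ → ℝ} (h : HasWeakDivOn volume (Ioi a) φ fun _ => 0) :
    ∃ c, ∀ x ∈ Ioi a, φ x = c := by
  obtain ⟨ζ, hζ, hone⟩ := exists_isTestFunction_integral_eq_one a
  let c := ∫ x, ζ x * φ x
  have htest (g : ℝ → ℝ) (hg : IsTestFunction (Ioi a) g) : ∫ x, g x • (φ x - c) = 0 := by
    have hgint : Integrable g := hg.continuous.integrable_of_hasCompactSupport hg.hasCompactSupport
    have hζint : Integrable ζ := hζ.continuous.integrable_of_hasCompactSupport hζ.hasCompactSupport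
    obtain ⟨η, hη, hderiv⟩ := (hg.sub (hζ.mul isOpen_Ioi
      (contDiffOn_const (c := ∫ x, g x)))).exists_deriv_eq (by
        rw [integral_sub hgint (hζint.mul_const _), integral_mul_const, hone, one_mul, sub_self])
    have hη' := h.integral_eq_zero η hη
    simp only [fderiv_eq_smul_deriv, hderiv, smul_eq_mul, mul_zero, add_zero] at hη'
    have hgφ := hg.integrable_mul (μ := volume) h.continuousOn
    have hζφ := hζ.integrable_mul (μ := volume) h.continuousOn
    calc ∫ x, g x • (φ x - c) = (∫ x, g x * φ x) - (∫ x, g x) * c := by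
          simp only [smul_eq_mul, mul_sub]
          rw [integral_sub hgφ (hgint.mul_const c), integral_mul_const]
      _ = ∫ x, φ x * (g x - ζ x * ∫ x, g x) := by
          rw [← integral_const_mul, ← integral_sub hgφ (hζφ.const_mul _)]
          congr with x
          ring
      _ = 0 := by simpa [mul_comm] using hη'
  have hae : ∀ᵐ x, x ∈ Ioi a → φ x - c = 0 :=
    isOpen_Ioi.ae_eq_zero_of_integral_contDiff_smul_eq_zero
      ((h.continuousOn.sub continuousOn_const).locallyIntegrableOn measurableSet_Ioi)
      fun g hg hgc hgs => htest g ⟨hg.of_le (by simp), hgc, hgs⟩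
  refine ⟨c, fun x hx => sub_eq_zero.1 ?_⟩
  exact Measure.eqOn_open_of_ae_eq ((ae_restrict_iff' measurableSet_Ioi).2 hae) isOpen_Ioi
    (h.continuousOn.sub continuousOn_const) continuousOn_const hx

theorem hasDerivAt {φ θ : ℝ → ℝ} (h : HasWeakDivOn volume (Ioi a) φ θ) {x : ℝ} (hx : a < x) :
    HasDerivAt φ (θ x) x := by
  have hprim (y : ℝ) (hy : a < y) : HasDerivAt (fun y => ∫ t in (a + 1)..y, θ t) (θ y) y := by
    have hsub : uIcc (a + 1) y ⊆ Ioi a := fun z hz =>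
      lt_of_lt_of_le (lt_min (lt_add_one a) hy) hz.1
    exact intervalIntegral.integral_hasDerivAt_right
      (h.continuousOn_div.mono hsub).intervalIntegrable
      (h.continuousOn_div.stronglyMeasurableAtFilter isOpen_Ioi y hy)
      (h.continuousOn_div.continuousAt (Ioi_mem_nhds hy))
  have hC1 : ContDiffOn ℝ 1 (fun y => ∫ t in (a + 1)..y, θ t) (Ioi a) := by
    rw [← zero_add 1, contDiffOn_succ_iff_deriv_of_isOpen isOpen_Ioi]
    exact ⟨fun y hy => (hprim y hy).differentiableAt.differentiableWithinAt, by simp,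
      contDiffOn_zero.2 (h.continuousOn_div.congr fun y hy => (hprim y hy).deriv)⟩
  obtain ⟨c, hc⟩ := ((h.sub (of_contDiffOn isOpen_Ioi hC1)).congr (c := fun _ => 0)
    (fun _ _ => rfl) fun y hy => by
      rw [divergence_eq_deriv, (hprim y hy).deriv, sub_self]).exists_eq_const_of_zero
  refine ((hprim x hx).const_add c).congr_of_eventuallyEq ?_
  filter_upwards [Ioi_mem_nhds hx] with y hy
  rw [← hc y hy, sub_add_cancel]

end HasWeakDivOn

end OneDimensional

local notation "ν" => NormedSpace.normalize

section RadialDerivative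

open Set Module
open scoped RealInnerProductSpace

/-- The exterior of the closed unit ball. -/
def exteriorDomain (E : Type*) [Norm E] : Set E := {x | 1 < ‖x‖}

section Norm

variable {E : Type*} [NormedAddCommGroup E] {x : E} {ρ : ℝ}

theorem isOpen_exteriorDomain : IsOpen (exteriorDomain E) :=
  isOpen_lt continuous_const continuous_norm

theorem norm_pos_of_mem_exteriorDomain (hx : x ∈ exteriorDomain E) : 0 < ‖x‖ :=
  one_pos.trans hx

theorem ne_zero_of_mem_exteriorDomain (hx : x ∈ exteriorDomain E) : x ≠ 0 :=
  norm_pos_iff.1 (norm_pos_of_mem_exteriorDomain hx)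

theorem sphere_subset_exteriorDomain (hρ : 1 < ρ) : sphere (0 : E) ρ ⊆ exteriorDomain E :=
  fun _ hx => hρ.trans_eq (mem_sphere_zero_iff_norm.1 hx).symm

theorem differentiableAt_of_mem_exteriorDomain {F : Type*} [NormedSpace ℝ E]
    [NormedAddCommGroup F] [NormedSpace ℝ F] {f : E → F}
    (hf : ContDiffOn ℝ 1 f (exteriorDomain E)) (hx : x ∈ exteriorDomain E) :
    DifferentiableAt ℝ f x :=
  (hf.differentiableOn one_ne_zero).differentiableAt (isOpen_exteriorDomain.mem_nhds hx)

variable [InnerProductSpace ℝ E]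

theorem smul_mem_sphere (hρ : 0 ≤ ρ) (θ : sphere (0 : E) 1) :
    ρ • (θ : E) ∈ sphere 0 ρ := by
  simp [norm_smul, abs_of_nonneg hρ]

theorem hasFDerivAt_norm (hx : x ≠ 0) :
    HasFDerivAt (‖·‖) (innerSL ℝ (ν x)) x := by
  have hx' : ‖x‖ ≠ 0 := norm_ne_zero_iff.2 hx
  have h := (hasStrictFDerivAt_norm_sq x).hasFDerivAt.sqrt (pow_ne_zero 2 hx')
  simp only [Real.sqrt_sq (norm_nonneg _)] at h
  refine h.congr_fderiv ?_
  ext v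
  simp only [NormedSpace.normalize, innerSL_apply_apply, smul_apply, real_inner_smul_left,
    smul_eq_mul, nsmul_eq_mul]
  field_simp
  norm_num

theorem contDiffOn_norm : ContDiffOn ℝ 1 (fun x : E => ‖x‖) (exteriorDomain E) :=
  contDiffOn_id.norm ℝ fun _ => ne_zero_of_mem_exteriorDomain

theorem contDiffOn_normalize : ContDiffOn ℝ 1 (fun x : E => ν x) (exteriorDomain E) :=
  (contDiffOn_norm.inv fun _ hx => (norm_pos_of_mem_exteriorDomain hx).ne').smul contDiffOn_id

theorem fderiv_comp_norm {g : ℝ → ℝ} (hx : x ≠ 0) (hg : DifferentiableAt ℝ g ‖x‖) (v : E) :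
    fderiv ℝ (fun y : E => g ‖y‖) x v = deriv g ‖x‖ * ⟪ν x, v⟫ := by
  have h : HasFDerivAt (fun y : E => g ‖y‖) (deriv g ‖x‖ • innerSL ℝ (ν x)) x :=
    hg.hasDerivAt.comp_hasFDerivAt x (hasFDerivAt_norm hx)
  rw [h.fderiv]
  rfl

theorem IsTestFunction.comp_norm [FiniteDimensional ℝ E] {ψ : ℝ → ℝ}
    (hψ : IsTestFunction (Ioi 1) ψ) :
    IsTestFunction (exteriorDomain E) fun x => ψ ‖x‖ := by
  have hclosed : IsClosed {x : E | ‖x‖ ∈ tsupport ψ} :=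
    (isClosed_tsupport ψ).preimage continuous_norm
  have hsub : tsupport (fun x : E => ψ ‖x‖) ⊆ {x | ‖x‖ ∈ tsupport ψ} :=
    closure_minimal (fun _ hx => subset_tsupport ψ hx) hclosed
  obtain ⟨R, hR⟩ := hψ.hasCompactSupport.isCompact.isBounded.exists_norm_le
  have hcont (x : E) : ContDiffAt ℝ 1 (fun x => ψ ‖x‖) x := by
    by_cases hx : ‖x‖ ∈ tsupport ψ
    · exact hψ.contDiff.contDiffAt.comp x
        (contDiffAt_norm ℝ (ne_zero_of_mem_exteriorDomain (hψ.tsupport_subset hx)))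
    · exact contDiffAt_const.congr_of_eventuallyEq
        ((hclosed.isOpen_compl.eventually_mem hx).mono fun _ => image_eq_zero_of_notMem_tsupport)
  refine ⟨contDiff_iff_contDiffAt.2 hcont, ?_, fun _ hx => hψ.tsupport_subset (hsub hx)⟩
  exact (isCompact_closedBall 0 R).of_isClosed_subset (isClosed_tsupport _) fun x hx =>
    mem_closedBall_zero_iff.2 ((norm_norm x).symm.trans_le (hR _ (hsub hx)))

end Norm

section SphMean

variable {E : Type*} [NormedAddCommGroup E] [InnerProductSpace ℝ E] [FiniteDimensional ℝ E]
  [MeasurableSpace E] [BorelSpace E] {f g : E → ℝ} {ρ : ℝ}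

theorem integrable_toSphere_smul (hρ : 0 ≤ ρ) (hf : ContinuousOn f (sphere 0 ρ)) :
    Integrable (fun θ : sphere (0 : E) 1 => f (ρ • (θ : E))) (volume : Measure E).toSphere :=
  (hf.comp_continuous (by fun_prop) (smul_mem_sphere hρ)).integrable_of_hasCompactSupport
    (.of_compactSpace _)

theorem sphMean_congr (hρ : 0 ≤ ρ) (h : ∀ x ∈ sphere 0 ρ, f x = g x) :
    sphMean f ρ = sphMean g ρ :=
  integral_congr_ae (ae_of_all _ fun θ => h _ (smul_mem_sphere hρ θ))

theorem sphMean_const_mul (c : ℝ) : sphMean (fun x => c * f x) ρ = c * sphMean f ρ :=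
  integral_const_mul _ _

theorem sphMean_add (hρ : 0 ≤ ρ) (hf : ContinuousOn f (sphere 0 ρ))
    (hg : ContinuousOn g (sphere 0 ρ)) :
    sphMean (fun x => f x + g x) ρ = sphMean f ρ + sphMean g ρ :=
  integral_add (integrable_toSphere_smul hρ hf) (integrable_toSphere_smul hρ hg)

theorem sphMean_sub (hρ : 0 ≤ ρ) (hf : ContinuousOn f (sphere 0 ρ))
    (hg : ContinuousOn g (sphere 0 ρ)) :
    sphMean (fun x => f x - g x) ρ = sphMean f ρ - sphMean g ρ :=
  integral_sub (integrable_toSphere_smul hρ hf) (integrable_toSphere_smul hρ hg)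

theorem sphMean_mono (hρ : 0 ≤ ρ) (hf : ContinuousOn f (sphere 0 ρ))
    (hg : ContinuousOn g (sphere 0 ρ)) (h : ∀ x ∈ sphere 0 ρ, f x ≤ g x) :
    sphMean f ρ ≤ sphMean g ρ :=
  integral_mono (integrable_toSphere_smul hρ hf) (integrable_toSphere_smul hρ hg)
    fun θ => h _ (smul_mem_sphere hρ θ)

theorem sphMean_nonneg (hρ : 0 ≤ ρ) (h : ∀ x ∈ sphere 0 ρ, 0 ≤ f x) : 0 ≤ sphMean f ρ :=
  integral_nonneg fun θ => h _ (smul_mem_sphere hρ θ)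

theorem sphMean_pos (hρ : 0 < ρ) (hf : ContinuousOn f (sphere 0 ρ))
    (hf0 : ∀ x ∈ sphere 0 ρ, 0 ≤ f x) {x : E} (hx : x ∈ sphere 0 ρ) (hfx : f x ≠ 0) :
    0 < sphMean f ρ := by
  have hcont : Continuous fun θ : sphere (0 : E) 1 => f (ρ • (θ : E)) :=
    hf.comp_continuous (by fun_prop) fun θ => smul_mem_sphere hρ.le θ
  have hx' := mem_sphere_zero_iff_norm.1 hx
  have hν : ‖ν x‖ = 1 := NormedSpace.norm_normalize (norm_pos_iff.1 (hx' ▸ hρ))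
  refine hcont.integral_pos_of_hasCompactSupport_nonneg_nonzero (.of_compactSpace _)
    (fun θ => hf0 _ (smul_mem_sphere hρ.le θ)) (x := ⟨ν x, mem_sphere_zero_iff_norm.2 hν⟩) ?_
  rwa [← hx', NormedSpace.norm_smul_normalize]

theorem abs_sphMean_le (hρ : 0 ≤ ρ) {c : ℝ} (hg : ContinuousOn g (sphere 0 ρ))
    (h : ∀ x ∈ sphere 0 ρ, |f x| ≤ c * g x) : |sphMean f ρ| ≤ c * sphMean g ρ := by
  rw [← sphMean_const_mul]
  exact norm_integral_le_of_norm_le (f := fun θ : sphere (0 : E) 1 => f (ρ • (θ : E)))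
    ((integrable_toSphere_smul hρ hg).const_mul c)
    (ae_of_all _ fun θ => h _ (smul_mem_sphere hρ θ))

theorem continuousOn_sphMean (hf : ContinuousOn f (exteriorDomain E)) :
    ContinuousOn (sphMean f) (Ioi 1) := by
  rw [continuousOn_iff_continuous_domRestrict]
  have : LocallyCompactSpace (Ioi (1 : ℝ)) := isOpen_Ioi.locallyCompactSpace
  have h := continuous_parametric_integral_of_continuous (μ := (volume : Measure E).toSphere)
    (f := fun (ρ : Ioi (1 : ℝ)) (θ : sphere (0 : E) 1) => f ((ρ : ℝ) • (θ : E)))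
    (hf.comp_continuous (by fun_prop) fun q => sphere_subset_exteriorDomain q.1.2
      (smul_mem_sphere (one_pos.trans q.1.2).le q.2)) isCompact_univ
  simp only [Measure.restrict_univ] at h
  exact h

theorem sphMean_fderiv_comp_norm_apply_add {ψ : ℝ → ℝ} (hψ : IsTestFunction (Ioi 1) ψ) {X : E → E}
    {b : E → ℝ} (hX : ContinuousOn X (exteriorDomain E)) (hb : ContinuousOn b (exteriorDomain E))
    (hρ : 0 < ρ) :
    sphMean (fun x => fderiv ℝ (fun y : E => ψ ‖y‖) x (X x) + ψ ‖x‖ * b x) ρ =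
      deriv ψ ρ * sphMean (fun x => ⟪ν x, X x⟫) ρ + ψ ρ * sphMean b ρ := by
  have hcongr : sphMean (fun x => fderiv ℝ (fun y : E => ψ ‖y‖) x (X x) + ψ ‖x‖ * b x) ρ =
      sphMean (fun x => deriv ψ ρ * ⟪ν x, X x⟫ + ψ ρ * b x) ρ :=
    sphMean_congr hρ.le fun x hx => by
      have hxρ : ‖x‖ = ρ := mem_sphere_zero_iff_norm.1 hx
      rw [fderiv_comp_norm (norm_pos_iff.1 (hxρ ▸ hρ)) (hψ.differentiableAt _), hxρ]
  rw [hcongr]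
  by_cases h1 : 1 < ρ
  · have hsub := sphere_subset_exteriorDomain (E := E) h1
    rw [sphMean_add hρ.le
      (((contDiffOn_normalize.continuousOn.inner hX).mono hsub).const_mul _)
      ((hb.mono hsub).const_mul _), sphMean_const_mul, sphMean_const_mul]
  · have hρ' : ρ ∉ tsupport ψ := fun h => h1 (hψ.tsupport_subset h)
    simp [← fderiv_apply_one_eq_deriv, fderiv_eq_zero_of_notMem_tsupport hρ',
      image_eq_zero_of_notMem_tsupport hρ', sphMean]

namespace HasWeakDivOn

variable [Nontrivial E] {X : E → E} {b : E → ℝ}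

/-- Test with radial functions and integrate in polar coordinates. -/
theorem pow_mul_sphMean (h : HasWeakDivOn volume (exteriorDomain E) X b) :
    HasWeakDivOn volume (Ioi 1)
      (fun r : ℝ => r ^ (finrank ℝ E - 1) * sphMean (fun x => ⟪ν x, X x⟫) r)
      fun r => r ^ (finrank ℝ E - 1) * sphMean b r := by
  refine ⟨(continuous_pow _).continuousOn.mul
      (continuousOn_sphMean (contDiffOn_normalize.continuousOn.inner h.continuousOn)),
    (continuous_pow _).continuousOn.mul (continuousOn_sphMean h.continuousOn_div),
    fun ψ hψ => ?_⟩
  have hψE := hψ.comp_norm (E := E)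
  rw [← h.integral_eq_zero _ hψE, integral_eq_integral_Ioi_smul_sphMean
    (hψE.integrable_fderiv_apply_add_mul h.continuousOn h.continuousOn_div),
    ← setIntegral_eq_integral_of_forall_compl_eq_zero (s := Ioi (0 : ℝ)) fun r hr => ?_]
  · refine setIntegral_congr_fun measurableSet_Ioi fun r (hr : 0 < r) => ?_
    simp only [sphMean_fderiv_comp_norm_apply_add hψ h.continuousOn h.continuousOn_div hr,
      fderiv_eq_smul_deriv, smul_eq_mul]
    ring
  · have hr' : r ∉ tsupport ψ := fun h => hr (one_pos.trans (mem_Ioi.1 (hψ.tsupport_subset h)))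
    simp [fderiv_eq_zero_of_notMem_tsupport hr', image_eq_zero_of_notMem_tsupport hr']

theorem hasDerivAt_sphMean (h : HasWeakDivOn volume (exteriorDomain E) X b) (hρ : 1 < ρ) :
    HasDerivAt (sphMean fun x => ⟪ν x, X x⟫)
      (sphMean b ρ - (finrank ℝ E - 1) / ρ * sphMean (fun x => ⟪ν x, X x⟫) ρ) ρ := by
  have hρ0 : 0 < ρ := one_pos.trans hρ
  have hd : ((finrank ℝ E - 1 : ℕ) : ℝ) = finrank ℝ E - 1 := by
    rw [Nat.cast_sub finrank_pos, Nat.cast_one]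
  have hflux := h.pow_mul_sphMean.hasDerivAt hρ
  generalize finrank ℝ E - 1 = k at hd hflux
  have hinv : HasDerivAt (fun r : ℝ => (r ^ k)⁻¹) (-(k * ρ ^ (k - 1)) / (ρ ^ k) ^ 2) ρ :=
    (hasDerivAt_pow k ρ).fun_inv (by positivity)
  refine ((hinv.mul hflux).congr_of_eventuallyEq ?_).congr_deriv ?_
  · filter_upwards [lt_mem_nhds hρ0] with r hr
    exact (inv_mul_cancel_left₀ (pow_pos hr k).ne' _).symm
  · rw [← hd]
    rcases k with _ | j
    · simp
    · simp only [Nat.add_sub_cancel, pow_succ]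
      field_simp
      ring

end HasWeakDivOn

end SphMean

end RadialDerivative

section Symbols

open Module Asymptotics
open scoped RealInnerProductSpace

section Normed

variable {E F G H : Type*} [NormedAddCommGroup E] [NormedAddCommGroup F] [NormedSpace ℝ F]
  [NormedAddCommGroup G] [NormedSpace ℝ G] [NormedAddCommGroup H] [NormedSpace ℝ H]

theorem isBigO_bilin {ι : Type*} {l : Filter ι} {f : ι → F} {g : ι → G} {φ γ : ι → ℝ}
    (B : F →L[ℝ] G →L[ℝ] H) (hf : f =O[l] φ) (hg : g =O[l] γ) :
    (fun x => B (f x) (g x)) =O[l] fun x => φ x * γ x :=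
  (IsBigO.of_bound ‖B‖ (.of_forall fun x => by
    simpa only [norm_mul, norm_norm, mul_assoc] using B.le_opNorm₂ (f x) (g x))).trans
    (hf.norm_left.mul hg.norm_left)

theorem isBigO_rpow_norm_of_le {s t : ℝ} (h : s ≤ t) :
    (fun x : E => ‖x‖ ^ s) =O[𝓟 (exteriorDomain E)] fun x => ‖x‖ ^ t :=
  isBigO_principal.2 ⟨1, fun x hx => by
    have : 0 ≤ ‖x‖ := norm_nonneg x
    rw [one_mul, Real.norm_of_nonneg (by positivity), Real.norm_of_nonneg (by positivity)]
    exact Real.rpow_le_rpow_of_exponent_le (le_of_lt hx) h⟩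

theorem eventuallyEq_rpow_norm_mul (s t : ℝ) :
    (fun x : E => ‖x‖ ^ s * ‖x‖ ^ t) =ᶠ[𝓟 (exteriorDomain E)] fun x => ‖x‖ ^ (s + t) :=
  eventually_principal.2 fun _ hx => (Real.rpow_add (norm_pos_of_mem_exteriorDomain hx) s t).symm

theorem isBigO_bilin_rpow_norm {s t : ℝ} {f : E → F} {g : E → G} (B : F →L[ℝ] G →L[ℝ] H)
    (hf : f =O[𝓟 (exteriorDomain E)] (‖·‖ ^ s)) (hg : g =O[𝓟 (exteriorDomain E)] (‖·‖ ^ t)) :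
    (fun x => B (f x) (g x)) =O[𝓟 (exteriorDomain E)] (‖·‖ ^ (s + t)) :=
  (isBigO_bilin B hf hg).trans_eventuallyEq (eventuallyEq_rpow_norm_mul s t)

variable [NormedSpace ℝ E]

/-- `f` is a symbol of order `m` on the exterior domain: `f = O(r ^ m)` and `∇f = O(r ^ (m - 1))`,
uniformly up to the boundary. -/
structure IsSymbol (m : ℝ) (f : E → F) : Prop where
  contDiffOn : ContDiffOn ℝ 1 f (exteriorDomain E)
  isBigO : f =O[𝓟 (exteriorDomain E)] (‖·‖ ^ m)
  isBigO_fderiv : fderiv ℝ f =O[𝓟 (exteriorDomain E)] (‖·‖ ^ (m - 1))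

namespace IsSymbol

variable {m k : ℝ} {f g : E → F}

theorem differentiableAt (hf : IsSymbol m f) {x : E} (hx : x ∈ exteriorDomain E) :
    DifferentiableAt ℝ f x :=
  differentiableAt_of_mem_exteriorDomain hf.contDiffOn hx

theorem const (c : F) : IsSymbol 0 fun _ : E => c where
  contDiffOn := contDiffOn_const
  isBigO := by simpa only [Real.rpow_zero] using isBigO_const_const c one_ne_zero _
  isBigO_fderiv := by
    rw [fderiv_fun_const]
    exact isBigO_zero _ _

theorem mono (hf : IsSymbol m f) (h : m ≤ k) : IsSymbol k f where
  contDiffOn := hf.contDiffOn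
  isBigO := hf.isBigO.trans (isBigO_rpow_norm_of_le h)
  isBigO_fderiv := hf.isBigO_fderiv.trans (isBigO_rpow_norm_of_le (by gcongr))

theorem congr (hf : IsSymbol m f) (h : ∀ x ∈ exteriorDomain E, g x = f x) : IsSymbol m g where
  contDiffOn := hf.contDiffOn.congr h
  isBigO := hf.isBigO.congr' (eventually_principal.2 fun x hx => (h x hx).symm) .rfl
  isBigO_fderiv := hf.isBigO_fderiv.congr' (eventually_principal.2 fun _ hx => .symm <|
    EventuallyEq.fderiv_eq <| mem_of_superset (isOpen_exteriorDomain.mem_nhds hx) h) .rfl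

theorem add (hf : IsSymbol m f) (hg : IsSymbol m g) : IsSymbol m fun x => f x + g x where
  contDiffOn := hf.contDiffOn.add hg.contDiffOn
  isBigO := hf.isBigO.add hg.isBigO
  isBigO_fderiv := (hf.isBigO_fderiv.add hg.isBigO_fderiv).congr'
    (eventually_principal.2 fun _ hx =>
      (fderiv_fun_add (hf.differentiableAt hx) (hg.differentiableAt hx)).symm) .rfl

theorem sub (hf : IsSymbol m f) (hg : IsSymbol m g) : IsSymbol m fun x => f x - g x where
  contDiffOn := hf.contDiffOn.sub hg.contDiffOn
  isBigO := hf.isBigO.sub hg.isBigO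
  isBigO_fderiv := (hf.isBigO_fderiv.sub hg.isBigO_fderiv).congr'
    (eventually_principal.2 fun _ hx =>
      (fderiv_fun_sub (hf.differentiableAt hx) (hg.differentiableAt hx)).symm) .rfl

theorem sum {ι : Type*} {s : Finset ι} {f : ι → E → F} (hf : ∀ i ∈ s, IsSymbol m (f i)) :
    IsSymbol m fun x => ∑ i ∈ s, f i x where
  contDiffOn := .sum fun i hi => (hf i hi).contDiffOn
  isBigO := .fun_sum fun i hi => (hf i hi).isBigO
  isBigO_fderiv := (IsBigO.fun_sum fun i hi => (hf i hi).isBigO_fderiv).congr'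
    (eventually_principal.2 fun _ hx =>
      (fderiv_fun_sum fun i hi => (hf i hi).differentiableAt hx).symm) .rfl

theorem bilin {f : E → F} {g : E → G} (B : F →L[ℝ] G →L[ℝ] H) (hf : IsSymbol m f)
    (hg : IsSymbol k g) : IsSymbol (m + k) fun x => B (f x) (g x) where
  contDiffOn := (B.contDiff.comp_contDiffOn hf.contDiffOn).clm_apply hg.contDiffOn
  isBigO := isBigO_bilin_rpow_norm B hf.isBigO hg.isBigO
  isBigO_fderiv := by
    have hleft := isBigO_bilin_rpow_norm (B.precompR E) hf.isBigO hg.isBigO_fderiv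
    have hright := isBigO_bilin_rpow_norm (B.precompL E) hf.isBigO_fderiv hg.isBigO
    rw [← add_sub_assoc] at hleft
    rw [sub_add_eq_add_sub] at hright
    exact (hleft.add hright).congr' (eventually_principal.2 fun x hx =>
      (B.hasFDerivAt_of_bilinear (hf.differentiableAt hx).hasFDerivAt
        (hg.differentiableAt hx).hasFDerivAt).fderiv.symm) .rfl

theorem clm_apply {T : E → F →L[ℝ] G} (hT : IsSymbol m T) (hf : IsSymbol k f) :
    IsSymbol (m + k) fun x => T x (f x) :=
  hT.bilin (ContinuousLinearMap.id ℝ (F →L[ℝ] G)) hf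

theorem smul {φ : E → ℝ} (hφ : IsSymbol m φ) (hf : IsSymbol k f) :
    IsSymbol (m + k) fun x => φ x • f x :=
  hφ.bilin (ContinuousLinearMap.lsmul ℝ ℝ) hf

theorem inv {φ : E → ℝ} {l : ℝ} (hφ : IsSymbol 0 φ) (hl : 0 < l)
    (h : ∀ x ∈ exteriorDomain E, l ≤ φ x) : IsSymbol 0 fun x => (φ x)⁻¹ := by
  have hpos {x : E} (hx : x ∈ exteriorDomain E) : 0 < φ x := hl.trans_le (h x hx)
  have hinv : (fun x => (φ x)⁻¹) =O[𝓟 (exteriorDomain E)] (‖·‖ ^ (0 : ℝ)) :=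
    isBigO_principal.2 ⟨l⁻¹, fun x hx => by
      have : 0 < φ x := hpos hx
      simpa [abs_of_pos this] using inv_anti₀ hl (h x hx)⟩
  refine ⟨hφ.contDiffOn.inv fun x hx => (hpos hx).ne', hinv, ?_⟩
  have hprod : (fun x => (-((φ x)⁻¹ * (φ x)⁻¹)) • fderiv ℝ φ x) =O[𝓟 (exteriorDomain E)]
      (‖·‖ ^ (0 - 1 : ℝ)) := by
    simpa using (((hinv.mul hinv).neg_left).smul hφ.isBigO_fderiv)
  refine hprod.congr' (eventually_principal.2 fun x hx => ?_) .rfl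
  have hderiv : HasFDerivAt (fun x => (φ x)⁻¹) (-(φ x ^ 2)⁻¹ • fderiv ℝ φ x) x :=
    (hasDerivAt_inv (hpos hx).ne').comp_hasFDerivAt x (hφ.differentiableAt hx).hasFDerivAt
  rw [hderiv.fderiv, sq, mul_inv]

end IsSymbol

end Normed

section Inner

variable {E : Type*} [NormedAddCommGroup E] [InnerProductSpace ℝ E] {m k : ℝ}

theorem IsSymbol.inner {f g : E → E} (hf : IsSymbol m f) (hg : IsSymbol k g) :
    IsSymbol (m + k) fun x => ⟪f x, g x⟫ :=
  hf.bilin (innerSL ℝ) hg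

theorem fderiv_normalize {x : E} (hx : x ≠ 0) (v : E) :
    fderiv ℝ (fun y : E => ν y) x v = ‖x‖⁻¹ • (v - ⟪ν x, v⟫ • ν x) := by
  have hx' : ‖x‖ ≠ 0 := norm_ne_zero_iff.2 hx
  have h : HasFDerivAt (fun y : E => ν y) _ x :=
    ((hasDerivAt_inv hx').comp_hasFDerivAt x (hasFDerivAt_norm hx)).smul (hasFDerivAt_id x)
  rw [h.fderiv]
  simp only [NormedSpace.normalize, add_apply, smul_apply, ContinuousLinearMap.smulRight_apply,
    ContinuousLinearMap.id_apply, innerSL_apply_apply, real_inner_smul_left, smul_eq_mul,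
    Function.comp_apply]
  match_scalars <;> field_simp

theorem IsSymbol.normalize : IsSymbol 0 fun x : E => ν x where
  contDiffOn := contDiffOn_normalize
  isBigO := isBigO_principal.2 ⟨1, fun x hx => by
    simp [NormedSpace.norm_normalize (ne_zero_of_mem_exteriorDomain hx)]⟩
  isBigO_fderiv := isBigO_principal.2 ⟨2, fun x hx => by
    have hν := NormedSpace.norm_normalize (ne_zero_of_mem_exteriorDomain hx)
    rw [zero_sub, Real.rpow_neg_one, norm_inv, norm_norm]
    refine ContinuousLinearMap.opNorm_le_bound _ (by positivity) fun v => ?_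
    have hv : ‖v - ⟪ν x, v⟫ • ν x‖ ≤ 2 * ‖v‖ := by
      have hinner := norm_inner_le_norm (𝕜 := ℝ) (ν x) v
      rw [hν, one_mul] at hinner
      calc ‖v - ⟪ν x, v⟫ • ν x‖ ≤ ‖v‖ + ‖⟪ν x, v⟫ • ν x‖ := norm_sub_le _ _
        _ ≤ 2 * ‖v‖ := by rw [norm_smul, hν, mul_one]; linarith
    rw [fderiv_normalize (ne_zero_of_mem_exteriorDomain hx), norm_smul, norm_inv, norm_norm]
    calc ‖x‖⁻¹ * ‖v - ⟪ν x, v⟫ • ν x‖ ≤ ‖x‖⁻¹ * (2 * ‖v‖) := by gcongr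
      _ = 2 * ‖x‖⁻¹ * ‖v‖ := by ring⟩

theorem divergence_normalize [FiniteDimensional ℝ E] {x : E} (hx : x ≠ 0) :
    divergence (fun y : E => ν y) x = (finrank ℝ E - 1) / ‖x‖ := by
  have hx' : ‖x‖ ≠ 0 := norm_ne_zero_iff.2 hx
  have hinv : DifferentiableAt ℝ (fun y : E => ‖y‖⁻¹) x :=
    (hasFDerivAt_norm hx).differentiableAt.inv hx'
  have hid : divergence (fun y : E => y) x = finrank ℝ E := by
    simp only [divergence, fderiv_fun_id]
    exact LinearMap.trace_id ℝ E
  simp only [NormedSpace.normalize, divergence_smul hinv differentiableAt_fun_id, hid,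
    fderiv_comp_norm hx (differentiableAt_inv hx'), deriv_inv, real_inner_smul_left,
    real_inner_self_eq_norm_sq]
  field_simp
  ring

end Inner

end Symbols

section MeanDivergence

open Module Asymptotics
open scoped RealInnerProductSpace

variable {E : Type*} [NormedAddCommGroup E] [InnerProductSpace ℝ E]

/-- The divergence of `X` relative to the measure `r ^ (1 - d) dx`, where `d` is the dimension: the
mean of `X` through the sphere of radius `ρ` has the mean of `meanDiv X` as its derivative. -/
def meanDiv (X : E → E) (x : E) : ℝ :=
  divergence X x - (finrank ℝ E - 1) / ‖x‖ * ⟪ν x, X x⟫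

variable [FiniteDimensional ℝ E]

theorem meanDiv_sub_normalize {X : E → E} {x : E} (hX : DifferentiableAt ℝ X x)
    (hx : x ∈ exteriorDomain E) : meanDiv (fun y => X y - ν y) x = meanDiv X x := by
  have hx0 := ne_zero_of_mem_exteriorDomain hx
  simp only [meanDiv, divergence_sub hX (IsSymbol.normalize.differentiableAt hx),
    divergence_normalize hx0, inner_sub_right, real_inner_self_eq_norm_sq,
    NormedSpace.norm_normalize hx0]
  ring

theorem IsSymbol.isBigO_meanDiv {m : ℝ} {X : E → E} (hX : IsSymbol m X) :
    meanDiv X =O[𝓟 (exteriorDomain E)] (‖·‖ ^ (m - 1)) := by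
  have htrace : divergence X =O[𝓟 (exteriorDomain E)] (‖·‖ ^ (m - 1)) :=
    ((LinearMap.toContinuousLinearMap
      ((LinearMap.trace ℝ E).comp (ContinuousLinearMap.coeLM ℝ))).isBigO_comp _ _).trans
      hX.isBigO_fderiv
  have hinv : (fun x : E => (finrank ℝ E - 1) / ‖x‖) =O[𝓟 (exteriorDomain E)]
      (‖·‖ ^ (-1 : ℝ)) := by
    simp only [Real.rpow_neg_one, div_eq_mul_inv]
    exact (isBigO_refl _ _).const_mul_left _
  have hflux := isBigO_bilin_rpow_norm (ContinuousLinearMap.mul ℝ ℝ) hinv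
    (IsSymbol.normalize.inner hX).isBigO
  rw [zero_add, neg_add_eq_sub] at hflux
  exact htrace.sub hflux

variable [MeasurableSpace E] [BorelSpace E] {X Y : E → E} {b c : E → ℝ}

/-- The weak form of `meanDiv X = c` on the exterior domain. -/
def HasMeanDiv (X : E → E) (c : E → ℝ) : Prop :=
  HasWeakDivOn volume (exteriorDomain E) X fun x => c x + (finrank ℝ E - 1) / ‖x‖ * ⟪ν x, X x⟫

namespace HasMeanDiv

theorem of_contDiffOn (hX : ContDiffOn ℝ 1 X (exteriorDomain E)) : HasMeanDiv X (meanDiv X) :=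
  (HasWeakDivOn.of_contDiffOn isOpen_exteriorDomain hX).congr (fun _ _ => rfl)
    fun _ _ => sub_add_cancel _ _

theorem smul {f : E → ℝ} (hf : ContDiffOn ℝ 1 f (exteriorDomain E)) (h : HasMeanDiv X c) :
    HasMeanDiv (fun x => f x • X x) fun x => f x * c x + fderiv ℝ f x (X x) :=
  (HasWeakDivOn.smul isOpen_exteriorDomain hf h).congr (fun _ _ => rfl) fun _ _ => by
    rw [real_inner_smul_right]
    ring

theorem add (hX : HasMeanDiv X b) (hY : HasMeanDiv Y c) :
    HasMeanDiv (fun x => X x + Y x) fun x => b x + c x :=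
  (HasWeakDivOn.add hX hY).congr (fun _ _ => rfl) fun _ _ => by
    rw [inner_add_right]
    ring

theorem sub (hX : HasMeanDiv X b) (hY : HasMeanDiv Y c) :
    HasMeanDiv (fun x => X x - Y x) fun x => b x - c x :=
  (HasWeakDivOn.sub hX hY).congr (fun _ _ => rfl) fun _ _ => by
    rw [inner_sub_right]
    ring

theorem congr (h : HasMeanDiv X b) (hbc : ∀ x ∈ exteriorDomain E, c x = b x) : HasMeanDiv X c :=
  HasWeakDivOn.congr h (fun _ _ => rfl) fun x hx => by rw [hbc x hx]

theorem continuousOn_flux (h : HasMeanDiv X c) :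
    ContinuousOn (fun x => ⟪ν x, X x⟫) (exteriorDomain E) :=
  contDiffOn_normalize.continuousOn.inner h.continuousOn

theorem continuousOn_meanDiv (h : HasMeanDiv X c) : ContinuousOn c (exteriorDomain E) :=
  (h.continuousOn_div.sub ((continuousOn_const.div continuous_norm.continuousOn fun _ hx =>
    (norm_pos_of_mem_exteriorDomain hx).ne').mul h.continuousOn_flux)).congr
    fun _ _ => (add_sub_cancel_right _ _).symm

theorem hasDerivAt_sphMean [Nontrivial E] (h : HasMeanDiv X c) {f : E → ℝ}
    (hf : ∀ x ∈ exteriorDomain E, ⟪ν x, X x⟫ = f x) {ρ : ℝ} (hρ : 1 < ρ) :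
    HasDerivAt (sphMean f) (sphMean c ρ) ρ := by
  have hρ0 : 0 ≤ ρ := (one_pos.trans hρ).le
  have hsub := sphere_subset_exteriorDomain (E := E) hρ
  have hderiv : HasDerivAt (sphMean fun x => ⟪ν x, X x⟫) (sphMean c ρ) ρ := by
    refine (HasWeakDivOn.hasDerivAt_sphMean h hρ).congr_deriv ?_
    rw [sub_eq_iff_eq_add, ← sphMean_const_mul,
      ← sphMean_add hρ0 (h.continuousOn_meanDiv.mono hsub)
        ((h.continuousOn_flux.mono hsub).const_mul _)]
    exact sphMean_congr hρ0 fun x hx => by rw [mem_sphere_zero_iff_norm.1 hx]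
  refine hderiv.congr_of_eventuallyEq ?_
  filter_upwards [Ioi_mem_nhds hρ] with r hr
  exact sphMean_congr (one_pos.trans hr).le fun x hx =>
    (hf x (sphere_subset_exteriorDomain hr hx)).symm

end HasMeanDiv

end MeanDivergence

section EllipticField

open scoped RealInnerProductSpace

variable {E : Type*} [NormedAddCommGroup E] [InnerProductSpace ℝ E]

/-- The conformal factor `μ = ⟨A∇r, ∇r⟩`. -/
def confFactor (A : E → E →L[ℝ] E) (x : E) : ℝ := ⟪ν x, A x (ν x)⟫

/-- The field `Z / r = A∇r / μ`, whose radial component is `1`. -/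
def zField (A : E → E →L[ℝ] E) (x : E) : E := (confFactor A x)⁻¹ • A x (ν x)

/-- A `C¹` field of symmetric operators on the exterior domain, elliptic with constant `lam`, that
differs from the identity by a symbol of order `-α`. Since `r > 1` there is no loss in `α ≤ 1`. -/
structure IsEllipticField (A : E → E →L[ℝ] E) (lam α : ℝ) : Prop where
  lam_pos : 0 < lam
  α_pos : 0 < α
  α_le_one : α ≤ 1
  isSymmetric : ∀ x ∈ exteriorDomain E, (A x : E →ₗ[ℝ] E).IsSymmetric
  le_inner : ∀ x ∈ exteriorDomain E, ∀ v, lam * ‖v‖ ^ 2 ≤ ⟪A x v, v⟫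
  isSymbol_sub_id : IsSymbol (-α) fun x => A x - ContinuousLinearMap.id ℝ E

namespace IsEllipticField

variable {A : E → E →L[ℝ] E} {lam α : ℝ} {x : E}

theorem isPositive (h : IsEllipticField A lam α) (hx : x ∈ exteriorDomain E) :
    (A x).IsPositive :=
  ⟨h.isSymmetric x hx, fun v => (mul_nonneg h.lam_pos.le (sq_nonneg ‖v‖)).trans (h.le_inner x hx v)⟩

theorem isSymbol (h : IsEllipticField A lam α) : IsSymbol 0 A := by
  simpa only [sub_add_cancel] using
    (h.isSymbol_sub_id.mono (neg_nonpos.2 h.α_pos.le)).add (IsSymbol.const (.id ℝ E))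

theorem isBigO_fderiv (h : IsEllipticField A lam α) :
    fderiv ℝ A =O[𝓟 (exteriorDomain E)] (‖·‖ ^ (-α - 1)) :=
  h.isSymbol_sub_id.isBigO_fderiv.congr_left fun _ => fderiv_sub_const _

theorem isSymbol_conormal (h : IsEllipticField A lam α) : IsSymbol 0 fun x => A x (ν x) := by
  simpa only [add_zero] using h.isSymbol.clm_apply IsSymbol.normalize

theorem isSymbol_confFactor (h : IsEllipticField A lam α) : IsSymbol 0 (confFactor A) := by
  simpa only [add_zero] using! IsSymbol.normalize.inner h.isSymbol_conormal

theorem lam_le_confFactor (h : IsEllipticField A lam α) (hx : x ∈ exteriorDomain E) :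
    lam ≤ confFactor A x := by
  simpa [confFactor, real_inner_comm, NormedSpace.norm_normalize (ne_zero_of_mem_exteriorDomain hx)]
    using h.le_inner x hx (ν x)

theorem confFactor_pos (h : IsEllipticField A lam α) (hx : x ∈ exteriorDomain E) :
    0 < confFactor A x :=
  h.lam_pos.trans_le (h.lam_le_confFactor hx)

theorem confFactor_smul_zField (h : IsEllipticField A lam α) (hx : x ∈ exteriorDomain E) :
    confFactor A x • zField A x = A x (ν x) :=
  smul_inv_smul₀ (h.confFactor_pos hx).ne' _

theorem inner_normalize_zField (h : IsEllipticField A lam α) (hx : x ∈ exteriorDomain E) :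
    ⟪ν x, zField A x⟫ = 1 := by
  rw [zField, real_inner_smul_right]
  exact inv_mul_cancel₀ (h.confFactor_pos hx).ne'

theorem inner_normalize_apply (h : IsEllipticField A lam α) (hx : x ∈ exteriorDomain E) (v : E) :
    ⟪ν x, A x v⟫ = confFactor A x * ⟪v, zField A x⟫ := by
  rw [← real_inner_smul_right, h.confFactor_smul_zField hx, real_inner_comm]
  exact h.isSymmetric x hx v (ν x)

theorem isSymbol_zField (h : IsEllipticField A lam α) : IsSymbol 0 (zField A) := by
  simpa only [add_zero] using! (h.isSymbol_confFactor.inv h.lam_pos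
    fun _ => h.lam_le_confFactor).smul h.isSymbol_conormal

theorem isSymbol_conormal_sub (h : IsEllipticField A lam α) :
    IsSymbol (-α) fun x => A x (ν x) - ν x := by
  simpa only [add_zero] using! h.isSymbol_sub_id.clm_apply IsSymbol.normalize

theorem isSymbol_zField_sub (h : IsEllipticField A lam α) :
    IsSymbol (-α) fun x => zField A x - ν x := by
  have hrad := IsSymbol.normalize.inner h.isSymbol_conormal_sub
  have hinv := h.isSymbol_confFactor.inv h.lam_pos fun _ => h.lam_le_confFactor
  have htan := hinv.smul (h.isSymbol_conormal_sub.sub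
    (by simpa only [zero_add, add_zero] using hrad.smul IsSymbol.normalize))
  rw [zero_add] at htan
  refine htan.congr fun x hx => ?_
  have hμ := (h.confFactor_pos hx).ne'
  have hν := NormedSpace.norm_normalize (ne_zero_of_mem_exteriorDomain hx)
  rw [inner_sub_right, real_inner_self_eq_norm_sq, hν, zField]
  change _ = (confFactor A x)⁻¹ • (A x (ν x) - ν x - (confFactor A x - 1 ^ 2) • ν x)
  match_scalars <;> field_simp
  ring

theorem isBigO_meanDiv_conormal [FiniteDimensional ℝ E] (h : IsEllipticField A lam α) :
    meanDiv (fun x => A x (ν x)) =O[𝓟 (exteriorDomain E)] (‖·‖ ^ (-α - 1)) :=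
  h.isSymbol_conormal_sub.isBigO_meanDiv.congr' (eventually_principal.2 fun _ hx =>
    meanDiv_sub_normalize (h.isSymbol_conormal.differentiableAt hx) hx) .rfl

theorem isBigO_meanDiv_zField [FiniteDimensional ℝ E] (h : IsEllipticField A lam α) :
    meanDiv (zField A) =O[𝓟 (exteriorDomain E)] (‖·‖ ^ (-α - 1)) :=
  h.isSymbol_zField_sub.isBigO_meanDiv.congr' (eventually_principal.2 fun _ hx =>
    meanDiv_sub_normalize (h.isSymbol_zField.differentiableAt hx) hx) .rfl

end IsEllipticField

end EllipticField

section Helmholtz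

open scoped RealInnerProductSpace

variable {E : Type*} [NormedAddCommGroup E] [InnerProductSpace ℝ E]

section Densities

variable (A : E → E →L[ℝ] E) (w : E → ℝ) (p : E → E)

/-- The density `⟨A∇w, ∇w⟩` of the full energy, where `p` stands for `∇w`. -/
def energyDensity (x : E) : ℝ := ⟪A x (p x), p x⟫

/-- The derivative `Zw / r` along the field `Z / r`, where `p` stands for `∇w`. -/
def zDeriv (x : E) : ℝ := ⟪p x, zField A x⟫

/-- The density of the functional `G`, with a general constant `κ` in place of
`(n - 1) (n - 3) / 4`. -/
def gDensity (κ : ℝ) (x : E) : ℝ :=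
  2 * (confFactor A x * zDeriv A p x ^ 2) - energyDensity A p x + w x ^ 2 -
    κ * (w x ^ 2 / ‖x‖ ^ 2 * confFactor A x)

/-- The part of the derivative of `G` that is small at infinity, as a density on spheres. -/
def gError (V : E → ℝ) (κ : ℝ) (x : E) : ℝ :=
  2 * zDeriv A p x * (V x * w x) + meanDiv (zField A) x * (w x ^ 2 - energyDensity A p x) -
    ⟪fderiv ℝ A x (zField A x) (p x), p x⟫ +
    2 * ⟪p x, fderiv ℝ (fun y => zField A y - ν y) x (A x (p x))⟫ +
    2 / ‖x‖ * (confFactor A x * zDeriv A p x * ⟪p x, zField A x - ν x⟫) -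
    (κ / ‖x‖ ^ 2 * (w x ^ 2 * meanDiv (fun y => A y (ν y)) x + 2 * w x * ⟪p x, A x (ν x)⟫) -
      2 * κ / ‖x‖ ^ 3 * (w x ^ 2 * confFactor A x))

end Densities

variable [FiniteDimensional ℝ E] [MeasurableSpace E] [BorelSpace E]
  {A : E → E →L[ℝ] E} {lam α : ℝ} {V w : E → ℝ} {p : E → E} {x : E}

/-- A weak solution `w`, with gradient `p`, of `meanDiv (A∇w) = (V - 1) w` on the exterior domain,
for a decaying potential `V`. This is the equation satisfied by `w = r ^ ((n - 1) / 2) u`. -/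
structure IsHelmholtzSolution (A : E → E →L[ℝ] E) (lam α : ℝ) (V w : E → ℝ) (p : E → E) :
    Prop where
  isEllipticField : IsEllipticField A lam α
  isBigO_potential : V =O[𝓟 (exteriorDomain E)] (‖·‖ ^ (-α - 1))
  contDiffOn : ContDiffOn ℝ 1 w (exteriorDomain E)
  continuousOn_gradient : ContinuousOn p (exteriorDomain E)
  fderiv_apply : ∀ x ∈ exteriorDomain E, ∀ v, fderiv ℝ w x v = ⟪p x, v⟫
  hasMeanDiv : HasMeanDiv (fun x => A x (p x)) fun x => (V x - 1) * w x

namespace IsHelmholtzSolution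

theorem differentiableAt (h : IsHelmholtzSolution A lam α V w p)
    (hx : x ∈ exteriorDomain E) : DifferentiableAt ℝ w x :=
  differentiableAt_of_mem_exteriorDomain h.contDiffOn hx

theorem fderiv_sq_apply (h : IsHelmholtzSolution A lam α V w p) (hx : x ∈ exteriorDomain E)
    (v : E) :
    fderiv ℝ (fun y => w y ^ 2) x v = 2 * w x * ⟪p x, v⟫ := by
  rw [fderiv_fun_pow 2 (h.differentiableAt hx)]
  simp [h.fderiv_apply x hx]

theorem hasMeanDiv_sq_smul (h : IsHelmholtzSolution A lam α V w p) {X : E → E}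
    (hX : ContDiffOn ℝ 1 X (exteriorDomain E)) :
    HasMeanDiv (fun x => w x ^ 2 • X x) fun x => w x ^ 2 * meanDiv X x + 2 * w x * ⟪p x, X x⟫ :=
  ((HasMeanDiv.of_contDiffOn hX).smul (h.contDiffOn.pow 2)).congr fun x hx => by
    rw [h.fderiv_sq_apply hx]

theorem hasMeanDiv_smul_flux (h : IsHelmholtzSolution A lam α V w p) :
    HasMeanDiv (fun x => w x • A x (p x)) fun x => energyDensity A p x - w x ^ 2 + V x * w x ^ 2 :=
  (h.hasMeanDiv.smul h.contDiffOn).congr fun x hx => by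
    rw [h.fderiv_apply x hx, energyDensity, real_inner_comm]
    ring

theorem hasMeanDiv_rellich (h : IsHelmholtzSolution A lam α V w p) :
    HasMeanDiv (fun x => (2 * zDeriv A p x) • A x (p x) - energyDensity A p x • zField A x)
      fun x => 2 * zDeriv A p x * ((V x - 1) * w x) - ⟪fderiv ℝ A x (zField A x) (p x), p x⟫ +
        2 * ⟪p x, fderiv ℝ (zField A) x (A x (p x))⟫ -
        energyDensity A p x * meanDiv (zField A) x :=
  (HasWeakDivOn.rellich isOpen_exteriorDomain h.isEllipticField.isSymbol.contDiffOn
    (fun _ hx => h.isEllipticField.isPositive hx) h.contDiffOn h.continuousOn_gradient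
    h.fderiv_apply h.hasMeanDiv h.isEllipticField.isSymbol_zField.contDiffOn).congr
    (fun _ _ => rfl) fun _ _ => by
      simp only [energyDensity, zDeriv, meanDiv, inner_sub_right, real_inner_smul_right]
      ring

/-- Since `∇r` has derivative `r⁻¹ (I - ∇r ⊗ ∇r)`, replacing `Z / r` by `∇r` leaves twice the
non-radial part of the energy. -/
theorem two_mul_inner_fderiv_zField (h : IsHelmholtzSolution A lam α V w p)
    (hx : x ∈ exteriorDomain E) :
    2 * ⟪p x, fderiv ℝ (zField A) x (A x (p x))⟫ =
      2 / ‖x‖ * (energyDensity A p x - confFactor A x * zDeriv A p x ^ 2) +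
        2 * ⟪p x, fderiv ℝ (fun y => zField A y - ν y) x (A x (p x))⟫ +
        2 / ‖x‖ * (confFactor A x * zDeriv A p x * ⟪p x, zField A x - ν x⟫) := by
  rw [fderiv_fun_sub (h.isEllipticField.isSymbol_zField.differentiableAt hx)
    (IsSymbol.normalize.differentiableAt hx), sub_apply,
    fderiv_normalize (ne_zero_of_mem_exteriorDomain hx), inner_sub_right, inner_sub_right,
    real_inner_smul_right, inner_sub_right, real_inner_smul_right,
    h.isEllipticField.inner_normalize_apply hx, real_inner_comm (A x (p x))]
  simp only [energyDensity, zDeriv]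
  ring

theorem hasMeanDiv_gDensity (h : IsHelmholtzSolution A lam α V w p) (κ : ℝ) :
    ∃ X, (∀ x ∈ exteriorDomain E, ⟪ν x, X x⟫ = gDensity A w p κ x) ∧ HasMeanDiv X fun x =>
      2 / ‖x‖ * (energyDensity A p x - confFactor A x * zDeriv A p x ^ 2) + gError A w p V κ x := by
  have hA := h.isEllipticField
  have hdiff {r : ℝ} (hr : r ≠ 0) : HasDerivAt (fun r => κ / r ^ 2) (-(2 * κ / r ^ 3)) r := by
    refine ((hasDerivAt_const r κ).fun_div (hasDerivAt_pow 2 r) (by positivity)).congr_deriv ?_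
    field_simp
    ring
  have hsmooth : ContDiffOn ℝ 1 (fun x : E => κ / ‖x‖ ^ 2) (exteriorDomain E) :=
    contDiffOn_const.div (contDiffOn_norm.pow 2) fun x hx =>
      pow_ne_zero 2 (norm_pos_of_mem_exteriorDomain hx).ne'
  refine ⟨_, fun x hx => ?_, ((h.hasMeanDiv_rellich.add
    (h.hasMeanDiv_sq_smul hA.isSymbol_zField.contDiffOn)).sub
      ((h.hasMeanDiv_sq_smul hA.isSymbol_conormal.contDiffOn).smul hsmooth)).congr fun x hx => ?_⟩
  · simp only [inner_add_right, inner_sub_right, real_inner_smul_right,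
      hA.inner_normalize_zField hx, hA.inner_normalize_apply hx, gDensity, zDeriv]
    ring
  · have hr := (norm_pos_of_mem_exteriorDomain hx).ne'
    rw [fderiv_comp_norm (ne_zero_of_mem_exteriorDomain hx) (hdiff hr).differentiableAt,
      (hdiff hr).deriv, real_inner_smul_right, ← confFactor, h.two_mul_inner_fderiv_zField hx,
      gError]
    simp only [zDeriv]
    ring

end IsHelmholtzSolution

end Helmholtz

section GrowthBounds

open Asymptotics
open scoped RealInnerProductSpace

section HasGrowth

variable {E F G : Type*} [NormedAddCommGroup E] [NormedAddCommGroup F] [NormedAddCommGroup G]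

/-- `f = O(r ^ s N ^ k)` on the exterior domain. It is used with `N = |(∇w, w)|`, where `k` is the
degree of `f` as a polynomial in `∇w` and `w`. -/
def HasGrowth (N : E → ℝ) (s : ℝ) (k : ℕ) (f : E → F) : Prop :=
  f =O[𝓟 (exteriorDomain E)] fun x => ‖x‖ ^ s * N x ^ k

namespace HasGrowth

variable {N : E → ℝ} {s t m : ℝ} {j k : ℕ}

theorem of_isBigO {f : E → F} (hf : f =O[𝓟 (exteriorDomain E)] (‖·‖ ^ s)) :
    HasGrowth N s 0 f := by
  simpa only [HasGrowth, pow_zero, mul_one] using hf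

theorem add {f g : E → F} (hf : HasGrowth N s k f) (hg : HasGrowth N s k g) :
    HasGrowth N s k fun x => f x + g x :=
  IsBigO.add hf hg

theorem sub {f g : E → F} (hf : HasGrowth N s k f) (hg : HasGrowth N s k g) :
    HasGrowth N s k fun x => f x - g x :=
  IsBigO.sub hf hg

theorem const_mul {f : E → ℝ} (c : ℝ) (hf : HasGrowth N s k f) :
    HasGrowth N s k fun x => c * f x :=
  hf.const_mul_left c

theorem fst {f : E → F} {g : E → G} : HasGrowth (fun x => ‖(f x, g x)‖) 0 1 f := by
  simpa only [HasGrowth, Real.rpow_zero, one_mul, pow_one] using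
    (isBigO_fst_prod' (f' := fun x => (f x, g x))).norm_right

theorem snd {f : E → F} {g : E → G} : HasGrowth (fun x => ‖(f x, g x)‖) 0 1 g := by
  simpa only [HasGrowth, Real.rpow_zero, one_mul, pow_one] using
    (isBigO_snd_prod' (f' := fun x => (f x, g x))).norm_right

variable {H : Type*} [NormedSpace ℝ F] [NormedSpace ℝ G] [NormedAddCommGroup H] [NormedSpace ℝ H]

theorem bilin {f : E → F} {g : E → G} (B : F →L[ℝ] G →L[ℝ] H) (hf : HasGrowth N s j f)
    (hg : HasGrowth N t k g) (h : s + t ≤ m) : HasGrowth N m (j + k) fun x => B (f x) (g x) := by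
  refine (isBigO_bilin B hf hg).trans (.congr' ((isBigO_rpow_norm_of_le h).mul
    (isBigO_refl (fun x => N x ^ (j + k)) _)) (eventually_principal.2 fun x hx => ?_) .rfl)
  simp only [Real.rpow_add (norm_pos_of_mem_exteriorDomain hx), pow_add]
  ring

theorem mul {f g : E → ℝ} (hf : HasGrowth N s j f) (hg : HasGrowth N t k g) (h : s + t ≤ m) :
    HasGrowth N m (j + k) fun x => f x * g x :=
  hf.bilin (ContinuousLinearMap.mul ℝ ℝ) hg h

theorem clm_apply {T : E → F →L[ℝ] G} {f : E → F} (hT : HasGrowth N s j T)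
    (hf : HasGrowth N t k f) (h : s + t ≤ m) : HasGrowth N m (j + k) fun x => T x (f x) :=
  hT.bilin (ContinuousLinearMap.id ℝ (F →L[ℝ] G)) hf h

theorem inner {F : Type*} [NormedAddCommGroup F] [InnerProductSpace ℝ F] {f g : E → F}
    (hf : HasGrowth N s j f) (hg : HasGrowth N t k g) (h : s + t ≤ m) :
    HasGrowth N m (j + k) fun x => ⟪f x, g x⟫ :=
  hf.bilin (innerSL ℝ) hg h

end HasGrowth

theorem isBigO_const_div_norm_pow (c : ℝ) (k : ℕ) :
    (fun x : E => c / ‖x‖ ^ k) =O[𝓟 (exteriorDomain E)] (‖·‖ ^ (-k : ℝ)) := by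
  simp only [Real.rpow_neg (norm_nonneg _), Real.rpow_natCast, div_eq_mul_inv]
  exact (isBigO_refl _ _).const_mul_left c

end HasGrowth

variable {E : Type*} [NormedAddCommGroup E] [InnerProductSpace ℝ E]
  {A : E → E →L[ℝ] E} {lam α : ℝ} {V w : E → ℝ} {p : E → E} {x : E}

namespace IsEllipticField

theorem hasGrowth_zDeriv (h : IsEllipticField A lam α) :
    HasGrowth (fun x => ‖(p x, w x)‖) 0 1 (zDeriv A p) :=
  HasGrowth.fst.inner (.of_isBigO h.isSymbol_zField.isBigO) (zero_add 0).le

theorem hasGrowth_apply (h : IsEllipticField A lam α) :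
    HasGrowth (fun x => ‖(p x, w x)‖) 0 1 fun x => A x (p x) :=
  (HasGrowth.of_isBigO h.isSymbol.isBigO).clm_apply .fst (zero_add 0).le

theorem hasGrowth_energyDensity (h : IsEllipticField A lam α) :
    HasGrowth (fun x => ‖(p x, w x)‖) 0 2 (energyDensity A p) :=
  h.hasGrowth_apply.inner .fst (zero_add 0).le

theorem hasGrowth_rellich_remainder [FiniteDimensional ℝ E] (h : IsEllipticField A lam α) :
    HasGrowth (fun x => ‖(p x, w x)‖) (-α - 1) 2 fun x =>
      meanDiv (zField A) x * (w x ^ 2 - energyDensity A p x) -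
        ⟪fderiv ℝ A x (zField A x) (p x), p x⟫ +
        2 * ⟪p x, fderiv ℝ (fun y => zField A y - ν y) x (A x (p x))⟫ +
        2 / ‖x‖ * (confFactor A x * zDeriv A p x * ⟪p x, zField A x - ν x⟫) := by
  have hp : HasGrowth (fun x => ‖(p x, w x)‖) 0 1 p := .fst
  have hw2 : HasGrowth (fun x => ‖(p x, w x)‖) 0 2 fun x => w x ^ 2 := by
    simpa only [sq] using HasGrowth.snd.mul .snd (zero_add 0).le
  have hdiv := (HasGrowth.of_isBigO h.isBigO_meanDiv_zField).mul
    (hw2.sub h.hasGrowth_energyDensity) (add_zero _).le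
  have hDA := (((HasGrowth.of_isBigO h.isBigO_fderiv).clm_apply
    (.of_isBigO h.isSymbol_zField.isBigO) (add_zero _).le).clm_apply hp (add_zero _).le).inner hp
      (add_zero _).le
  have hDY := hp.inner ((HasGrowth.of_isBigO h.isSymbol_zField_sub.isBigO_fderiv).clm_apply
    h.hasGrowth_apply (add_zero _).le) (zero_add _).le
  have hrad := (HasGrowth.of_isBigO h.isSymbol_confFactor.isBigO).mul h.hasGrowth_zDeriv
    (zero_add 0).le |>.mul (hp.inner (.of_isBigO h.isSymbol_zField_sub.isBigO) (zero_add _).le)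
      (zero_add _).le
  have hr : (fun x : E => 2 / ‖x‖) =O[𝓟 (exteriorDomain E)] (‖·‖ ^ (-1 : ℝ)) := by
    simpa only [pow_one, Nat.cast_one] using isBigO_const_div_norm_pow 2 1
  exact ((hdiv.sub hDA).add (hDY.const_mul 2)).add
    ((HasGrowth.of_isBigO hr).mul hrad (neg_add_eq_sub _ _).le)

theorem hasGrowth_lower_order [FiniteDimensional ℝ E] (h : IsEllipticField A lam α) (κ : ℝ) :
    HasGrowth (fun x => ‖(p x, w x)‖) (-α - 1) 2 fun x =>
      κ / ‖x‖ ^ 2 * (w x ^ 2 * meanDiv (fun y => A y (ν y)) x + 2 * w x * ⟪p x, A x (ν x)⟫) -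
        2 * κ / ‖x‖ ^ 3 * (w x ^ 2 * confFactor A x) := by
  have hα := h.α_le_one
  have hw : HasGrowth (fun x => ‖(p x, w x)‖) 0 1 w := .snd
  have hw2 : HasGrowth (fun x => ‖(p x, w x)‖) 0 2 fun x => w x ^ 2 := by
    simpa only [sq] using hw.mul hw (zero_add 0).le
  have hdiv := hw2.mul (.of_isBigO h.isBigO_meanDiv_conormal) (m := 0) (by linarith [h.α_pos])
  have hflux := (hw.const_mul 2).mul (HasGrowth.fst.inner
    (.of_isBigO h.isSymbol_conormal.isBigO) (zero_add 0).le) (zero_add 0).le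
  exact ((HasGrowth.of_isBigO (isBigO_const_div_norm_pow κ 2)).mul (hdiv.add hflux)
    (by push_cast; linarith)).sub ((HasGrowth.of_isBigO (isBigO_const_div_norm_pow (2 * κ) 3)).mul
      (hw2.mul (.of_isBigO h.isSymbol_confFactor.isBigO) (zero_add 0).le) (by push_cast; linarith))

theorem hasGrowth_gError [FiniteDimensional ℝ E] (h : IsEllipticField A lam α) (κ : ℝ)
    (hV : V =O[𝓟 (exteriorDomain E)] (‖·‖ ^ (-α - 1))) :
    HasGrowth (fun x => ‖(p x, w x)‖) (-α - 1) 2 (gError A w p V κ) := by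
  have hpot := ((h.hasGrowth_zDeriv (p := p) (w := w)).const_mul 2).mul
    ((HasGrowth.of_isBigO hV).mul .snd (add_zero _).le) (zero_add _).le
  refine ((hpot.add h.hasGrowth_rellich_remainder).sub (h.hasGrowth_lower_order κ)).congr_left
    fun x => ?_
  rw [gError]
  ring

end IsEllipticField

end GrowthBounds

section RadialMeans

open Asymptotics
open scoped RealInnerProductSpace

variable {E : Type*} [NormedAddCommGroup E] [InnerProductSpace ℝ E]
  {A : E → E →L[ℝ] E} {lam α : ℝ} {V w : E → ℝ} {p : E → E} {x : E}

theorem inner_normalize_sq_smul_conormal (x : E) :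
    ⟪ν x, w x ^ 2 • A x (ν x)⟫ = confFactor A x * w x ^ 2 := by
  rw [real_inner_smul_right, mul_comm, confFactor]

namespace IsEllipticField

theorem energyDensity_nonneg (h : IsEllipticField A lam α) (hx : x ∈ exteriorDomain E) :
    0 ≤ energyDensity A p x :=
  (h.isPositive hx).inner_nonneg_left (p x)

theorem confFactor_mul_zDeriv_sq_le (h : IsEllipticField A lam α) (hx : x ∈ exteriorDomain E) :
    confFactor A x * zDeriv A p x ^ 2 ≤ energyDensity A p x := by
  have hradial := two_mul_inner_le_of_isPositive (h.isPositive hx) (p x) (zDeriv A p x • ν x)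
  rw [map_smul, real_inner_smul_left, real_inner_smul_right, real_inner_smul_right,
    real_inner_comm (ν x), h.inner_normalize_apply hx, real_inner_comm (ν x), ← confFactor]
    at hradial
  change 2 * (zDeriv A p x * (confFactor A x * zDeriv A p x)) ≤ energyDensity A p x + _ at hradial
  linarith

theorem isBigO_mul_sq (h : IsEllipticField A lam α) {φ : E → ℝ} {s : ℝ}
    (hφ : φ =O[𝓟 (exteriorDomain E)] (‖·‖ ^ s)) :
    (fun x => φ x * w x ^ 2) =O[𝓟 (exteriorDomain E)]
      fun x => ‖x‖ ^ s * (confFactor A x * w x ^ 2) := by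
  have hμ : (fun _ => 1 : E → ℝ) =O[𝓟 (exteriorDomain E)] confFactor A :=
    isBigO_principal.2 ⟨lam⁻¹, fun x hx => by
      rw [norm_one, Real.norm_of_nonneg (h.confFactor_pos hx).le, inv_mul_eq_div,
        one_le_div₀ h.lam_pos]
      exact h.lam_le_confFactor hx⟩
  simpa only [one_mul] using hφ.mul (hμ.mul (isBigO_refl (fun x => w x ^ 2) _))

theorem isBigO_norm_prod_sq (h : IsEllipticField A lam α) :
    (fun x => ‖(p x, w x)‖ ^ 2) =O[𝓟 (exteriorDomain E)]
      fun x => energyDensity A p x + w x ^ 2 :=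
  isBigO_principal.2 ⟨lam⁻¹ + 1, fun x hx => by
    have he := h.energyDensity_nonneg (p := p) hx
    have hlam := h.lam_pos
    have hp : ‖p x‖ ^ 2 ≤ lam⁻¹ * energyDensity A p x := by
      rw [inv_mul_eq_div, le_div_iff₀' hlam]
      exact h.le_inner x hx (p x)
    have hmax : ‖(p x, w x)‖ ^ 2 ≤ ‖p x‖ ^ 2 + w x ^ 2 := by
      rw [Prod.norm_mk, ← sq_abs (w x), ← Real.norm_eq_abs]
      rcases max_choice ‖p x‖ ‖w x‖ with hm | hm <;> rw [hm] <;> nlinarith [norm_nonneg (p x)]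
    rw [norm_pow, norm_norm, Real.norm_of_nonneg (by positivity)]
    have : 0 ≤ lam⁻¹ * w x ^ 2 := by positivity
    linarith⟩

theorem isBigO_div_norm_sq_mul_confFactor (h : IsEllipticField A lam α) (κ : ℝ) :
    (fun x => κ / ‖x‖ ^ 2 * confFactor A x) =O[𝓟 (exteriorDomain E)] (‖·‖ ^ (-α - 1)) := by
  have hα := h.α_le_one
  exact (isBigO_bilin_rpow_norm (ContinuousLinearMap.mul ℝ ℝ) (isBigO_const_div_norm_pow κ 2)
    h.isSymbol_confFactor.isBigO).trans (isBigO_rpow_norm_of_le (by push_cast; linarith))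

theorem isBigO_gDensity_sub (h : IsEllipticField A lam α) (κ : ℝ) :
    (fun x => gDensity A w p κ x -
      (2 * (confFactor A x * zDeriv A p x ^ 2) - energyDensity A p x + w x ^ 2))
      =O[𝓟 (exteriorDomain E)] fun x => ‖x‖ ^ (-α) * w x ^ 2 :=
  ((h.isBigO_div_norm_sq_mul_confFactor κ).trans (isBigO_rpow_norm_of_le
    (sub_le_self _ zero_le_one)) |>.neg_left.mul (isBigO_refl (fun x => w x ^ 2) _)).congr_left
      fun x => by
        rw [gDensity]
        ring

end IsEllipticField

variable [FiniteDimensional ℝ E] [MeasurableSpace E] [BorelSpace E]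

section Means

variable {f g m b c : E → ℝ} {X : E → E} {ρ s : ℝ}

theorem sq_sphMean_mul_le (hρ : 0 ≤ ρ) (hm : ContinuousOn m (sphere 0 ρ))
    (hf : ContinuousOn f (sphere 0 ρ)) (hg : ContinuousOn g (sphere 0 ρ))
    (hm0 : ∀ x ∈ sphere 0 ρ, 0 ≤ m x) :
    sphMean (fun x => f x * (m x * g x)) ρ ^ 2 ≤
      sphMean (fun x => m x * g x ^ 2) ρ * sphMean (fun x => m x * f x ^ 2) ρ := by
  have hquad (t : ℝ) : 0 ≤ sphMean (fun x => m x * g x ^ 2) ρ * (t * t) +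
      2 * sphMean (fun x => f x * (m x * g x)) ρ * t + sphMean (fun x => m x * f x ^ 2) ρ :=
    calc 0 ≤ sphMean (fun x => m x * (t * g x + f x) ^ 2) ρ :=
          sphMean_nonneg hρ fun x hx => mul_nonneg (hm0 x hx) (sq_nonneg _)
      _ = sphMean (fun x => t * t * (m x * g x ^ 2) + 2 * t * (f x * (m x * g x)) +
            m x * f x ^ 2) ρ := sphMean_congr hρ fun x _ => by ring
      _ = _ := by
          rw [sphMean_add hρ (by fun_prop) (by fun_prop), sphMean_add hρ (by fun_prop)
            (by fun_prop), sphMean_const_mul, sphMean_const_mul]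
          ring
  have hdiscrim := discrim_le_zero hquad
  rw [discrim] at hdiscrim
  linarith

theorem eventually_abs_sphMean_le
    (h : f =O[𝓟 (exteriorDomain E)] fun x => ‖x‖ ^ s * g x)
    (hg : ContinuousOn g (exteriorDomain E)) (hg0 : ∀ x ∈ exteriorDomain E, 0 ≤ g x) :
    ∀ᶠ M in atTop, ∀ ρ > 1, |sphMean f ρ| ≤ M * ρ ^ s * sphMean g ρ := by
  filter_upwards [isBigO_iff_eventually_isBigOWith.1 h] with M hM ρ hρ
  have hsub := sphere_subset_exteriorDomain (E := E) hρ
  refine abs_sphMean_le (one_pos.trans hρ).le (hg.mono hsub) fun x hx => ?_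
  have hbound := isBigOWith_principal.1 hM x (hsub hx)
  rwa [mem_sphere_zero_iff_norm.1 hx, Real.norm_eq_abs, Real.norm_of_nonneg
    (mul_nonneg (Real.rpow_nonneg (one_pos.trans hρ).le s) (hg0 x (hsub hx))), ← mul_assoc]
    at hbound

theorem HasMeanDiv.eventually_abs_deriv_sphMean_sub_le [Nontrivial E] (h : HasMeanDiv X c)
    (hf : ∀ x ∈ exteriorDomain E, ⟪ν x, X x⟫ = f x) (hb : ContinuousOn b (exteriorDomain E))
    (he : (fun x => c x - b x) =O[𝓟 (exteriorDomain E)] fun x => ‖x‖ ^ s * g x)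
    (hg : ContinuousOn g (exteriorDomain E)) (hg0 : ∀ x ∈ exteriorDomain E, 0 ≤ g x) :
    ∀ᶠ M in atTop, ∀ ρ > 1, |deriv (sphMean f) ρ - sphMean b ρ| ≤ M * ρ ^ s * sphMean g ρ := by
  filter_upwards [eventually_abs_sphMean_le he hg hg0] with M hM ρ hρ
  have hsub := sphere_subset_exteriorDomain (E := E) hρ
  rw [(h.hasDerivAt_sphMean hf hρ).deriv, ← sphMean_sub (one_pos.trans hρ).le
    (h.continuousOn_meanDiv.mono hsub) (hb.mono hsub)]
  exact hM ρ hρ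

end Means

namespace IsHelmholtzSolution

theorem continuousOn_confFactor (h : IsHelmholtzSolution A lam α V w p) :
    ContinuousOn (confFactor A) (exteriorDomain E) :=
  h.isEllipticField.isSymbol_confFactor.contDiffOn.continuousOn

theorem continuousOn_zDeriv (h : IsHelmholtzSolution A lam α V w p) :
    ContinuousOn (zDeriv A p) (exteriorDomain E) :=
  h.continuousOn_gradient.inner h.isEllipticField.isSymbol_zField.contDiffOn.continuousOn

theorem continuousOn_sq (h : IsHelmholtzSolution A lam α V w p) :
    ContinuousOn (fun x => w x ^ 2) (exteriorDomain E) :=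
  h.contDiffOn.continuousOn.pow 2

theorem continuousOn_confFactor_mul_zDeriv_sq (h : IsHelmholtzSolution A lam α V w p) :
    ContinuousOn (fun x => confFactor A x * zDeriv A p x ^ 2) (exteriorDomain E) :=
  h.continuousOn_confFactor.mul (h.continuousOn_zDeriv.pow 2)

theorem continuousOn_energyDensity (h : IsHelmholtzSolution A lam α V w p) :
    ContinuousOn (energyDensity A p) (exteriorDomain E) :=
  h.hasMeanDiv.continuousOn.inner h.continuousOn_gradient

theorem hasMeanDiv_mul_sq (h : IsHelmholtzSolution A lam α V w p) :
    HasMeanDiv (fun x => w x ^ 2 • A x (ν x)) fun x =>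
      2 * (w x * (confFactor A x * zDeriv A p x)) + meanDiv (fun y => A y (ν y)) x * w x ^ 2 :=
  (h.hasMeanDiv_sq_smul h.isEllipticField.isSymbol_conormal.contDiffOn).congr fun x hx => by
    rw [← h.isEllipticField.confFactor_smul_zField hx, real_inner_smul_right, zDeriv]
    ring

theorem continuousOn_gDensity (h : IsHelmholtzSolution A lam α V w p) (κ : ℝ) :
    ContinuousOn (gDensity A w p κ) (exteriorDomain E) := by
  obtain ⟨X, hX, hdiv⟩ := h.hasMeanDiv_gDensity κ
  exact hdiv.continuousOn_flux.congr fun x hx => (hX x hx).symm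

theorem isBigO_flux_error (h : IsHelmholtzSolution A lam α V w p) (κ : ℝ) :
    (fun x => energyDensity A p x - w x ^ 2 + V x * w x ^ 2 -
      (2 * (confFactor A x * zDeriv A p x ^ 2) - gDensity A w p κ x)) =O[𝓟 (exteriorDomain E)]
      fun x => ‖x‖ ^ (-α - 1) * (confFactor A x * w x ^ 2) :=
  (h.isEllipticField.isBigO_mul_sq (h.isBigO_potential.sub
    (h.isEllipticField.isBigO_div_norm_sq_mul_confFactor κ))).congr_left fun x => by
      rw [gDensity]
      ring

theorem isBigO_gError (h : IsHelmholtzSolution A lam α V w p) (κ : ℝ) :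
    gError A w p V κ =O[𝓟 (exteriorDomain E)]
      fun x => ‖x‖ ^ (-α - 1) * (energyDensity A p x + w x ^ 2) :=
  (h.isEllipticField.hasGrowth_gError κ h.isBigO_potential).trans
    ((isBigO_refl _ _).mul h.isEllipticField.isBigO_norm_prod_sq)

theorem inner_normalize_smul_flux (h : IsHelmholtzSolution A lam α V w p)
    (hx : x ∈ exteriorDomain E) :
    ⟪ν x, w x • A x (p x)⟫ = w x * (confFactor A x * zDeriv A p x) := by
  rw [real_inner_smul_right, h.isEllipticField.inner_normalize_apply hx, zDeriv]

theorem confFactor_mul_sq_nonneg (h : IsHelmholtzSolution A lam α V w p)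
    (hx : x ∈ exteriorDomain E) : 0 ≤ confFactor A x * w x ^ 2 :=
  mul_nonneg (h.isEllipticField.confFactor_pos hx).le (sq_nonneg _)

theorem eventually_abs_sphMean_gDensity_sub_le (h : IsHelmholtzSolution A lam α V w p) (κ : ℝ) :
    ∀ᶠ M in atTop, ∀ ρ > 1, |sphMean (gDensity A w p κ) ρ -
      (2 * sphMean (fun x => confFactor A x * zDeriv A p x ^ 2) ρ - sphMean (energyDensity A p) ρ +
        sphMean (fun x => w x ^ 2) ρ)| ≤ M * ρ ^ (-α) * sphMean (fun x => w x ^ 2) ρ := by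
  have hw := h.continuousOn_sq
  have hP := h.continuousOn_confFactor_mul_zDeriv_sq.const_mul (2 : ℝ)
  have he := h.continuousOn_energyDensity
  have hg := h.continuousOn_gDensity κ
  filter_upwards [eventually_abs_sphMean_le
    (h.isEllipticField.isBigO_gDensity_sub (w := w) (p := p) κ) hw fun _ _ => sq_nonneg _]
    with M hM ρ hρ
  have hsub := sphere_subset_exteriorDomain (E := E) hρ
  have hρ0 := (one_pos.trans hρ).le
  rw [← sphMean_const_mul, ← sphMean_sub hρ0 (hP.mono hsub) (he.mono hsub),
    ← sphMean_add hρ0 ((hP.fun_sub he).mono hsub) (hw.mono hsub),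
    ← sphMean_sub hρ0 (hg.mono hsub) (((hP.fun_sub he).fun_add hw).mono hsub)]
  exact hM ρ hρ

theorem eventually_sphMean_mul_sq_le (h : IsHelmholtzSolution A lam α V w p) :
    ∀ᶠ M in atTop, ∀ ρ > 1,
      sphMean (fun x => confFactor A x * w x ^ 2) ρ ≤ M * sphMean (fun x => w x ^ 2) ρ := by
  filter_upwards [eventually_abs_sphMean_le (h.isEllipticField.isSymbol_confFactor.isBigO.mul
    (isBigO_refl (fun x => w x ^ 2) _)) h.continuousOn_sq fun _ _ => sq_nonneg _]
    with M hM ρ hρ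
  simpa only [Real.rpow_zero, mul_one] using (le_abs_self _).trans (hM ρ hρ)

theorem eventually_sphMean_sq_le (h : IsHelmholtzSolution A lam α V w p) :
    ∀ᶠ M in atTop, ∀ ρ > 1,
      sphMean (fun x => w x ^ 2) ρ ≤ M * sphMean (fun x => confFactor A x * w x ^ 2) ρ := by
  filter_upwards [eventually_abs_sphMean_le
    (h.isEllipticField.isBigO_mul_sq (w := w) (IsSymbol.const (1 : ℝ)).isBigO)
    (h.continuousOn_confFactor.mul h.continuousOn_sq)
    fun _ => h.confFactor_mul_sq_nonneg] with M hM ρ hρ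
  simpa only [Real.rpow_zero, mul_one, one_mul] using (le_abs_self _).trans (hM ρ hρ)

variable [Nontrivial E]

theorem eventually_abs_deriv_sphMean_mul_sq_sub_le (h : IsHelmholtzSolution A lam α V w p) :
    ∀ᶠ M in atTop, ∀ ρ > 1, |deriv (sphMean fun x => confFactor A x * w x ^ 2) ρ -
      2 * sphMean (fun x => w x * (confFactor A x * zDeriv A p x)) ρ| ≤
        M * ρ ^ (-α - 1) * sphMean (fun x => confFactor A x * w x ^ 2) ρ := by
  have hμ := h.continuousOn_confFactor
  have hw := h.contDiffOn.continuousOn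
  have hy := h.continuousOn_zDeriv
  simp only [← sphMean_const_mul (2 : ℝ)]
  exact h.hasMeanDiv_mul_sq.eventually_abs_deriv_sphMean_sub_le
    (b := fun x => 2 * (w x * (confFactor A x * zDeriv A p x)))
    (fun x _ => inner_normalize_sq_smul_conormal x) (by fun_prop)
    (by simpa only [add_sub_cancel_left] using
      h.isEllipticField.isBigO_mul_sq h.isEllipticField.isBigO_meanDiv_conormal)
    (by fun_prop) fun _ => h.confFactor_mul_sq_nonneg

theorem eventually_abs_deriv_sphMean_flux_sub_le (h : IsHelmholtzSolution A lam α V w p) (κ : ℝ) :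
    ∀ᶠ M in atTop, ∀ ρ > 1,
      |deriv (sphMean fun x => w x * (confFactor A x * zDeriv A p x)) ρ -
        (2 * sphMean (fun x => confFactor A x * zDeriv A p x ^ 2) ρ -
          sphMean (gDensity A w p κ) ρ)| ≤
        M * ρ ^ (-α - 1) * sphMean (fun x => confFactor A x * w x ^ 2) ρ := by
  have hP := h.continuousOn_confFactor_mul_zDeriv_sq.const_mul (2 : ℝ)
  have hg := h.continuousOn_gDensity κ
  filter_upwards [h.hasMeanDiv_smul_flux.eventually_abs_deriv_sphMean_sub_le
    (fun _ => h.inner_normalize_smul_flux) (hP.sub hg) (h.isBigO_flux_error κ)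
    (h.continuousOn_confFactor.mul h.continuousOn_sq)
    fun _ => h.confFactor_mul_sq_nonneg] with M hM ρ hρ
  have hsub := sphere_subset_exteriorDomain (E := E) hρ
  rw [← sphMean_const_mul, ← sphMean_sub (one_pos.trans hρ).le (hP.mono hsub) (hg.mono hsub)]
  exact hM ρ hρ

theorem eventually_abs_deriv_sphMean_gDensity_sub_le (h : IsHelmholtzSolution A lam α V w p)
    (κ : ℝ) : ∀ᶠ M in atTop, ∀ ρ > 1, |deriv (sphMean (gDensity A w p κ)) ρ -
      2 / ρ * (sphMean (energyDensity A p) ρ -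
        sphMean (fun x => confFactor A x * zDeriv A p x ^ 2) ρ)| ≤
        M * ρ ^ (-α - 1) * (sphMean (energyDensity A p) ρ + sphMean (fun x => w x ^ 2) ρ) := by
  have hw := h.continuousOn_sq
  have hP := h.continuousOn_confFactor_mul_zDeriv_sq
  have he := h.continuousOn_energyDensity
  obtain ⟨X, hX, hdiv⟩ := h.hasMeanDiv_gDensity κ
  filter_upwards [hdiv.eventually_abs_deriv_sphMean_sub_le hX
    (b := fun x => 2 / ‖x‖ * (energyDensity A p x - confFactor A x * zDeriv A p x ^ 2))
    (.mul (.div (by fun_prop) (by fun_prop) fun _ hx => (norm_pos_of_mem_exteriorDomain hx).ne')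
      (he.sub hP))
    (by simpa only [add_sub_cancel_left] using h.isBigO_gError κ) (he.fun_add hw)
    fun x hx => add_nonneg (h.isEllipticField.energyDensity_nonneg hx) (sq_nonneg (w x))]
    with M hM ρ hρ
  have hsub := sphere_subset_exteriorDomain (E := E) hρ
  have hρ0 := (one_pos.trans hρ).le
  rw [← sphMean_add hρ0 (he.mono hsub) (hw.mono hsub),
    ← sphMean_sub hρ0 (he.mono hsub) (hP.mono hsub), ← sphMean_const_mul (2 / ρ)]
  refine (congrArg _ (congrArg _ (sphMean_congr hρ0 fun x hx => ?_))).trans_le (hM ρ hρ)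
  rw [mem_sphere_zero_iff_norm.1 hx]

theorem exists_radialSystem (h : IsHelmholtzSolution A lam α V w p) (κ : ℝ) :
    ∃ S : RadialSystem, S.H = sphMean (fun x => confFactor A x * w x ^ 2) ∧
      S.G = sphMean (gDensity A w p κ) := by
  have hA := h.isEllipticField
  obtain ⟨M, hM, hH, hD, hG, hGsub, hHW, hWH⟩ := ((eventually_ge_atTop (1 : ℝ)).and <|
    h.eventually_abs_deriv_sphMean_mul_sq_sub_le.and <|
    (h.eventually_abs_deriv_sphMean_flux_sub_le κ).and <|
    (h.eventually_abs_deriv_sphMean_gDensity_sub_le κ).and <|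
    (h.eventually_abs_sphMean_gDensity_sub_le κ).and <|
    h.eventually_sphMean_mul_sq_le.and h.eventually_sphMean_sq_le).exists
  obtain ⟨X, hX, hdivX⟩ := h.hasMeanDiv_gDensity κ
  have hμ := h.continuousOn_confFactor
  have hy := h.continuousOn_zDeriv
  have hsub {ρ : ℝ} (hρ : ρ > 1) := sphere_subset_exteriorDomain (E := E) hρ
  have hpos {ρ : ℝ} (hρ : ρ > 1) : 0 ≤ ρ := (one_pos.trans hρ).le
  exact ⟨{
    H := _, D := _, P := _, K := _, W := _, G := _, α := α, M := M
    α_pos := hA.α_pos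
    one_le_M := hM
    differentiableAt_H := fun ρ hρ => (h.hasMeanDiv_mul_sq.hasDerivAt_sphMean
      (fun x _ => inner_normalize_sq_smul_conormal x) hρ).differentiableAt
    differentiableAt_D := fun ρ hρ => (h.hasMeanDiv_smul_flux.hasDerivAt_sphMean
      (fun _ => h.inner_normalize_smul_flux) hρ).differentiableAt
    differentiableAt_G := fun ρ hρ => (hdivX.hasDerivAt_sphMean hX hρ).differentiableAt
    abs_deriv_H_sub_le := hH
    abs_deriv_D_sub_le := hD
    abs_deriv_G_sub_le := hG
    abs_G_sub_le := hGsub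
    D_sq_le := fun ρ hρ => sq_sphMean_mul_le (hpos hρ) (hμ.mono (hsub hρ))
      (h.contDiffOn.continuousOn.mono (hsub hρ)) (hy.mono (hsub hρ))
      fun x hx => (hA.confFactor_pos (hsub hρ hx)).le
    P_nonneg := fun ρ hρ => sphMean_nonneg (hpos hρ) fun x hx =>
      mul_nonneg (hA.confFactor_pos (hsub hρ hx)).le (sq_nonneg _)
    P_le_K := fun ρ hρ => sphMean_mono (hpos hρ)
      (h.continuousOn_confFactor_mul_zDeriv_sq.mono (hsub hρ))
      (h.continuousOn_energyDensity.mono (hsub hρ))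
      fun x hx => hA.confFactor_mul_zDeriv_sq_le (hsub hρ hx)
    H_nonneg := fun ρ hρ => sphMean_nonneg (hpos hρ) fun x hx =>
      h.confFactor_mul_sq_nonneg (hsub hρ hx)
    H_le := hHW
    W_le := hWH }, rfl, rfl⟩

theorem exists_le_rpow_mul_sphMean_gDensity (h : IsHelmholtzSolution A lam α V w p)
    (hw : ∃ x ∈ exteriorDomain E, w x ≠ 0) (κ : ℝ) {δ : ℝ} (hδ : 0 < δ) :
    ∃ C > 0, ∃ R > 1, ∀ ρ ≥ R, C ≤ ρ ^ δ * sphMean (gDensity A w p κ) ρ := by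
  obtain ⟨x, hx, hwx⟩ := hw
  obtain ⟨S, hH, hG⟩ := h.exists_radialSystem κ
  have hsub := sphere_subset_exteriorDomain (E := E) hx
  have hHpos : 0 < sphMean (fun y => confFactor A y * w y ^ 2) ‖x‖ :=
    sphMean_pos (norm_pos_of_mem_exteriorDomain hx)
      ((h.continuousOn_confFactor.mul h.continuousOn_sq).mono hsub)
      (fun y hy => h.confFactor_mul_sq_nonneg (hsub hy)) (mem_sphere_zero_iff_norm.2 rfl)
      (mul_ne_zero (h.isEllipticField.confFactor_pos hx).ne' (pow_ne_zero 2 hwx))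
  rw [← hG]
  exact S.exists_le_rpow_mul_G ⟨‖x‖, hx, hH ▸ hHpos.ne'⟩ hδ

end IsHelmholtzSolution

end RadialMeans

section Conjugation

open Module
open scoped RealInnerProductSpace

variable {E : Type*} [NormedAddCommGroup E] [InnerProductSpace ℝ E]
  {A : E → E →L[ℝ] E} {lam α : ℝ} {u : E → ℝ} {p q : E → E} {x : E}

theorem contDiffOn_rpow_norm (s : ℝ) : ContDiffOn ℝ 1 (fun x : E => ‖x‖ ^ s) (exteriorDomain E) :=
  contDiffOn_norm.rpow_const_of_ne fun _ hx => (norm_pos_of_mem_exteriorDomain hx).ne'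

theorem contDiffOn_rpow_norm_mul (hu : ContDiffOn ℝ 1 u (exteriorDomain E)) (s : ℝ) :
    ContDiffOn ℝ 1 (fun x => ‖x‖ ^ s * u x) (exteriorDomain E) :=
  (contDiffOn_rpow_norm s).mul hu

theorem fderiv_rpow_norm (hx : x ≠ 0) (s : ℝ) (v : E) :
    fderiv ℝ (fun y : E => ‖y‖ ^ s) x v = s * ‖x‖ ^ (s - 1) * ⟪ν x, v⟫ := by
  have hx' : ‖x‖ ≠ 0 := norm_ne_zero_iff.2 hx
  rw [fderiv_comp_norm hx (Real.differentiableAt_rpow_const_of_ne s hx'),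
    Real.deriv_rpow_const]

theorem fderiv_rpow_norm_mul (hx : x ≠ 0) (hu : DifferentiableAt ℝ u x) (s : ℝ) (v : E) :
    fderiv ℝ (fun y => ‖y‖ ^ s * u y) x v =
      ‖x‖ ^ s * fderiv ℝ u x v + s * ‖x‖ ^ (s - 1) * u x * ⟪ν x, v⟫ := by
  have hpow : DifferentiableAt ℝ (fun y : E => ‖y‖ ^ s) x :=
    (differentiableAt_id.norm ℝ hx).rpow_const (.inl (norm_ne_zero_iff.2 hx))
  rw [fderiv_fun_mul hpow hu]
  simp only [add_apply, smul_apply, smul_eq_mul, fderiv_rpow_norm hx]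
  ring

/-- The potential `V` in the equation `meanDiv (A∇w) = (V - 1) w` that `w = r ^ a u` satisfies when
`div (A∇u) = -u`, where `a = (d - 1) / 2` in dimension `d`. -/
def conjPotential (A : E → E →L[ℝ] E) (a : ℝ) (x : E) : ℝ :=
  a * (a - 1) / ‖x‖ ^ 2 * confFactor A x + a / ‖x‖ * meanDiv (fun y => A y (ν y)) x

variable [FiniteDimensional ℝ E]

theorem IsEllipticField.isBigO_conjPotential (h : IsEllipticField A lam α) (a : ℝ) :
    conjPotential A a =O[𝓟 (exteriorDomain E)] (‖·‖ ^ (-α - 1)) := by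
  have hr := (isBigO_const_div_norm_pow (E := E) a 1).trans
    (isBigO_rpow_norm_of_le (t := 0) (by norm_num))
  have hβ := isBigO_bilin_rpow_norm (ContinuousLinearMap.mul ℝ ℝ) hr h.isBigO_meanDiv_conormal
  simp only [pow_one, zero_add] at hβ
  exact (h.isBigO_div_norm_sq_mul_confFactor _).add hβ

variable [MeasurableSpace E] [BorelSpace E] {a : ℝ}

theorem HasMeanDiv.smul_rpow_norm (ha : a = ((finrank ℝ E : ℝ) - 1) / 2) {X : E → E} {c : E → ℝ}
    (h : HasWeakDivOn volume (exteriorDomain E) X c) :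
    HasMeanDiv (fun x => ‖x‖ ^ a • X x) fun x =>
      ‖x‖ ^ a * c x - a * ‖x‖ ^ (a - 1) * ⟪ν x, X x⟫ := by
  refine (HasWeakDivOn.smul isOpen_exteriorDomain (contDiffOn_rpow_norm a) h).congr
    (fun _ _ => rfl) fun x hx => ?_
  have hx' : ‖x‖ ≠ 0 := (norm_pos_of_mem_exteriorDomain hx).ne'
  have ha' : (finrank ℝ E : ℝ) - 1 = 2 * a := by rw [ha, mul_div_cancel₀ _ two_ne_zero]
  simp only [fderiv_rpow_norm (ne_zero_of_mem_exteriorDomain hx), real_inner_smul_right,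
    Real.rpow_sub_one hx', ha']
  field_simp
  ring

theorem IsEllipticField.hasMeanDiv_conj (h : IsEllipticField A lam α)
    (ha : a = ((finrank ℝ E : ℝ) - 1) / 2) (hu : ContDiffOn ℝ 1 u (exteriorDomain E))
    (hp : ∀ x ∈ exteriorDomain E, ∀ v, fderiv ℝ u x v = ⟪p x, v⟫)
    (hdiv : HasWeakDivOn volume (exteriorDomain E) (fun x => A x (p x)) fun x => -u x) :
    HasMeanDiv (fun x => A x (‖x‖ ^ a • p x + (a * ‖x‖ ^ (a - 1) * u x) • ν x)) fun x =>
      (conjPotential A a x - 1) * (‖x‖ ^ a * u x) := by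
  have hradial := (HasMeanDiv.of_contDiffOn h.isSymbol_conormal.contDiffOn).smul
    (contDiffOn_const (c := a).mul (contDiffOn_rpow_norm_mul hu (a - 1)))
  simp only [map_add, map_smul, mul_assoc]
  refine ((HasMeanDiv.smul_rpow_norm ha hdiv).add hradial).congr fun x hx => ?_
  have hx' := norm_pos_of_mem_exteriorDomain hx
  have hdiff := differentiableAt_of_mem_exteriorDomain hu hx
  have hflux : ⟪ν x, A x (p x)⟫ = ⟪p x, A x (ν x)⟫ := by
    rw [real_inner_comm]
    exact h.isSymmetric x hx (p x) (ν x)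
  simp only [fderiv_rpow_norm_mul (ne_zero_of_mem_exteriorDomain hx) hdiff, hp x hx, conjPotential,
    fderiv_const_mul (differentiableAt_of_mem_exteriorDomain (contDiffOn_rpow_norm_mul hu _) hx),
    smul_apply, smul_eq_mul, confFactor, hflux, Real.rpow_sub_one hx'.ne']
  field_simp
  ring

theorem IsEllipticField.isHelmholtzSolution_conj (h : IsEllipticField A lam α)
    (ha : a = ((finrank ℝ E : ℝ) - 1) / 2) (hu : ContDiffOn ℝ 1 u (exteriorDomain E))
    (hp : ∀ x ∈ exteriorDomain E, ∀ v, fderiv ℝ u x v = ⟪p x, v⟫)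
    (hdiv : HasWeakDivOn volume (exteriorDomain E) (fun x => A x (p x)) fun x => -u x)
    (hq : ContinuousOn q (exteriorDomain E))
    (hqw : ∀ x ∈ exteriorDomain E, ∀ v, fderiv ℝ (fun y => ‖y‖ ^ a * u y) x v = ⟪q x, v⟫) :
    IsHelmholtzSolution A lam α (conjPotential A a) (fun x => ‖x‖ ^ a * u x) q where
  isEllipticField := h
  isBigO_potential := h.isBigO_conjPotential a
  contDiffOn := contDiffOn_rpow_norm_mul hu a
  continuousOn_gradient := hq
  fderiv_apply := hqw
  hasMeanDiv := by
    have hqp : ∀ x ∈ exteriorDomain E,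
        q x = ‖x‖ ^ a • p x + (a * ‖x‖ ^ (a - 1) * u x) • ν x := fun x hx => by
      refine ext_inner_right ℝ fun v => ?_
      rw [← hqw x hx, fderiv_rpow_norm_mul (ne_zero_of_mem_exteriorDomain hx)
        (differentiableAt_of_mem_exteriorDomain hu hx), hp x hx, inner_add_left,
        real_inner_smul_left, real_inner_smul_left]
    exact HasWeakDivOn.congr (h.hasMeanDiv_conj ha hu hp hdiv)
      (fun x hx => by simp only [hqp x hx]) fun x hx => by simp only [hqp x hx]

end Conjugation

section Euclidean

open Asymptotics
open scoped RealInnerProductSpace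

section Gradient

variable {E : Type*} [NormedAddCommGroup E] [InnerProductSpace ℝ E] [CompleteSpace E]

theorem norm_gradient (f : E → ℝ) (x : E) : ‖gradient f x‖ = ‖fderiv ℝ f x‖ :=
  LinearIsometryEquiv.norm_map _ _

theorem continuousOn_gradient_of_contDiffOn {f : E → ℝ} {U : Set E} (hU : IsOpen U)
    (hf : ContDiffOn ℝ 1 f U) : ContinuousOn (gradient f) U :=
  (InnerProductSpace.toDual ℝ E).symm.continuous.comp_continuousOn
    (hf.continuousOn_fderiv_of_isOpen hU le_rfl)

end Gradient

variable {n : ℕ} {A : En n → Matrix (Fin n) (Fin n) ℝ} {lam α C : ℝ} {u : En n → ℝ} {x : En n}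

/-- The field of operators on Euclidean space given by a field of matrices. -/
def opField (A : En n → Matrix (Fin n) (Fin n) ℝ) (x : En n) : En n →L[ℝ] En n :=
  Matrix.toEuclideanCLM (𝕜 := ℝ) (A x)

theorem quadForm_eq_inner (M : Matrix (Fin n) (Fin n) ℝ) (v w : En n) :
    quadForm M v w = ⟪Matrix.toEuclideanCLM (𝕜 := ℝ) M v, w⟫ := by
  simp [quadForm, PiLp.inner_apply, mul_comm]

theorem muA_eq_confFactor (A : En n → Matrix (Fin n) (Fin n) ℝ) (x : En n) :
    muA A x = confFactor (opField A) x := by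
  rw [muA, quadForm_eq_inner, confFactor, NormedSpace.normalize, map_smul,
    real_inner_smul_left, real_inner_smul_right, real_inner_comm, opField]
  ring

theorem Zvec_eq_smul_zField (A : En n → Matrix (Fin n) (Fin n) ℝ) (x : En n) :
    Zvec A x = ‖x‖ • zField (opField A) x := by
  rw [Zvec, zField, muA_eq_confFactor, smul_comm, ← map_smul, NormedSpace.norm_smul_normalize]
  rfl

theorem Zd_div_norm_eq_zDeriv (hx : x ≠ 0) (f : En n → ℝ) :
    Zd A f x / ‖x‖ = zDeriv (opField A) (gradient f) x := by
  have hx' : ‖x‖ ≠ 0 := norm_ne_zero_iff.2 hx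
  have hinner : Zd A f x = ⟪gradient f x, Zvec A x⟫ := by
    simp [-inner_gradient_left, Zd, PiLp.inner_apply]
  rw [hinner, Zvec_eq_smul_zField, real_inner_smul_right, mul_div_cancel_left₀ _ hx', zDeriv]

namespace EllipticDecay

theorem isSymbol_entry (h : EllipticDecay A lam α C) (i j : Fin n) :
    IsSymbol (-α) fun x => (A x - 1) i j where
  contDiffOn := (h.2.1 i j).sub contDiffOn_const
  isBigO := isBigO_principal.2 ⟨C, fun x hx => by
    rw [Real.norm_of_nonneg (by positivity : 0 ≤ ‖x‖ ^ (-α))]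
    exact (le_add_of_nonneg_left (by positivity)).trans (h.2.2.2 x hx i j)⟩
  isBigO_fderiv := isBigO_principal.2 ⟨C, fun x hx => by
    have hx0 : 0 < ‖x‖ := norm_pos_of_mem_exteriorDomain hx
    rw [Real.norm_of_nonneg (by positivity : 0 ≤ ‖x‖ ^ (-α - 1)), Real.rpow_sub_one hx0.ne',
      ← mul_div_assoc, le_div_iff₀' hx0, ← norm_gradient]
    exact (le_add_of_nonneg_right (abs_nonneg _)).trans (h.2.2.2 x hx i j)⟩

theorem isSymbol_opField_sub_id (h : EllipticDecay A lam α C) :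
    IsSymbol (-α) fun x => opField A x - ContinuousLinearMap.id ℝ (En n) := by
  have hexpand (x : En n) : opField A x - ContinuousLinearMap.id ℝ (En n) =
      ∑ i, ∑ j, (A x - 1) i j • Matrix.toEuclideanCLM (𝕜 := ℝ) (Matrix.single i j (1 : ℝ)) := by
    have hone : Matrix.toEuclideanCLM (𝕜 := ℝ) (1 : Matrix (Fin n) (Fin n) ℝ) =
      ContinuousLinearMap.id ℝ (En n) := map_one _
    rw [opField, ← hone, ← map_sub]
    conv_lhs => rw [Matrix.matrix_eq_sum_single (A x - 1)]
    simp [-Matrix.sub_apply, ← map_smul]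
  simp only [hexpand]
  exact .sum fun i _ => .sum fun j _ => by
    simpa only [add_zero] using (h.isSymbol_entry i j).smul (.const _)

theorem isEllipticField (h : EllipticDecay A lam α C) (hlam : 0 < lam) (hα : 0 < α) :
    IsEllipticField (opField A) lam (min α 1) where
  lam_pos := hlam
  α_pos := lt_min hα one_pos
  α_le_one := min_le_right α 1
  isSymmetric x hx := Matrix.isSymmetric_toEuclideanLin_iff.2 (h.1 x hx)
  le_inner x hx v := (h.2.2.1 x hx v).1.trans_eq (quadForm_eq_inner _ v v)
  isSymbol_sub_id := h.isSymbol_opField_sub_id.mono (neg_le_neg (min_le_left α 1))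

end EllipticDecay

theorem WeakSol.hasWeakDivOn (h : WeakSol A u)
    (hA : ContinuousOn (opField A) (OmegaExt n)) :
    HasWeakDivOn volume (OmegaExt n) (fun x => opField A x (gradient u x)) fun x => -u x := by
  have hu := h.1.continuousOn
  have hflux := hA.clm_apply (continuousOn_gradient_of_contDiffOn isOpen_exteriorDomain h.1)
  refine .of_forall_contDiff isOpen_exteriorDomain hflux hu.neg fun φ hφ hc hφΩ => ?_
  have hφ' : IsTestFunction (OmegaExt n) φ := ⟨hφ.of_le (mod_cast le_top), hc, hφΩ⟩
  have hweak := h.2 φ hφ hc hφΩ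
  rw [setIntegral_eq_integral_of_forall_compl_eq_zero fun x hx => ?_,
    setIntegral_eq_integral_of_forall_compl_eq_zero fun x hx => ?_] at hweak
  · simp only [mul_comm (φ _), neg_mul, ← sub_eq_add_neg]
    rw [integral_sub (hφ'.integrable_fderiv_apply hflux)
      (by simpa only [mul_comm] using hφ'.integrable_mul (μ := volume) hu), ← hweak, sub_eq_zero]
    congr with x
    rw [← inner_gradient_left, real_inner_comm]
    exact (quadForm_eq_inner _ _ _).symm
  · rw [image_eq_zero_of_notMem_tsupport fun h => hx (hφΩ h), mul_zero]
  · have hgrad : gradient φ x = 0 := by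
      rw [← norm_eq_zero, norm_gradient,
        fderiv_eq_zero_of_notMem_tsupport fun h => hx (hφΩ h), norm_zero]
    simp [hgrad]

theorem exists_sphInt_eq_mul_sphMean [Nontrivial (En n)] : ∃ k : ℝ, 0 < k ∧
    ∀ ρ > 0, ∀ f : En n → ℝ, sphInt n ρ f = k * ρ ^ ((n : ℝ) - 1) * sphMean f ρ := by
  obtain ⟨k, hk, hsph⟩ := exists_setIntegral_sphere_eq_mul_sphMean (E := En n) (F := ℝ)
  have hn : 0 < n := by simpa using Module.finrank_pos (R := ℝ) (M := En n)
  refine ⟨k, hk, fun ρ hρ f => ?_⟩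
  rw [← Nat.cast_pred hn, Real.rpow_natCast]
  simpa only [finrank_euclideanSpace_fin, smul_eq_mul] using! hsph ρ hρ f

theorem IsHelmholtzSolution.sphMean_gDensity {E : Type*} [NormedAddCommGroup E]
    [InnerProductSpace ℝ E] [FiniteDimensional ℝ E] [MeasurableSpace E] [BorelSpace E]
    {A : E → E →L[ℝ] E} {V w : E → ℝ} {p : E → E} (h : IsHelmholtzSolution A lam α V w p)
    (κ : ℝ) {ρ : ℝ} (hρ : 1 < ρ) :
    sphMean (gDensity A w p κ) ρ =
      2 * sphMean (fun x => confFactor A x * zDeriv A p x ^ 2) ρ - sphMean (energyDensity A p) ρ +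
        sphMean (fun x => w x ^ 2) ρ -
        κ * sphMean (fun x => w x ^ 2 / ‖x‖ ^ 2 * confFactor A x) ρ := by
  have hρ0 : 0 ≤ ρ := by linarith
  have hsub : sphere (0 : E) ρ ⊆ exteriorDomain E := sphere_subset_exteriorDomain hρ
  have hz := h.continuousOn_confFactor_mul_zDeriv_sq.mono hsub
  have hq := h.continuousOn_energyDensity.mono hsub
  have hw := h.continuousOn_sq.mono hsub
  have hκ : ContinuousOn (fun x => w x ^ 2 / ‖x‖ ^ 2 * confFactor A x) (sphere 0 ρ) :=
    ((h.continuousOn_sq.div (by fun_prop) fun x hx =>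
      pow_ne_zero 2 (norm_pos_of_mem_exteriorDomain hx).ne').mul h.continuousOn_confFactor).mono
      hsub
  rw [← sphMean_const_mul (2 : ℝ), ← sphMean_const_mul κ,
    ← sphMean_sub hρ0 (hz.const_mul 2) hq, ← sphMean_add hρ0 ((hz.const_mul 2).fun_sub hq) hw,
    ← sphMean_sub hρ0 (((hz.const_mul 2).fun_sub hq).fun_add hw) (hκ.const_mul κ)]
  rfl

theorem exists_Gfun_eq_mul_sphMean_gDensity [Nontrivial (En n)] {V w : En n → ℝ}
    (hw : w = fun x => ‖x‖ ^ (((n : ℝ) - 1) / 2) * u x)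
    (h : IsHelmholtzSolution (opField A) lam α V w (gradient w)) :
    ∃ k : ℝ, 0 < k ∧ ∀ ρ > 1, Gfun A u ρ = k * ρ ^ ((n : ℝ) - 1) *
      sphMean (gDensity (opField A) w (gradient w) (((n : ℝ) - 1) * ((n : ℝ) - 3) / 4)) ρ := by
  subst hw
  obtain ⟨k, hk, hsph⟩ := exists_sphInt_eq_mul_sphMean (n := n)
  refine ⟨k, hk, fun ρ hρ => ?_⟩
  have hρ0 : 0 < ρ := one_pos.trans hρ
  have hz (w : En n → ℝ) : sphMean (fun x => (Zd A w x / ‖x‖) ^ 2 * muA A x) ρ =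
      sphMean (fun x => confFactor (opField A) x * zDeriv (opField A) (gradient w) x ^ 2) ρ :=
    sphMean_congr hρ0.le fun x hx => by
      rw [Zd_div_norm_eq_zDeriv (ne_zero_of_mem_sphere hρ0.ne' ⟨x, hx⟩), muA_eq_confFactor,
        mul_comm]
  have henergy (w : En n → ℝ) : sphMean (fun x => quadForm (A x) (gradient w x) (gradient w x)) ρ =
      sphMean (energyDensity (opField A) (gradient w)) ρ :=
    sphMean_congr hρ0.le fun x _ => quadForm_eq_inner _ _ _
  rw [h.sphMean_gDensity _ hρ, ← hz, ← henergy]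
  simp only [Gfun, hsph ρ hρ0, muA_eq_confFactor]
  ring

theorem WeakSol.isHelmholtzSolution (h : WeakSol A u)
    (hA : IsEllipticField (opField A) lam α) {w : En n → ℝ}
    (hw : w = fun x => ‖x‖ ^ (((n : ℝ) - 1) / 2) * u x) :
    IsHelmholtzSolution (opField A) lam α (conjPotential (opField A) (((n : ℝ) - 1) / 2)) w
      (gradient w) := by
  subst hw
  exact hA.isHelmholtzSolution_conj (by rw [finrank_euclideanSpace_fin]) h.1
    (fun _ _ _ => inner_gradient_left.symm) (h.hasWeakDivOn hA.isSymbol.contDiffOn.continuousOn)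
    (continuousOn_gradient_of_contDiffOn isOpen_exteriorDomain (contDiffOn_rpow_norm_mul h.1 _))
    fun _ _ _ => inner_gradient_left.symm

theorem G_uniform_lower_bound_general {n : ℕ} {A : En n → Matrix (Fin n) (Fin n) ℝ}
    {lam α C : ℝ} (hlam : 0 < lam) (hα : 0 < α) (hA : EllipticDecay A lam α C) {u : En n → ℝ}
    (hu : WeakSol A u) (hne : ∃ x ∈ OmegaExt n, u x ≠ 0) {δ : ℝ} (hδ : 0 < δ) :
    ∃ C₂ > (0 : ℝ), ∃ R₂ > (1 : ℝ), ∀ ρ ≥ R₂, C₂ ≤ Gfun A u ρ / ρ ^ ((n : ℝ) - 1 - δ) := by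
  obtain ⟨x, hx, hux⟩ := hne
  have hx0 : x ≠ 0 := ne_zero_of_mem_exteriorDomain hx
  have : Nontrivial (En n) := nontrivial_of_ne x 0 hx0
  have hsol := hu.isHelmholtzSolution (hA.isEllipticField hlam hα) rfl
  have hwx : ‖x‖ ^ (((n : ℝ) - 1) / 2) * u x ≠ 0 :=
    mul_ne_zero (Real.rpow_pos_of_pos (norm_pos_iff.2 hx0) _).ne' hux
  obtain ⟨k, hk, hG⟩ := exists_Gfun_eq_mul_sphMean_gDensity rfl hsol
  obtain ⟨C₁, hC₁, R, hR, hlower⟩ := hsol.exists_le_rpow_mul_sphMean_gDensity ⟨x, hx, hwx⟩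
    (((n : ℝ) - 1) * ((n : ℝ) - 3) / 4) hδ
  refine ⟨k * C₁, mul_pos hk hC₁, R, hR, fun ρ hρ => ?_⟩
  have hρ1 : 1 < ρ := hR.trans_le hρ
  have hρ0 : 0 < ρ := one_pos.trans hρ1
  calc k * C₁ ≤ k * (ρ ^ δ * _) := by gcongr; exact hlower ρ hρ
    _ = Gfun A u ρ / ρ ^ ((n : ℝ) - 1 - δ) := by
      rw [hG ρ hρ1, Real.rpow_sub hρ0 _ δ]
      field_simp

end Euclidean

/-- **Lemma `post2`.** Let `u` be a nontrivial weak solution of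
`-div(A∇u) = u` in `Ω` with `liminf_{R→∞} R^{-(1-δ)} ∫_{R<|x|<2R} u² = 0` for some
`δ ∈ (0,1)`. Then there exist `C₂ > 0` and `R₂ > 1` with `G(ρ)/ρ^{n-1-δ} ≥ C₂`
for all `ρ ≥ R₂`. -/
theorem G_uniform_lower_bound
    (n : ℕ) (hn : 2 ≤ n)
    (A : En n → Matrix (Fin n) (Fin n) ℝ) (lam α C : ℝ)
    (hlam0 : 0 < lam) (hlam1 : lam < 1) (hα : 0 < α) (hC : 0 < C)
    (hA : EllipticDecay A lam α C)
    (u : En n → ℝ) (hu : WeakSol A u)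
    (hne : ∃ x ∈ OmegaExt n, u x ≠ 0)
    (δ : ℝ) (hδ : δ ∈ Set.Ioo (0 : ℝ) 1)
    (hlim : Filter.liminf
        (fun R : ℝ => R ^ (-(1 - δ)) * ∫ x in {x : En n | R < ‖x‖ ∧ ‖x‖ < 2 * R}, (u x) ^ 2)
        Filter.atTop = 0) :
    ∃ C₂ > (0 : ℝ), ∃ R₂ > (1 : ℝ), ∀ ρ ≥ R₂, C₂ ≤ Gfun A u ρ / ρ ^ ((n : ℝ) - 1 - δ) :=
  G_uniform_lower_bound_general hlam0 hα hA hu hne hδ.1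

end
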